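/- Let p and q be primes satisfying conditions (1), and let m be the natural number such that 2^m is the order of the 2-Sylow subgroup of the ideal class group of Q(√(-2q)). Then the 2-class group of the triquadratic field K_pq = Q(√p, √q, √(-2)) is cyclic of order 2^(m+1), i.e. isomorphic to Z/2^(m+1)Z. -/

import Mathlib

noncomputable section

open IntermediateField NumberField

/-- Conditions (1). -/
def Cond1 (p q : ℕ) : Prop :=
  p.Prime ∧ q.Prime ∧ p % 4 = 1 ∧ q % 4 = 3 ∧
    jacobiSym 2 p = -1 ∧ jacobiSym 2 q = 1 ∧ jacobiSym (p : ℤ) q = -1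

/-- The imaginary quadratic field `ℚ(√(-2q))` as a subfield of `ℂ`,
where `√(-2q) = i√(2q)`. -/
def k0 (q : ℕ) : IntermediateField ℚ ℂ :=
  adjoin ℚ {Complex.I * ((Real.sqrt (2 * q) : ℝ) : ℂ)}

/-- The triquadratic field `K_pq = ℚ(√p, √q, √(-2))` as a subfield of `ℂ`,
where `√(-2) = i√2`. -/
def Kf (p q : ℕ) : IntermediateField ℚ ℂ :=
  adjoin ℚ {((Real.sqrt p : ℝ) : ℂ), ((Real.sqrt q : ℝ) : ℂ),
    Complex.I * ((Real.sqrt 2 : ℝ) : ℂ)}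

/-! Put `k₀ = ℚ(√(-2q))`, `B = ℚ(√p)`, `k = ℚ(√p, √(-2q))`, `E = ℚ(√p, √(-2))`, `F = ℚ(√p, √q)`. A
class of order `2` comes from an element whose principal ideal is a square; taking norms down one
quadratic step determines such elements up to units and squares, so `k₀`, `k` and `K_pq` each have
at most one class of order `2`. Their `2`-class groups are therefore cyclic, and a class generates
the `2`-part as soon as it is not a square.

Non-squares are detected by the genus character `I ↦ (N I / q)`. A prime above a rational `l` that
splits completely and has `(l / q) = -1` shows that the norm maps `K_pq → k → k₀` are onto on
`2`-parts. The prime `T` above `2` has order `2` in `k₀` and stays non-principal in `k`, so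
extension of ideals is injective from the `2`-part of `k₀` to that of `k`; its image has index
`2`, because a prime of `k₀` above `p` becomes `J²` in `k` with `[J]` not a square. Thus
`|Cl₂(k)| = 2 |Cl₂(k₀)|`. In `K_pq`, however, `T` is generated by `√(-2)`. Since `E` and `F` have
odd class number, the conjugations of `K_pq` over them invert `Cl₂(K_pq)`, so their product over
`k` fixes it and the square of a class is the extension of its norm to `k`. Both effects together
give `|Cl₂(K_pq)| = |Cl₂(k)|`. -/

section PrimaryGroups

theorem card_comap_le {X Y : Type*} [Group X] [Group Y] [Finite X] [Finite Y] (f : X →* Y)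
    (S : Subgroup Y) : Nat.card (S.comap f) ≤ Nat.card f.ker * Nat.card S := by
  let g : S.comap f →* Y := f.comp (S.comap f).subtype
  have hker : Nat.card g.ker ≤ Nat.card f.ker :=
    Nat.card_le_card_of_injective (fun x => ⟨x.1.1, x.2⟩)
      fun x y hxy => Subtype.ext (Subtype.ext (Subtype.mk.inj hxy))
  have hrange : Nat.card g.range ≤ Nat.card S := by
    refine Subgroup.card_le_of_le ?_
    rintro _ ⟨x, rfl⟩
    exact x.2
  calc Nat.card (S.comap f) = Nat.card g.ker * Nat.card g.range := by
        rw [← Subgroup.index_ker, Subgroup.card_mul_index]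
    _ ≤ Nat.card f.ker * Nat.card S := Nat.mul_le_mul hker hrange

variable {X Y : Type*} [CommGroup X] [Finite X] [CommGroup Y] [Finite Y] {ℓ : ℕ}

theorem card_ker_powMonoidHom_pow_le {n : ℕ}
    (h : Nat.card (powMonoidHom n : X →* X).ker ≤ n) (k : ℕ) :
    Nat.card (powMonoidHom (n ^ k) : X →* X).ker ≤ n ^ k := by
  induction k with
  | zero =>
    have hbot : (powMonoidHom (n ^ 0) : X →* X).ker = ⊥ := by
      ext x
      simp [MonoidHom.mem_ker]
    rw [hbot, Subgroup.card_bot, pow_zero]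
  | succ k ih =>
    have hcomap : (powMonoidHom (n ^ (k + 1)) : X →* X).ker =
        (powMonoidHom (n ^ k) : X →* X).ker.comap (powMonoidHom n) := by
      ext x
      simp [MonoidHom.mem_ker, ← pow_mul, pow_succ']
    rw [hcomap, pow_succ']
    exact (card_comap_le _ _).trans (Nat.mul_le_mul h ih)

theorem isCyclic_of_card_ker_powMonoidHom_le [Fact ℓ.Prime] (hX : IsPGroup ℓ X)
    (h : Nat.card (powMonoidHom ℓ : X →* X).ker ≤ ℓ) : IsCyclic X := by
  obtain ⟨g, hg⟩ := Monoid.exists_orderOf_eq_exponent (Monoid.ExponentExists.of_finite (G := X))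
  obtain ⟨k, hk⟩ := IsPGroup.iff_orderOf.1 hX g
  have htop : (powMonoidHom (ℓ ^ k) : X →* X).ker = ⊤ := by
    refine (Subgroup.eq_top_iff' _).2 fun x => ?_
    rw [MonoidHom.mem_ker, powMonoidHom_apply, ← hk, hg, Monoid.pow_exponent_eq_one]
  refine isCyclic_of_card_le_orderOf g ?_
  simpa [htop, hk] using card_ker_powMonoidHom_pow_le h k

theorem card_ker_powMonoidHom_two_le (h : {x : X | orderOf x = 2}.Subsingleton) :
    Nat.card (powMonoidHom 2 : X →* X).ker ≤ 2 := by
  have hker : ((powMonoidHom 2 : X →* X).ker : Set X) = insert 1 {x : X | orderOf x = 2} := by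
    ext x
    by_cases hx : x = 1 <;> simp [MonoidHom.mem_ker, orderOf_eq_prime_iff, hx]
  calc Nat.card (powMonoidHom 2 : X →* X).ker
      = (insert 1 {x : X | orderOf x = 2}).ncard := by
        rw [← hker]; rfl
    _ ≤ {x : X | orderOf x = 2}.ncard + 1 := Set.ncard_insert_le _ _
    _ ≤ 2 := Nat.succ_le_succ (Set.ncard_le_one_iff_subsingleton.2 h)

theorem zpowers_eq_top_of_forall_pow_ne [Fact ℓ.Prime] [IsCyclic X] (hX : IsPGroup ℓ X) {x : X}
    (hx : ∀ y, y ^ ℓ ≠ x) : Subgroup.zpowers x = ⊤ := by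
  obtain ⟨g, hg⟩ := IsCyclic.exists_ofOrder_eq_natCard (α := X)
  obtain ⟨i, rfl⟩ : ∃ i : ℕ, g ^ i = x := by
    have : x ∈ Subgroup.zpowers g := by
      rw [Subgroup.eq_top_of_card_eq (Subgroup.zpowers g) (by rw [Nat.card_zpowers, hg])]
      trivial
    exact mem_powers_iff_mem_zpowers.2 this
  obtain ⟨k, hk⟩ := IsPGroup.iff_orderOf.1 hX g
  have hi : ¬ ℓ ∣ i := by
    rintro ⟨r, rfl⟩
    exact hx (g ^ r) (by rw [← pow_mul, mul_comm])
  have hcop : (orderOf g).Coprime i :=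
    hk ▸ Nat.Coprime.pow_left k (((Fact.out : ℓ.Prime).coprime_iff_not_dvd).2 hi)
  exact Subgroup.eq_top_of_card_eq _ (by rw [Nat.card_zpowers, hcop.orderOf_pow, hg])

theorem injective_of_forall_pow_eq_one {G Z : Type*} [Group G] [Group Z] (hG : IsPGroup ℓ G)
    (f : G →* Z) (hf : ∀ x, x ^ ℓ = 1 → f x = 1 → x = 1) : Function.Injective f := by
  refine (injective_iff_map_eq_one f).2 fun x hx => ?_
  obtain ⟨k, hk⟩ := hG x
  induction k with
  | zero => simpa using hk
  | succ k ih =>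
    refine ih (hf _ ?_ ?_)
    · rw [← pow_mul, ← pow_succ, hk]
    · rw [map_pow, hx, one_pow]

theorem card_eq_mul_card_of_zpowers_eq_top {G Z : Type*} [CommGroup G] [Group Z]
    [Fact ℓ.Prime] (f : Z →* G) (hf : Function.Injective f) {x : G}
    (hx : Subgroup.zpowers x = ⊤) (hxf : x ^ ℓ ∈ f.range) (hne : f.range ≠ ⊤) :
    Nat.card G = ℓ * Nat.card Z := by
  have hxr : x ∉ f.range := fun h => hne (top_le_iff.1 (hx ▸ (Subgroup.zpowers_le.2 h)))
  have hord : orderOf (x : G ⧸ f.range) = ℓ :=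
    orderOf_eq_prime ((QuotientGroup.eq_one_iff _).2 hxf)
      fun h => hxr ((QuotientGroup.eq_one_iff _).1 h)
  have htop : Subgroup.zpowers (x : G ⧸ f.range) = ⊤ := by
    have := congrArg (Subgroup.map (QuotientGroup.mk' f.range)) hx
    rwa [MonoidHom.map_zpowers, Subgroup.map_top_of_surjective _
      (QuotientGroup.mk'_surjective _)] at this
  have hindex : f.range.index = ℓ := by
    rw [Subgroup.index_eq_card, ← Subgroup.card_top, ← htop, Nat.card_zpowers, hord]
  rw [← Subgroup.card_mul_index f.range, hindex, mul_comm,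
    Nat.card_congr (MonoidHom.ofInjective hf).toEquiv]

theorem card_eq_of_pow_eq_map (N : X →* Y) (j : Y →* X)
    (hN : Function.Surjective N) (hX : Nat.card (powMonoidHom ℓ : X →* X).ker ≤ ℓ)
    (hj : ℓ ∣ Nat.card j.ker) (hNj : ∀ x, x ^ ℓ = j (N x)) : Nat.card X = Nat.card Y := by
  have hrange : (powMonoidHom ℓ : X →* X).range ≤ j.range := by
    rintro _ ⟨x, rfl⟩
    exact ⟨N x, (hNj x).symm⟩
  refine le_antisymm ?_ (Nat.card_le_card_of_surjective N hN)
  calc Nat.card X = Nat.card (powMonoidHom ℓ : X →* X).ker *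
        Nat.card (powMonoidHom ℓ : X →* X).range := by
        rw [← Subgroup.index_ker, Subgroup.card_mul_index]
    _ ≤ Nat.card j.ker * Nat.card j.range :=
      Nat.mul_le_mul (hX.trans (Nat.le_of_dvd Nat.card_pos hj)) (Subgroup.card_le_of_le hrange)
    _ = Nat.card Y := by rw [← Subgroup.index_ker, Subgroup.card_mul_index]

end PrimaryGroups

section SylowSubgroups

variable {X Y : Type*} [CommGroup X] [CommGroup Y] [Finite Y] {ℓ : ℕ}

theorem exists_pow_eq_one_of_mem_sylow (P : Sylow ℓ X) {x : X} (hx : x ∈ P) :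
    ∃ k, x ^ ℓ ^ k = 1 :=
  (P.2 ⟨x, hx⟩).imp fun _ hk => congrArg Subtype.val hk

theorem mem_sylow_of_pow_eq_one [Fact ℓ.Prime] (Q : Sylow ℓ Y) {y : Y} {k : ℕ}
    (hy : y ^ ℓ ^ k = 1) : y ∈ Q := by
  have hzp : IsPGroup ℓ (Subgroup.zpowers y) := by
    rw [IsPGroup.iff_card, Nat.card_zpowers]
    obtain ⟨i, -, hi⟩ := (Nat.dvd_prime_pow Fact.out).1 (orderOf_dvd_of_pow_eq_one hy)
    exact ⟨i, hi⟩
  obtain ⟨R, hR⟩ := hzp.exists_le_sylow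
  have := Sylow.unique_of_normal Q inferInstance
  rw [← Subsingleton.elim R Q]
  exact hR (Subgroup.mem_zpowers y)

theorem map_mem_sylow [Fact ℓ.Prime] (f : X →* Y) (P : Sylow ℓ X) (Q : Sylow ℓ Y) {x : X}
    (hx : x ∈ P) : f x ∈ Q := by
  obtain ⟨k, hk⟩ := exists_pow_eq_one_of_mem_sylow P hx
  exact mem_sylow_of_pow_eq_one Q (k := k) (by rw [← map_pow, hk, map_one])

/-- The homomorphism induced on Sylow subgroups by a homomorphism of commutative groups with
finite target. -/
def sylowMap [Fact ℓ.Prime] (f : X →* Y) (P : Sylow ℓ X) (Q : Sylow ℓ Y) :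
    (P : Subgroup X) →* (Q : Subgroup Y) :=
  (f.comp (P : Subgroup X).subtype).codRestrict _ fun x => map_mem_sylow f P Q x.2

theorem exists_pow_eq_of_coprime {x : X} {n r : ℕ} (h : n.Coprime r)
    (hx : ∃ y, y ^ r = x ^ n) : ∃ y, y ^ r = x := by
  obtain ⟨y, hy⟩ := hx
  refine ⟨y ^ n.gcdA r * x ^ n.gcdB r, ?_⟩
  have hbezout := Nat.gcd_eq_gcd_ab n r
  rw [h.gcd_eq_one, Nat.cast_one] at hbezout
  calc (y ^ n.gcdA r * x ^ n.gcdB r) ^ r = (y ^ r) ^ n.gcdA r * (x ^ r) ^ n.gcdB r := by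
        rw [mul_pow]
        simp only [← zpow_natCast, ← zpow_mul, mul_comm]
    _ = x ^ (n * n.gcdA r + r * n.gcdB r) := by
        rw [hy, zpow_add, zpow_mul, zpow_mul, zpow_natCast, zpow_natCast]
    _ = x := by rw [← hbezout, zpow_one]

theorem subsingleton_orderOf_eq_subgroup {G : Type*} [Group G] {n : ℕ}
    (h : {x : G | orderOf x = n}.Subsingleton) (S : Subgroup G) :
    {x : S | orderOf x = n}.Subsingleton := fun x hx y hy =>
  Subtype.ext (h ((Subgroup.orderOf_coe x).trans hx) ((Subgroup.orderOf_coe y).trans hy))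

theorem coprime_index_sylow [Fact ℓ.Prime] (Q : Sylow ℓ Y) : (Q : Subgroup Y).index.Coprime ℓ :=
  (((Fact.out : ℓ.Prime).coprime_iff_not_dvd).2 Q.not_dvd_index).symm

variable [Finite X]

theorem isCyclic_sylow_two (h : {x : X | orderOf x = 2}.Subsingleton) (P : Sylow 2 X) :
    IsCyclic (P : Subgroup X) :=
  isCyclic_of_card_ker_powMonoidHom_le P.2
    (card_ker_powMonoidHom_two_le (subsingleton_orderOf_eq_subgroup h _))

theorem zpowers_pow_eq_top_of_not_isSquare (h : {x : X | orderOf x = 2}.Subsingleton)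
    (P : Sylow 2 X) {x : X} (hx : ¬ IsSquare x) {n : ℕ} (hn : n.Coprime 2) (hxn : x ^ n ∈ P) :
    Subgroup.zpowers (⟨x ^ n, hxn⟩ : (P : Subgroup X)) = ⊤ := by
  have := isCyclic_sylow_two h P
  refine zpowers_eq_top_of_forall_pow_ne P.2 fun y hy => hx ?_
  obtain ⟨z, hz⟩ := exists_pow_eq_of_coprime hn ⟨(y : X), congrArg Subtype.val hy⟩
  exact ⟨z, by rw [← hz, sq]⟩

theorem card_sylow_two_eq_two_mul (N : X →* Y) (j : Y →* X) (P : Sylow 2 X) (Q : Sylow 2 Y)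
    (hX : {x : X | orderOf x = 2}.Subsingleton) (hj : ∀ y, y ^ 2 = 1 → j y = 1 → y = 1)
    (hNj : ∀ y, N (j y) = y ^ 2) {g : X} (hg : ¬ IsSquare (N g))
    {x : X} (hx : ¬ IsSquare x) (hxj : x ^ 2 ∈ j.range) :
    Nat.card (P : Subgroup X) = 2 * Nat.card (Q : Subgroup Y) := by
  have hP := coprime_index_sylow P
  have hQ := coprime_index_sylow Q
  have hinj : Function.Injective (sylowMap j Q P) := injective_of_forall_pow_eq_one Q.2 _
    fun y hy hjy => Subtype.ext (hj y (congrArg Subtype.val hy) (congrArg Subtype.val hjy))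
  have hxn : x ^ ((P : Subgroup X).index * (Q : Subgroup Y).index) ∈ P := by
    rw [pow_mul]
    exact pow_mem (Subgroup.pow_index_mem _ x) _
  refine card_eq_mul_card_of_zpowers_eq_top _ hinj
    (zpowers_pow_eq_top_of_not_isSquare hX P hx (hP.mul_left hQ) hxn) ?_ fun htop => hg ?_
  · obtain ⟨c, hc⟩ := hxj
    have hcQ : c ^ ((Q : Subgroup Y).index * (P : Subgroup X).index) ∈ Q := by
      rw [pow_mul]
      exact pow_mem (Subgroup.pow_index_mem _ c) _
    refine ⟨⟨_, hcQ⟩, Subtype.ext ?_⟩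
    change j (c ^ _) = (x ^ _) ^ 2
    rw [map_pow, hc, pow_right_comm, mul_comm]
  · obtain ⟨c, hc⟩ : ⟨g ^ (P : Subgroup X).index, Subgroup.pow_index_mem _ g⟩ ∈
        (sylowMap j Q P).range := htop ▸ Subgroup.mem_top _
    have hc : j c = g ^ (P : Subgroup X).index := congrArg Subtype.val hc
    obtain ⟨z, hz⟩ := exists_pow_eq_of_coprime hP ⟨(c : Y), by
      rw [← map_pow N, ← hc, hNj]⟩
    exact ⟨z, by rw [← hz, sq]⟩

theorem card_sylow_two_eq (N : X →* Y) (j : Y →* X) (P : Sylow 2 X) (Q : Sylow 2 Y)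
    (hX : {x : X | orderOf x = 2}.Subsingleton) (hY : {y : Y | orderOf y = 2}.Subsingleton)
    {g : X} (hg : ¬ IsSquare (N g)) {t : Y} (ht : orderOf t = 2) (hjt : j t = 1)
    (hNj : ∀ k, ∀ x : X, x ^ 2 ^ k = 1 → x ^ 2 = j (N x)) :
    Nat.card (P : Subgroup X) = Nat.card (Q : Subgroup Y) := by
  have htQ : t ∈ Q := mem_sylow_of_pow_eq_one Q (k := 1) (by
    rw [pow_one, ← ht, pow_orderOf_eq_one])
  refine card_eq_of_pow_eq_map (ℓ := 2) (sylowMap N P Q) (sylowMap j Q P) ?_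
    (card_ker_powMonoidHom_two_le (subsingleton_orderOf_eq_subgroup hX _)) ?_ fun x => ?_
  · have hgP : g ^ (P : Subgroup X).index ∈ P := Subgroup.pow_index_mem _ g
    have hgQ : N g ^ (P : Subgroup X).index ∈ Q := map_pow N g _ ▸ map_mem_sylow N P Q hgP
    rw [← MonoidHom.range_eq_top, ← top_le_iff,
      ← zpowers_pow_eq_top_of_not_isSquare hY Q hg (coprime_index_sylow P) hgQ,
      Subgroup.zpowers_le]
    exact ⟨⟨_, hgP⟩, Subtype.ext (map_pow N g _)⟩
  · let t' : (sylowMap j Q P).ker := ⟨⟨t, htQ⟩, Subtype.ext hjt⟩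
    have ht' : orderOf t' = 2 := by
      rw [← Subgroup.orderOf_coe, ← Subgroup.orderOf_coe]
      exact ht
    exact ht'.symm.dvd.trans (orderOf_dvd_natCard t')
  · obtain ⟨k, hk⟩ := exists_pow_eq_one_of_mem_sylow P x.2
    exact Subtype.ext (hNj k x hk)

end SylowSubgroups

section Pell

theorem exists_mul_sq_of_coprime_of_mul_eq {a b D v : ℕ} (hab : a.Coprime b) (hD : 0 < D)
    (h : a * b = D * v ^ 2) :
    ∃ e f c d : ℕ, e * f = D ∧ a = e * c ^ 2 ∧ b = f * d ^ 2 := by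
  have hg : D.gcd a * D.gcd b = D := by
    rw [← Nat.Coprime.gcd_mul D hab, h, Nat.gcd_mul_right_right]
  obtain ⟨a', ha'⟩ := Nat.gcd_dvd_right D a
  obtain ⟨b', hb'⟩ := Nat.gcd_dvd_right D b
  have hsq : a' * b' = v ^ 2 := by
    refine Nat.eq_of_mul_eq_mul_left hD ?_
    calc D * (a' * b') = D.gcd a * a' * (D.gcd b * b') := by nth_rw 1 [← hg]; ring
      _ = D * v ^ 2 := by rw [← ha', ← hb', h]
  have hcop : a'.Coprime b' :=
    hab.of_dvd (Dvd.intro_left _ ha'.symm) (Dvd.intro_left _ hb'.symm)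
  obtain ⟨c, rfl⟩ := exists_eq_pow_of_mul_eq_pow (Nat.isUnit_iff.2 hcop) hsq
  obtain ⟨d, rfl⟩ := exists_eq_pow_of_mul_eq_pow (Nat.isUnit_iff.2 hcop.symm)
    ((mul_comm _ _).trans hsq)
  exact ⟨D.gcd a, D.gcd b, c, d, hg, ha', hb'⟩

theorem exists_mul_sq_eq_add_two_of_even {D t u : ℕ} (hD : 0 < D) (ht : Even t) (ht0 : 0 < t)
    (h : t ^ 2 = D * u ^ 2 + 1) :
    ∃ e f c d : ℕ, e * f = D ∧ f * d ^ 2 = e * c ^ 2 + 2 ∧ Odd c ∧ Odd d := by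
  obtain ⟨s, rfl⟩ : ∃ s, t = 2 * s + 2 := by
    obtain ⟨r, rfl⟩ := ht
    exact ⟨r - 1, by lia⟩
  have hfac : (2 * s + 1) * (2 * s + 3) = D * u ^ 2 := by linarith
  have hcop : (2 * s + 1).Coprime (2 * s + 3) :=
    (Nat.coprime_self_add_right (m := 2 * s + 1) (n := 2)).2 (by simp)
  obtain ⟨e, f, c, d, hef, hc, hd⟩ := exists_mul_sq_of_coprime_of_mul_eq hcop hD hfac
  refine ⟨e, f, c, d, hef, by lia, ?_, ?_⟩
  · have hodd : Odd (e * c ^ 2) := hc ▸ ⟨s, rfl⟩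
    exact (Nat.odd_pow_iff two_ne_zero).1 (Nat.odd_mul.1 hodd).2
  · have hodd : Odd (f * d ^ 2) := hd ▸ ⟨s + 1, by ring⟩
    exact (Nat.odd_pow_iff two_ne_zero).1 (Nat.odd_mul.1 hodd).2

theorem exists_mul_sq_eq_add_one_of_odd {D t u : ℕ} (hD : Odd D) (ht : Odd t)
    (h : t ^ 2 = D * u ^ 2 + 1) :
    ∃ e f c d : ℕ, e * f = D ∧ f * d ^ 2 = e * c ^ 2 + 1 ∧ t = 2 * (e * c ^ 2) + 1 := by
  have hu : Even u := by
    by_contra hodd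
    have hodd' : Odd (D * u ^ 2) := hD.mul (Nat.not_even_iff_odd.1 hodd).pow
    exact Nat.not_even_iff_odd.2 (h ▸ ht.pow) hodd'.add_one
  obtain ⟨s, rfl⟩ := ht
  obtain ⟨v, rfl⟩ := hu
  have hfac : s * (s + 1) = D * v ^ 2 := by linarith
  obtain ⟨e, f, c, d, hef, hc, hd⟩ := exists_mul_sq_of_coprime_of_mul_eq
    (by simp : s.Coprime (s + 1)) hD.pos hfac
  exact ⟨e, f, c, d, hef, by lia, by lia⟩

/- Split `(t - 1) * (t + 1) = D * u ^ 2` for the fundamental solution `t ^ 2 - D * u ^ 2 = 1`. The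
case `f = 1` of the first alternative would give a smaller solution. -/
theorem exists_mul_sq_eq_add_one_or_add_two {D : ℕ} (hD : Odd D) (hns : ¬IsSquare (D : ℤ)) :
    ∃ e f c d : ℕ, e * f = D ∧
      ((f * d ^ 2 = e * c ^ 2 + 1 ∧ f ≠ 1) ∨ (f * d ^ 2 = e * c ^ 2 + 2 ∧ Odd c ∧ Odd d)) := by
  obtain ⟨a, ha1, -, hmin⟩ := Pell.IsFundamental.exists_of_not_isSquare
    (by exact_mod_cast hD.pos) hns
  lift a.x to ℕ using by lia with t ht
  have htu : t ^ 2 = D * a.y.natAbs ^ 2 + 1 := by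
    zify
    rw [sq_abs, ht]
    linarith [a.prop]
  rcases Nat.even_or_odd t with hte | hto
  · obtain ⟨e, f, c, d, hef, h⟩ := exists_mul_sq_eq_add_two_of_even hD.pos hte (by lia) htu
    exact ⟨e, f, c, d, hef, Or.inr h⟩
  · obtain ⟨e, f, c, d, hef, h, hlt⟩ := exists_mul_sq_eq_add_one_of_odd hD hto htu
    refine ⟨e, f, c, d, hef, Or.inl ⟨h, ?_⟩⟩
    rintro rfl
    obtain rfl : e = D := by lia
    let b : Pell.Solution₁ (e : ℤ) := Pell.Solution₁.mk d c (by
      zify at h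
      linarith)
    have hd1 : 1 < d := by nlinarith
    have htd : (t : ℤ) ≤ d := ht ▸ @hmin b (by simpa [b] using hd1)
    have : t ≤ d := by exact_mod_cast htd
    nlinarith

theorem exists_sq_add_of_prime {p : ℕ} (hp : p.Prime) (hp2 : Odd p) :
    ∃ c d : ℤ, p * d ^ 2 = c ^ 2 + 1 ∨
      (p * d ^ 2 = c ^ 2 + 2 ∨ d ^ 2 = p * c ^ 2 + 2) ∧ Odd c ∧ Odd d := by
  obtain ⟨e, f, c, d, hef, h⟩ := exists_mul_sq_eq_add_one_or_add_two hp2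
    (Nat.prime_iff_prime_int.1 hp).irreducible.not_isSquare
  refine ⟨c, d, ?_⟩
  norm_cast
  rcases Nat.prime_mul_iff.1 (hef ▸ hp) with ⟨-, rfl⟩ | ⟨-, rfl⟩
  · rw [mul_one] at hef
    subst hef
    rcases h with ⟨-, h1⟩ | ⟨h, hodd⟩
    · exact absurd rfl h1
    · exact Or.inr ⟨Or.inr (by rwa [one_mul] at h), hodd⟩
  · rw [one_mul] at hef
    subst hef
    rw [one_mul] at h
    exact h.imp And.left fun h => ⟨Or.inl h.1, h.2⟩

theorem exists_sq_sub_mul_sq_eq_neg_one {p : ℕ} (hp : p.Prime) (hp4 : p % 4 = 1) :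
    ∃ x y : ℤ, x ^ 2 - p * y ^ 2 = -1 := by
  obtain ⟨c, d, h | ⟨h, hc, hd⟩⟩ := exists_sq_add_of_prime hp (Nat.odd_iff.2 (by lia))
  · exact ⟨c, d, by linarith⟩
  · have hc4 := Int.sq_mod_four_eq_one_of_odd hc
    have hd4 := Int.sq_mod_four_eq_one_of_odd hd
    have hmul (a : ℤ) (ha : a % 4 = 1) : p * a % 4 = 1 := by
      rw [Int.mul_emod, ha, show (p : ℤ) % 4 = 1 by lia]
      rfl
    have := hmul _ hc4
    have := hmul _ hd4
    lia

theorem exists_sq_sub_mul_sq_eq_two {q : ℕ} (hq : q.Prime) (hq8 : q % 8 = 7) :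
    ∃ x y : ℤ, x ^ 2 - q * y ^ 2 = 2 := by
  obtain ⟨c, d, h | ⟨h | h, hc, hd⟩⟩ := exists_sq_add_of_prime hq (Nat.odd_iff.2 (by lia))
  · have := Fact.mk hq
    have hc : (c : ZMod q) ^ 2 = -1 := by
      have := congrArg (Int.cast : ℤ → ZMod q) h
      push_cast at this
      rw [CharP.cast_eq_zero, zero_mul] at this
      exact eq_neg_of_add_eq_zero_left this.symm
    exact absurd (by lia : q % 4 = 3) (ZMod.mod_four_ne_three_of_sq_eq_neg_one hc)
  · obtain ⟨k, hk⟩ := Int.eight_dvd_sq_sub_one_of_odd hc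
    obtain ⟨l, hl⟩ := Int.eight_dvd_sq_sub_one_of_odd hd
    obtain ⟨r, hr⟩ : ∃ r : ℤ, (q : ℤ) = 8 * r + 7 := ⟨q / 8, by lia⟩
    have hmod : q * d ^ 2 = 8 * (8 * r * l + r + 7 * l) + 7 := by
      rw [hr, eq_add_of_sub_eq hl]
      ring
    lia
  · exact ⟨d, c, by linarith⟩

theorem eq_and_eq_of_mul_eq_prime_mul_prime {p q e f : ℕ} (hp : p.Prime) (hq : q.Prime)
    (h : e * f = p * q) :
    e = 1 ∧ f = p * q ∨ e = q ∧ f = p ∨ e = p ∧ f = q ∨ e = p * q ∧ f = 1 := by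
  obtain ⟨e₁, e₂, he₁, he₂, rfl⟩ := Nat.dvd_mul.1 (Dvd.intro f h)
  have hp0 := hp.pos
  have hq0 := hq.pos
  rcases (Nat.dvd_prime hp).1 he₁ with h₁ | h₁ <;>
    rcases (Nat.dvd_prime hq).1 he₂ with h₂ | h₂ <;> rw [h₁, h₂] at h ⊢
  · exact .inl ⟨rfl, by lia⟩
  · exact .inr (.inl ⟨one_mul q, Nat.eq_of_mul_eq_mul_left hq0 (by linarith)⟩)
  · exact .inr (.inr (.inl ⟨mul_one p, Nat.eq_of_mul_eq_mul_left hp0 (by linarith)⟩))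
  · exact .inr (.inr (.inr ⟨rfl, Nat.eq_of_mul_eq_mul_left (mul_pos hp0 hq0) (by linarith)⟩))

theorem not_sq_sub_mul_sq_eq_mul_of_legendreSym {r : ℕ} [Fact r.Prime] (hr : r ≠ 2) {a x : ℤ}
    (ha : legendreSym r a = -1) (hx : x = 1 ∨ x = 2) (y k : ℤ) :
    x ^ 2 - a * y ^ 2 ≠ r * k := by
  intro h
  have hdvd := (legendreSym.prime_dvd_of_eq_neg_one ha ⟨k, h⟩).1
  have hr2 := (Fact.out : r.Prime).two_le
  rcases hx with rfl | rfl <;> have := Int.le_of_dvd (by norm_num) hdvd <;> lia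

end Pell

namespace Cond1

variable {p q : ℕ}

theorem p_mod_eight (h : Cond1 p q) : p % 8 = 5 := by
  obtain ⟨-, -, hp4, -, h2p, -⟩ := h
  rw [jacobiSym.at_two (Nat.odd_iff.2 (by lia)), ZMod.χ₈_nat_mod_eight] at h2p
  have hp8 : p % 8 = 1 ∨ p % 8 = 5 := by lia
  refine hp8.resolve_left fun hp1 => ?_
  rw [hp1] at h2p
  exact absurd h2p (by decide)

theorem q_mod_eight (h : Cond1 p q) : q % 8 = 7 := by
  obtain ⟨-, -, -, hq4, -, h2q, -⟩ := h
  rw [jacobiSym.at_two (Nat.odd_iff.2 (by lia)), ZMod.χ₈_nat_mod_eight] at h2q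
  have hq8 : q % 8 = 3 ∨ q % 8 = 7 := by lia
  refine hq8.resolve_left fun hq3 => ?_
  rw [hq3] at h2q
  exact absurd h2q (by decide)

theorem p_ne_q (h : Cond1 p q) : p ≠ q := by
  have := h.p_mod_eight
  have := h.q_mod_eight
  lia

theorem p_ne_two (h : Cond1 p q) : p ≠ 2 := by
  have := h.p_mod_eight
  lia

theorem q_ne_two (h : Cond1 p q) : q ≠ 2 := by
  have := h.q_mod_eight
  lia

theorem legendreSym_p_two [Fact p.Prime] (h : Cond1 p q) : legendreSym p 2 = -1 := by
  rw [jacobiSym.legendreSym.to_jacobiSym]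
  exact h.2.2.2.2.1

theorem legendreSym_p_neg_two [Fact p.Prime] (h : Cond1 p q) : legendreSym p (-2) = -1 := by
  rw [show (-2 : ℤ) = -1 * 2 by norm_num, legendreSym.mul, h.legendreSym_p_two,
    legendreSym.at_neg_one h.p_ne_two, ZMod.χ₄_nat_one_mod_four h.2.2.1, one_mul]

theorem legendreSym_q_two [Fact q.Prime] (h : Cond1 p q) : legendreSym q 2 = 1 := by
  rw [jacobiSym.legendreSym.to_jacobiSym]
  exact h.2.2.2.2.2.1

theorem legendreSym_q_neg_one [Fact q.Prime] (h : Cond1 p q) : legendreSym q (-1) = -1 := by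
  rw [legendreSym.at_neg_one h.q_ne_two, ZMod.χ₄_nat_three_mod_four h.2.2.2.1]

theorem legendreSym_q_p [Fact q.Prime] (h : Cond1 p q) : legendreSym q p = -1 := by
  rw [jacobiSym.legendreSym.to_jacobiSym]
  exact h.2.2.2.2.2.2

theorem legendreSym_p_q [Fact p.Prime] [Fact q.Prime] (h : Cond1 p q) : legendreSym p q = -1 := by
  rw [← legendreSym.quadratic_reciprocity_one_mod_four h.2.2.1 h.q_ne_two, h.legendreSym_q_p]

theorem not_isSquare_mul (h : Cond1 p q) : ¬IsSquare ((p * q : ℕ) : ℤ) := by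
  have hsf : Squarefree (p * q) := Nat.squarefree_mul_iff.2
    ⟨(Nat.coprime_primes h.1 h.2.1).2 h.p_ne_q, h.1.prime.squarefree, h.2.1.prime.squarefree⟩
  rw [Int.isSquare_natCast_iff]
  rintro ⟨s, hs⟩
  have hs1 : s = 1 := Nat.isUnit_iff.1 (hsf s (Dvd.intro_left 1 (by rw [hs, one_mul])))
  have := h.1.one_lt
  have := h.2.1.one_lt
  nlinarith

theorem exists_mul_sq_sub_mul_sq_eq_neg_two (h : Cond1 p q) :
    ∃ x y : ℤ, p * x ^ 2 - q * y ^ 2 = -2 := by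
  have := Fact.mk h.1
  have := Fact.mk h.2.1
  have hodd : Odd (p * q) :=
    (h.1.odd_of_ne_two h.p_ne_two).mul (h.2.1.odd_of_ne_two h.q_ne_two)
  obtain ⟨e, f, c, d, hef, hcd⟩ := exists_mul_sq_eq_add_one_or_add_two hodd h.not_isSquare_mul
  replace hcd : ((f * d ^ 2 : ℤ) = e * c ^ 2 + 1 ∧ f ≠ 1) ∨ (f * d ^ 2 : ℤ) = e * c ^ 2 + 2 := by
    exact_mod_cast hcd.imp_right And.left
  have legendreSym_q_two_mul_p : legendreSym q (2 * p) = -1 := by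
    rw [legendreSym.mul, h.legendreSym_q_two, h.legendreSym_q_p, one_mul]
  rcases eq_and_eq_of_mul_eq_prime_mul_prime h.1 h.2.1 hef with
    ⟨rfl, rfl⟩ | ⟨rfl, rfl⟩ | ⟨rfl, rfl⟩ | ⟨rfl, rfl⟩
  · rcases hcd with ⟨hcd, -⟩ | hcd <;> push_cast at hcd
    · exact absurd (by linarith) (not_sq_sub_mul_sq_eq_mul_of_legendreSym h.q_ne_two
        h.legendreSym_q_neg_one (.inl rfl) c (p * d ^ 2))
    · exact absurd (by linarith) (not_sq_sub_mul_sq_eq_mul_of_legendreSym h.p_ne_two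
        h.legendreSym_p_neg_two (.inr rfl) c (2 * q * d ^ 2))
  · rcases hcd with ⟨hcd, -⟩ | hcd
    · exact absurd (by linarith) (not_sq_sub_mul_sq_eq_mul_of_legendreSym h.q_ne_two
        h.legendreSym_q_p (.inl rfl) d (-c ^ 2))
    · exact absurd (by linarith) (not_sq_sub_mul_sq_eq_mul_of_legendreSym h.q_ne_two
        legendreSym_q_two_mul_p (.inr rfl) d (-2 * c ^ 2))
  · rcases hcd with ⟨hcd, -⟩ | hcd
    · exact absurd (by linarith) (not_sq_sub_mul_sq_eq_mul_of_legendreSym h.p_ne_two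
        h.legendreSym_p_q (.inl rfl) d (-c ^ 2))
    · exact ⟨c, d, by linarith⟩
  · rcases hcd with ⟨-, h1⟩ | hcd
    · exact absurd rfl h1
    · push_cast at hcd
      exact absurd (by linarith) (not_sq_sub_mul_sq_eq_mul_of_legendreSym h.p_ne_two
        h.legendreSym_p_two (.inr rfl) d (-2 * q * c ^ 2))

end Cond1
/-- `L = M(θ)` is a quadratic extension of fields with `θ ^ 2 = d ∈ M`. -/
structure IsQuadExt {M L : Type*} [Field M] [Field L] [Algebra M L] (θ : L) (d : M) : Prop where
  sq : θ ^ 2 = algebraMap M L d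
  notMem : ∀ x : M, algebraMap M L x ≠ θ
  span : ∀ z : L, ∃ x y : M, z = algebraMap M L x + algebraMap M L y * θ

namespace IsQuadExt

variable {M L : Type*} [Field M] [Field L] [Algebra M L] {θ : L} {d : M}

theorem ne_zero (h : IsQuadExt θ d) : θ ≠ 0 := fun h0 => h.notMem 0 (by rw [map_zero, h0])

theorem coord_unique (h : IsQuadExt θ d) {x y x' y' : M}
    (e : algebraMap M L x + algebraMap M L y * θ = algebraMap M L x' + algebraMap M L y' * θ) :
    x = x' ∧ y = y' := by
  obtain rfl : y = y' := by
    by_contra hne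
    have hy0 : algebraMap M L (y - y') ≠ 0 := by
      rwa [Ne, map_eq_zero, sub_eq_zero]
    refine h.notMem ((x' - x) / (y - y')) ?_
    rw [map_div₀, div_eq_iff hy0, map_sub, map_sub]
    linear_combination -e
  exact ⟨(algebraMap M L).injective (add_right_cancel e), rfl⟩

/-- The homomorphism from `M[X] / (X ^ 2 - d)` to `L` sending the class of `X` to `θ`. -/
def quadraticAlgebraHom (h : IsQuadExt θ d) : QuadraticAlgebra M d 0 →ₐ[M] L :=
  QuadraticAlgebra.lift ⟨θ, by
    rw [← pow_two, h.sq, zero_smul, add_zero, Algebra.algebraMap_eq_smul_one]⟩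

theorem quadraticAlgebraHom_mk (h : IsQuadExt θ d) (x y : M) :
    h.quadraticAlgebraHom ⟨x, y⟩ = algebraMap M L x + algebraMap M L y * θ := by
  rw [quadraticAlgebraHom, QuadraticAlgebra.lift_apply_apply, Algebra.smul_def, Algebra.smul_def,
    mul_one]

theorem bijective_quadraticAlgebraHom (h : IsQuadExt θ d) :
    Function.Bijective h.quadraticAlgebraHom := by
  refine ⟨fun ⟨x, y⟩ ⟨x', y'⟩ e => ?_, fun z => ?_⟩
  · rw [h.quadraticAlgebraHom_mk, h.quadraticAlgebraHom_mk] at e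
    exact QuadraticAlgebra.ext (h.coord_unique e).1 (h.coord_unique e).2
  · obtain ⟨x, y, rfl⟩ := h.span z
    exact ⟨⟨x, y⟩, h.quadraticAlgebraHom_mk x y⟩

/-- The isomorphism of `M[X] / (X ^ 2 - d)` with `L` sending the class of `X` to `θ`. -/
def quadraticAlgebraEquiv (h : IsQuadExt θ d) : QuadraticAlgebra M d 0 ≃ₐ[M] L :=
  AlgEquiv.ofBijective h.quadraticAlgebraHom h.bijective_quadraticAlgebraHom

theorem quadraticAlgebraEquiv_mk (h : IsQuadExt θ d) (x y : M) :
    h.quadraticAlgebraEquiv ⟨x, y⟩ = algebraMap M L x + algebraMap M L y * θ := by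
  rw [quadraticAlgebraEquiv, AlgEquiv.ofBijective_apply, h.quadraticAlgebraHom_mk]

theorem quadraticAlgebraEquiv_symm_coord (h : IsQuadExt θ d) (x y : M) :
    h.quadraticAlgebraEquiv.symm (algebraMap M L x + algebraMap M L y * θ) = ⟨x, y⟩ := by
  rw [← h.quadraticAlgebraEquiv_mk, AlgEquiv.symm_apply_apply]

theorem exists_lift (h : IsQuadExt θ d) {E : Type*} [CommRing E] (φ : M →+* E) (c : E)
    (hc : c ^ 2 = φ d) :
    ∃ ψ : L →+* E, (∀ x, ψ (algebraMap M L x) = φ x) ∧ ψ θ = c := by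
  let := φ.toAlgebra
  let ψ : L →ₐ[M] E := (QuadraticAlgebra.lift ⟨c, by
    rw [← pow_two, hc, zero_smul, add_zero, Algebra.smul_def, mul_one]; rfl⟩).comp
    h.quadraticAlgebraEquiv.symm.toAlgHom
  refine ⟨ψ, fun x => ψ.commutes x, ?_⟩
  have := h.quadraticAlgebraEquiv_symm_coord 0 1
  simp only [map_zero, zero_add, map_one, one_mul] at this
  simp [ψ, this]

theorem finrank_eq_two (h : IsQuadExt θ d) : Module.finrank M L = 2 := by
  rw [← h.quadraticAlgebraEquiv.toLinearEquiv.finrank_eq, QuadraticAlgebra.finrank_eq_two]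

theorem norm_coord (h : IsQuadExt θ d) (x y : M) :
    Algebra.norm M (algebraMap M L x + algebraMap M L y * θ) = x ^ 2 - d * y ^ 2 := by
  rw [← h.quadraticAlgebraEquiv_mk,
    ← Algebra.norm_eq_of_algEquiv h.quadraticAlgebraEquiv.symm, AlgEquiv.symm_apply_apply]
  refine (QuadraticAlgebra.det_toLinearMap_eq_norm (⟨x, y⟩ : QuadraticAlgebra M d 0)).trans ?_
  rw [QuadraticAlgebra.norm_def]
  ring

theorem exists_norm_eq (h : IsQuadExt θ d) (z : L) :
    ∃ x y : M, Algebra.norm M z = x ^ 2 - d * y ^ 2 := by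
  obtain ⟨x, y, rfl⟩ := h.span z
  exact ⟨x, y, h.norm_coord x y⟩

/-- The automorphism `x + y * θ ↦ x - y * θ` of a quadratic extension. -/
def conj (h : IsQuadExt θ d) : L ≃ₐ[M] L :=
  AlgEquiv.ofRingEquiv (f := (h.quadraticAlgebraEquiv.symm.toRingEquiv.trans
    (starRingAut : RingAut (QuadraticAlgebra M d 0))).trans h.quadraticAlgebraEquiv.toRingEquiv)
    fun x => by simp [QuadraticAlgebra.algebraMap_eq, quadraticAlgebraEquiv_mk]

theorem conj_coord (h : IsQuadExt θ d) (x y : M) :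
    h.conj (algebraMap M L x + algebraMap M L y * θ) =
      algebraMap M L x - algebraMap M L y * θ := by
  simp [conj, quadraticAlgebraEquiv_symm_coord, quadraticAlgebraEquiv_mk, sub_eq_add_neg]

@[simp] theorem conj_gen (h : IsQuadExt θ d) : h.conj θ = -θ := by
  simpa using h.conj_coord 0 1

theorem norm_eq_mul_conj (h : IsQuadExt θ d) (z : L) :
    algebraMap M L (Algebra.norm M z) = z * h.conj z := by
  obtain ⟨x, y, rfl⟩ := h.span z
  rw [h.norm_coord, h.conj_coord]
  simp only [map_sub, map_mul, map_pow, ← h.sq]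
  ring

theorem exists_mul_sq_of_norm_eq_sq (h : IsQuadExt θ d) {a : L} (ha : a ≠ 0) {f : M}
    (hf : Algebra.norm M a = f ^ 2) :
    ∃ (g : M) (k : L), g ≠ 0 ∧ k ≠ 0 ∧ a = algebraMap M L g * k ^ 2 := by
  have : FiniteDimensional M L := .of_finrank_eq_succ h.finrank_eq_two
  have hf0 : f ≠ 0 := by
    rintro rfl
    exact ha (Algebra.norm_eq_zero_iff.1 (hf.trans (zero_pow two_ne_zero)))
  by_cases hb : a + algebraMap M L f = 0
  · exact ⟨-f, 1, neg_ne_zero.2 hf0, one_ne_zero, by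
      rw [map_neg, one_pow, mul_one, eq_neg_of_add_eq_zero_left hb]⟩
  have hb0 : Algebra.norm M (a + algebraMap M L f) ≠ 0 := Algebra.norm_ne_zero_iff.2 hb
  refine ⟨f / Algebra.norm M (a + algebraMap M L f), a + algebraMap M L f, div_ne_zero hf0 hb0,
    hb, ?_⟩
  have hN : a * h.conj a = algebraMap M L f ^ 2 := by
    rw [← h.norm_eq_mul_conj, hf, map_pow]
  rw [map_div₀, div_mul_eq_mul_div, eq_div_iff ((map_ne_zero _).2 hb0), h.norm_eq_mul_conj,
    map_add, AlgEquiv.commutes]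
  linear_combination (a + algebraMap M L f) * hN

end IsQuadExt
section UniqueFactorization

open UniqueFactorizationMonoid

variable {α : Type*} [CommMonoidWithZero α] [NormalizationMonoid α] [UniqueFactorizationMonoid α]
  [Subsingleton αˣ] [DecidableEq α]

theorem exists_eq_sq_of_even_count {a : α} (ha : a ≠ 0)
    (h : ∀ v, Irreducible v → Even ((normalizedFactors a).count v)) : ∃ b, a = b ^ 2 := by
  refine ⟨∏ v ∈ (normalizedFactors a).toFinset, v ^ ((normalizedFactors a).count v / 2), ?_⟩
  calc a = (normalizedFactors a).prod := (associated_iff_eq.1 (prod_normalizedFactors ha)).symm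
    _ = ∏ v ∈ (normalizedFactors a).toFinset, v ^ (normalizedFactors a).count v :=
      Finset.prod_multiset_count _
    _ = _ := by
      rw [← Finset.prod_pow]
      refine Finset.prod_congr rfl fun v hv => ?_
      have heven := h v (irreducible_of_normalized_factor v (Multiset.mem_toFinset.1 hv))
      rw [← pow_mul, Nat.div_mul_cancel heven.two_dvd]

theorem exists_mul_pow_mul_pow_eq_sq {a v₁ v₂ : α} (ha : a ≠ 0) (h₁ : Irreducible v₁)
    (h₂ : Irreducible v₂)
    (h : ∀ v, Irreducible v → v ≠ v₁ → v ≠ v₂ → Even ((normalizedFactors a).count v)) :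
    ∃ (i₁ i₂ : ℕ) (b : α), a * v₁ ^ i₁ * v₂ ^ i₂ = b ^ 2 := by
  have hv₁ (n : ℕ) : v₁ ^ n ≠ 0 := pow_ne_zero n h₁.ne_zero
  have hv₂ (n : ℕ) : v₂ ^ n ≠ 0 := pow_ne_zero n h₂.ne_zero
  refine ⟨(normalizedFactors a).count v₁, if v₁ = v₂ then 0 else (normalizedFactors a).count v₂,
    exists_eq_sq_of_even_count (mul_ne_zero (mul_ne_zero ha (hv₁ _)) (hv₂ _)) fun v hv => ?_⟩
  rw [normalizedFactors_mul (mul_ne_zero ha (hv₁ _)) (hv₂ _), normalizedFactors_mul ha (hv₁ _),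
    normalizedFactors_pow, normalizedFactors_pow, normalizedFactors_irreducible h₁,
    normalizedFactors_irreducible h₂]
  simp only [Multiset.count_add, Multiset.count_nsmul, Multiset.count_singleton,
    associated_iff_eq.1 (normalize_associated _)]
  rcases eq_or_ne v v₁ with rfl | hne₁ <;> rcases eq_or_ne v v₂ with rfl | hne₂
  · simp
  · simp [hne₂]
  · simp [hne₁, hne₁.symm]
  · simpa [hne₁, hne₂] using h v hv hne₁ hne₂

end UniqueFactorization

/-- The principal fractional ideal generated by `a ≠ 0` is a square: some multiple of `a` by a
nonzero square is integral and generates the square of an ideal. -/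
def IsIdealSquare {M : Type*} [Field M] (a : M) : Prop :=
  a ≠ 0 ∧ ∃ (c : M) (b : 𝓞 M) (J : Ideal (𝓞 M)),
    c ≠ 0 ∧ a * c ^ 2 = algebraMap (𝓞 M) M b ∧ Ideal.span {b} = J ^ 2

namespace IsIdealSquare

section Field

variable {M : Type*} [Field M]

theorem mul {a a' : M} (h : IsIdealSquare a) (h' : IsIdealSquare a') : IsIdealSquare (a * a') := by
  obtain ⟨h0, c, b, J, hc, hb, hJ⟩ := h
  obtain ⟨h0', c', b', J', hc', hb', hJ'⟩ := h'
  refine ⟨mul_ne_zero h0 h0', c * c', b * b', J * J', mul_ne_zero hc hc', ?_, ?_⟩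
  · rw [map_mul, ← hb, ← hb']
    ring
  · rw [← Ideal.span_singleton_mul_span_singleton, hJ, hJ', mul_pow]

theorem sq {k : M} (hk : k ≠ 0) : IsIdealSquare (k ^ 2) :=
  ⟨pow_ne_zero _ hk, k⁻¹, 1, ⊤, inv_ne_zero hk, by simp [hk], by simp [← Ideal.one_eq_top]⟩

theorem mul_sq_iff {a k : M} (hk : k ≠ 0) : IsIdealSquare (a * k ^ 2) ↔ IsIdealSquare a := by
  refine ⟨fun h => ?_, fun h => h.mul (sq hk)⟩
  have := h.mul (sq (inv_ne_zero hk))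
  rwa [mul_assoc, ← mul_pow, mul_inv_cancel₀ hk, one_pow, mul_one] at this

theorem of_span_eq_sq {b : 𝓞 M} (hb : b ≠ 0) {J : Ideal (𝓞 M)} (h : Ideal.span {b} = J ^ 2) :
    IsIdealSquare (algebraMap (𝓞 M) M b) :=
  ⟨by simpa using hb, 1, b, J, one_ne_zero, by simp, h⟩

theorem unit (u : (𝓞 M)ˣ) : IsIdealSquare (algebraMap (𝓞 M) M u) :=
  of_span_eq_sq u.ne_zero (J := ⊤) (by
    simp [← Ideal.one_eq_top, Ideal.span_singleton_eq_top.2 u.isUnit])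

end Field

variable {M L : Type*} [Field M] [NumberField M] [Field L] [NumberField L]

theorem exists_span_eq_sq {b : 𝓞 M} (h : IsIdealSquare (algebraMap (𝓞 M) M b)) :
    ∃ J : Ideal (𝓞 M), Ideal.span {b} = J ^ 2 := by
  obtain ⟨-, c, b', J, hc, hb', hJ⟩ := h
  obtain ⟨n, m, hm, rfl⟩ := IsFractionRing.div_surjective (A := 𝓞 M) c
  have hn0 : n ≠ 0 := by
    rintro rfl
    simp at hc
  have hm0 : algebraMap (𝓞 M) M m ≠ 0 := by simpa using nonZeroDivisors.ne_zero hm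
  have e : b * n ^ 2 = b' * m ^ 2 := by
    apply RingOfIntegers.coe_injective
    simp only [map_mul, map_pow]
    rw [← hb']
    field_simp
  have hsq : Ideal.span {b} * Ideal.span {n} ^ 2 = (J * Ideal.span {m}) ^ 2 := by
    rw [mul_pow, ← hJ, Ideal.span_singleton_pow, Ideal.span_singleton_pow,
      Ideal.span_singleton_mul_span_singleton, Ideal.span_singleton_mul_span_singleton, e]
  obtain ⟨J', hJ'⟩ : Ideal.span {n} ∣ J * Ideal.span {m} := by
    rw [← UniqueFactorizationMonoid.pow_dvd_pow_iff_dvd (n := 2) two_ne_zero, ← hsq]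
    exact dvd_mul_left _ _
  refine ⟨J', mul_right_cancel₀ (b := Ideal.span {n} ^ 2) ?_ ?_⟩
  · exact pow_ne_zero _ (by simpa using hn0)
  · rw [hsq, hJ', mul_pow, mul_comm]

theorem norm [Algebra M L] {a : L} (h : IsIdealSquare a) : IsIdealSquare (Algebra.norm M a) := by
  obtain ⟨h0, c, b, J, hc, hb, hJ⟩ := h
  refine ⟨Algebra.norm_ne_zero_iff.2 h0, Algebra.norm M c, Algebra.intNorm (𝓞 M) (𝓞 L) b,
    Ideal.relNorm (𝓞 M) J, Algebra.norm_ne_zero_iff.2 hc, ?_, ?_⟩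
  · rw [Algebra.algebraMap_intNorm (L := L), ← map_pow, ← map_mul, hb]
  · rw [← Ideal.relNorm_singleton, hJ, map_pow]

theorem exists_integral_mul_sq {g : M} (hg : g ≠ 0) :
    ∃ (b : 𝓞 M) (k : M), b ≠ 0 ∧ k ≠ 0 ∧ g = algebraMap (𝓞 M) M b * k ^ 2 := by
  obtain ⟨a, m, hm, rfl⟩ := IsFractionRing.div_surjective (A := 𝓞 M) g
  have hm0 : algebraMap (𝓞 M) M m ≠ 0 := by simpa using nonZeroDivisors.ne_zero hm
  refine ⟨a * m, (algebraMap (𝓞 M) M m)⁻¹, mul_ne_zero ?_ (nonZeroDivisors.ne_zero hm),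
    inv_ne_zero hm0, ?_⟩
  · rintro rfl
    simp at hg
  · rw [map_mul]
    field_simp

end IsIdealSquare

section Unramified

open UniqueFactorizationMonoid

variable {M L : Type*} [Field M] [NumberField M] [Field L] [NumberField L] [Algebra M L]

theorem count_map_eq_of_notMem_differentIdeal [DecidableEq (Ideal (𝓞 M))]
    [DecidableEq (Ideal (𝓞 L))] {δ : 𝓞 L} (hδ : δ ∈ differentIdeal (𝓞 M) (𝓞 L))
    {P : Ideal (𝓞 L)} [P.IsPrime] (hP : P ≠ ⊥) (hδP : δ ∉ P) {v : Ideal (𝓞 M)} (hv : Irreducible v)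
    [P.LiesOver v] {I : Ideal (𝓞 M)} (hI : I ≠ ⊥) :
    (normalizedFactors (I.map (algebraMap (𝓞 M) (𝓞 L)))).count P =
      (normalizedFactors I).count v := by
  have hPirr : Irreducible P := (Ideal.prime_of_isPrime hP inferInstance).irreducible
  have : v.IsMaximal := (Ideal.isPrime_of_prime hv.prime).isMaximal hv.ne_zero
  have hle : v.map (algebraMap (𝓞 M) (𝓞 L)) ≤ P := by
    rw [Ideal.map_le_iff_le_comap, ← Ideal.under_def, ← Ideal.over_def P v]
  have hnle : ¬v.map (algebraMap (𝓞 M) (𝓞 L)) ≤ P ^ 2 := by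
    intro h
    have := pow_sub_one_dvd_differentIdeal (𝓞 M) (p := v) P 2 hv.ne_zero (Ideal.dvd_iff_le.2 h)
    exact hδP (Ideal.dvd_iff_le.1 (by simpa using this) hδ)
  have hram : Ideal.ramificationIdx' v P = 1 :=
    Ideal.ramificationIdx'_spec (by rwa [pow_one]) hnle
  have hcount :=
    Ideal.IsDedekindDomain.emultiplicity_map_eq_ramificationIdx'_mul (w := P) hI hv hPirr hP
  rw [hram, Nat.cast_one, one_mul,
    emultiplicity_eq_count_normalizedFactors hPirr (Ideal.map_ne_bot_of_ne_bot hI),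
    emultiplicity_eq_count_normalizedFactors hv hI] at hcount
  simpa using hcount

theorem irreducible_span_singleton_of_prime {π : 𝓞 M} (hπ : Prime π) :
    Irreducible (Ideal.span {π}) :=
  (Ideal.prime_of_isPrime (by simpa using hπ.ne_zero)
    ((Ideal.span_singleton_prime hπ.ne_zero).2 hπ)).irreducible

theorem eq_span_singleton_of_prime_of_mem {π : 𝓞 M} (hπ : Prime π) {v : Ideal (𝓞 M)}
    (hv : v ≠ ⊤) (hmem : π ∈ v) : v = Ideal.span {π} :=
  ((((Ideal.span_singleton_prime hπ.ne_zero).2 hπ).isMaximal (by simpa using hπ.ne_zero)).eq_of_le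
    hv ((Ideal.span_singleton_le_iff_mem _).2 hmem)).symm

theorem even_count_of_map_eq_sq [DecidableEq (Ideal (𝓞 M))] {π₁ π₂ : 𝓞 M} (h₁ : Prime π₁)
    (h₂ : Prime π₂) {δ : 𝓞 L} (hδ : δ ∈ differentIdeal (𝓞 M) (𝓞 L))
    (hdvd : ∃ n : ℕ, δ ∣ algebraMap (𝓞 M) (𝓞 L) (π₁ * π₂) ^ n) {I : Ideal (𝓞 M)} (hI : I ≠ ⊥)
    {J : Ideal (𝓞 L)} (hIJ : I.map (algebraMap (𝓞 M) (𝓞 L)) = J ^ 2) {v : Ideal (𝓞 M)}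
    (hv : Irreducible v) (hv₁ : v ≠ Ideal.span {π₁}) (hv₂ : v ≠ Ideal.span {π₂}) :
    Even ((normalizedFactors I).count v) := by
  classical
  have hvp : v.IsPrime := Ideal.isPrime_of_prime hv.prime
  have := hvp.isMaximal hv.ne_zero
  obtain ⟨P, hPmax, hPv⟩ := Ideal.exists_maximal_ideal_liesOver_of_isIntegral (S := 𝓞 L) v
  have hδP : δ ∉ P := by
    intro hmem
    obtain ⟨n, hn⟩ := hdvd
    have hπv : π₁ * π₂ ∈ v := by
      rw [Ideal.over_def P v]
      exact hPmax.isPrime.mem_of_pow_mem n (Ideal.mem_of_dvd P hn hmem)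
    rcases hvp.mem_or_mem hπv with hmem | hmem
    · exact hv₁ (eq_span_singleton_of_prime_of_mem h₁ hvp.ne_top hmem)
    · exact hv₂ (eq_span_singleton_of_prime_of_mem h₂ hvp.ne_top hmem)
  rw [← count_map_eq_of_notMem_differentIdeal hδ
    (Ideal.ne_bot_of_liesOver_of_ne_bot hv.ne_zero P) hδP hv hI, hIJ,
    normalizedFactors_pow, Multiset.count_nsmul]
  exact even_two_mul _

theorem IsIdealSquare.descend {π₁ π₂ : 𝓞 M} (h₁ : Prime π₁) (h₂ : Prime π₂) {δ : 𝓞 L}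
    (hδ : δ ∈ differentIdeal (𝓞 M) (𝓞 L))
    (hdvd : ∃ n : ℕ, δ ∣ algebraMap (𝓞 M) (𝓞 L) (π₁ * π₂) ^ n) {g : M}
    (hg : IsIdealSquare (algebraMap M L g)) :
    ∃ i₁ i₂ : ℕ, IsIdealSquare
      (g * algebraMap (𝓞 M) M π₁ ^ i₁ * algebraMap (𝓞 M) M π₂ ^ i₂) := by
  classical
  obtain ⟨b, k, hb, hk, rfl⟩ :=
    exists_integral_mul_sq (g := g) fun h0 => hg.1 (by rw [h0, map_zero])
  have hbL : IsIdealSquare (algebraMap (𝓞 L) L (algebraMap (𝓞 M) (𝓞 L) b)) := by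
    rwa [map_mul, map_pow, mul_sq_iff ((map_ne_zero _).2 hk)] at hg
  obtain ⟨J, hJ⟩ := hbL.exists_span_eq_sq
  have hspan : (Ideal.span {b} : Ideal (𝓞 M)) ≠ ⊥ := by simpa using hb
  obtain ⟨i₁, i₂, J', hJ'⟩ := exists_mul_pow_mul_pow_eq_sq hspan
    (irreducible_span_singleton_of_prime h₁) (irreducible_span_singleton_of_prime h₂)
    fun v => even_count_of_map_eq_sq h₁ h₂ hδ hdvd hspan
      (by rw [Ideal.map_span, Set.image_singleton, hJ])
  refine ⟨i₁, i₂, ?_⟩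
  rw [mul_right_comm _ (_ ^ 2), mul_right_comm _ (_ ^ 2), mul_sq_iff hk, ← map_pow, ← map_mul,
    ← map_pow, ← map_mul]
  refine of_span_eq_sq (J := J') ?_ ?_
  · exact mul_ne_zero (mul_ne_zero hb (pow_ne_zero _ h₁.ne_zero)) (pow_ne_zero _ h₂.ne_zero)
  · rw [← hJ', Ideal.span_singleton_pow, Ideal.span_singleton_pow,
      Ideal.span_singleton_mul_span_singleton, Ideal.span_singleton_mul_span_singleton]

end Unramified

/-- `a` and `b` differ by a nonzero square factor. -/
def SqRel {M : Type*} [Field M] (a b : M) : Prop := ∃ k, k ≠ 0 ∧ a = b * k ^ 2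

namespace SqRel

variable {M : Type*} [Field M] {a b c d : M}

protected theorem refl (a : M) : SqRel a a := ⟨1, one_ne_zero, by simp⟩

protected theorem symm : SqRel a b → SqRel b a := by
  rintro ⟨k, hk, rfl⟩
  exact ⟨k⁻¹, inv_ne_zero hk, by field_simp⟩

protected theorem trans : SqRel a b → SqRel b c → SqRel a c := by
  rintro ⟨k, hk, rfl⟩ ⟨l, hl, rfl⟩
  exact ⟨l * k, mul_ne_zero hl hk, by ring⟩

protected theorem mul : SqRel a b → SqRel c d → SqRel (a * c) (b * d) := by
  rintro ⟨k, hk, rfl⟩ ⟨l, hl, rfl⟩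
  exact ⟨k * l, mul_ne_zero hk hl, by ring⟩

protected theorem pow (h : SqRel a b) (n : ℕ) : SqRel (a ^ n) (b ^ n) := by
  obtain ⟨k, hk, rfl⟩ := h
  exact ⟨k ^ n, pow_ne_zero n hk, by ring⟩

theorem sq (ha : a ≠ 0) : SqRel (a ^ 2) 1 := ⟨a, ha, by ring⟩

theorem mul_self (ha : a ≠ 0) : SqRel (a * a) 1 := ⟨a, ha, by ring⟩

theorem pow_even (ha : a ≠ 0) {n : ℕ} (hn : Even n) : SqRel (a ^ n) 1 := by
  obtain ⟨m, rfl⟩ := hn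
  exact ⟨a ^ m, pow_ne_zero m ha, by ring⟩

protected theorem map {E : Type*} [Field E] (φ : M →+* E) (h : SqRel a b) :
    SqRel (φ a) (φ b) := by
  obtain ⟨k, hk, rfl⟩ := h
  exact ⟨φ k, (map_ne_zero φ).2 hk, by rw [map_mul, map_pow]⟩

theorem pos_iff {a b : ℝ} (h : SqRel a b) : 0 < a ↔ 0 < b := by
  obtain ⟨k, hk, rfl⟩ := h
  exact mul_pos_iff_of_pos_right (by positivity)

theorem of_mul_right {u : M} (hu : u ≠ 0) : SqRel (a * u) b → SqRel a (b * u) := by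
  rintro ⟨k, hk, h⟩
  exact ⟨k / u, div_ne_zero hk hu, by field_simp; exact h⟩

end SqRel

theorem exists_ringOfIntegers_sq_eq {M : Type*} [Field M] {c : M} {b : 𝓞 M}
    (h : c ^ 2 = algebraMap (𝓞 M) M b) : ∃ s : 𝓞 M, algebraMap (𝓞 M) M s = c ∧ s ^ 2 = b := by
  obtain ⟨s, rfl⟩ : ∃ s : 𝓞 M, algebraMap (𝓞 M) M s = c :=
    ⟨⟨c, IsIntegral.of_pow two_pos (h ▸ RingOfIntegers.isIntegral_coe _)⟩, rfl⟩
  exact ⟨s, rfl, RingOfIntegers.coe_injective (by rw [map_pow, h])⟩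

/-- `a` is a unit of the ring of integers up to a nonzero square factor. -/
def IsUnitSq {M : Type*} [Field M] (a : M) : Prop :=
  ∃ u : (𝓞 M)ˣ, SqRel a (algebraMap (𝓞 M) M u)

namespace IsUnitSq

variable {M L : Type*} [Field M] [Field L] {a b c : M}

theorem unit (u : (𝓞 M)ˣ) : IsUnitSq (algebraMap (𝓞 M) M u) := ⟨u, .refl _⟩

theorem neg_one : IsUnitSq (-1 : M) := ⟨-1, by simpa using .refl _⟩

protected theorem mul : IsUnitSq a → IsUnitSq b → IsUnitSq (a * b) := by
  rintro ⟨u, hu⟩ ⟨v, hv⟩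
  exact ⟨u * v, by simpa using hu.mul hv⟩

protected theorem pow (n : ℕ) : IsUnitSq a → IsUnitSq (a ^ n) := by
  rintro ⟨u, hu⟩
  exact ⟨u ^ n, by simpa using hu.pow n⟩

theorem of_sqRel (h : SqRel a b) : IsUnitSq b → IsUnitSq a := by
  rintro ⟨u, hu⟩
  exact ⟨u, h.trans hu⟩

protected theorem map [Algebra M L] : IsUnitSq a → IsUnitSq (algebraMap M L a) := by
  rintro ⟨u, hu⟩
  refine ⟨Units.map (algebraMap (𝓞 M) (𝓞 L)) u, ?_⟩
  have := hu.map (algebraMap M L)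
  rwa [← IsScalarTower.algebraMap_apply, IsScalarTower.algebraMap_apply (𝓞 M) (𝓞 L) L] at this

theorem mul_pow_of_sqRel {n : ℕ} (h : SqRel a (b * c ^ n)) (hc : c ≠ 0) (hb : IsUnitSq b) :
    IsUnitSq (a * c ^ n) := by
  have hc2 : SqRel (c ^ n * c ^ n) 1 := SqRel.mul_self (pow_ne_zero n hc)
  have hab := (h.mul (SqRel.refl (c ^ n))).trans (mul_assoc b _ _ ▸ (SqRel.refl b).mul hc2)
  exact .of_sqRel (mul_one b ▸ hab) hb

theorem exists_mul_sq_eq {b : 𝓞 M} (hb : IsUnitSq (algebraMap (𝓞 M) M b)) :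
    ∃ (u : (𝓞 M)ˣ) (c : 𝓞 M), b = u * c ^ 2 := by
  obtain ⟨u, k, -, hk⟩ := hb
  obtain ⟨c, rfl, -⟩ := exists_ringOfIntegers_sq_eq (c := k) (b := ↑u⁻¹ * b) (by
    rw [map_mul, hk, ← mul_assoc, ← map_mul, Units.inv_mul, map_one, one_mul])
  exact ⟨u, c, RingOfIntegers.coe_injective (by rw [hk, map_mul, map_pow])⟩

end IsUnitSq

section TwoTorsion

open ClassGroup

variable {M : Type*} [Field M] [NumberField M]

theorem mk0_eq_one_iff_isUnitSq {I : nonZeroDivisors (Ideal (𝓞 M))} {b : 𝓞 M}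
    (hI : (I : Ideal (𝓞 M)) ^ 2 = Ideal.span {b}) :
    mk0 I = 1 ↔ IsUnitSq (algebraMap (𝓞 M) M b) := by
  refine ⟨fun h => ?_, fun hb => ?_⟩
  · obtain ⟨c, hc⟩ := (mk0_eq_one_iff I.2).1 h
    rw [Ideal.submodule_span_eq] at hc
    have hc0 : c ≠ 0 := by
      rintro rfl
      exact nonZeroDivisors.ne_zero I.2 (by simpa using hc)
    rw [hc, Ideal.span_singleton_pow, Ideal.span_singleton_eq_span_singleton] at hI
    obtain ⟨u, rfl⟩ := hI
    exact ⟨u, algebraMap (𝓞 M) M c, by simpa using hc0, by simp [mul_comm]⟩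
  · obtain ⟨u, c, rfl⟩ := hb.exists_mul_sq_eq
    refine (mk0_eq_one_iff I.2).2 ⟨c, ?_⟩
    rw [mul_comm, Ideal.span_singleton_mul_right_unit u.isUnit, ← Ideal.span_singleton_pow] at hI
    exact (pow_left_inj two_ne_zero).1 hI

theorem exists_sq_eq_span_of_sq_eq_one {c : ClassGroup (𝓞 M)} (hc : c ^ 2 = 1) :
    ∃ (I : nonZeroDivisors (Ideal (𝓞 M))) (b : 𝓞 M), c = mk0 I ∧
      (I : Ideal (𝓞 M)) ^ 2 = Ideal.span {b} ∧ IsIdealSquare (algebraMap (𝓞 M) M b) := by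
  obtain ⟨I, rfl⟩ := mk0_surjective c
  have hc' : mk0 ⟨(I : Ideal (𝓞 M)) ^ 2, pow_mem I.2 2⟩ = 1 := by
    rw [← hc, ← map_pow]
    rfl
  obtain ⟨b, hb⟩ := (mk0_eq_one_iff _).1 hc'
  rw [Ideal.submodule_span_eq] at hb
  refine ⟨I, b, rfl, hb, .of_span_eq_sq ?_ hb.symm⟩
  rintro rfl
  exact pow_ne_zero 2 (nonZeroDivisors.ne_zero I.2) (by simpa using hb)

theorem eq_one_of_sq_eq_one_of_isUnitSq (H : ∀ a : M, IsIdealSquare a → IsUnitSq a)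
    {c : ClassGroup (𝓞 M)} (hc : c ^ 2 = 1) : c = 1 := by
  obtain ⟨I, b, rfl, hI, hb⟩ := exists_sq_eq_span_of_sq_eq_one hc
  exact (mk0_eq_one_iff_isUnitSq hI).2 (H _ hb)

theorem eq_one_of_sq_pow_eq_one_of_isUnitSq (H : ∀ a : M, IsIdealSquare a → IsUnitSq a) (n : ℕ)
    {c : ClassGroup (𝓞 M)} (hc : c ^ 2 ^ n = 1) : c = 1 := by
  induction n with
  | zero => simpa using hc
  | succ n ih => exact ih (eq_one_of_sq_eq_one_of_isUnitSq H (by rwa [← pow_mul, ← pow_succ]))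

theorem subsingleton_orderOf_eq_two_of_isUnitSq {x : M} (hx : x ≠ 0)
    (H : ∀ a : M, IsIdealSquare a → ∃ i : ℕ, IsUnitSq (a * x ^ i)) :
    {c : ClassGroup (𝓞 M) | orderOf c = 2}.Subsingleton := by
  intro c hc c' hc'
  obtain ⟨hc, hc₁⟩ := orderOf_eq_prime_iff.1 hc
  obtain ⟨hc', hc'₁⟩ := orderOf_eq_prime_iff.1 hc'
  obtain ⟨I, b, rfl, hI, hb⟩ := exists_sq_eq_span_of_sq_eq_one hc
  obtain ⟨I', b', rfl, hI', hb'⟩ := exists_sq_eq_span_of_sq_eq_one hc'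
  have odd_exponent {J : nonZeroDivisors (Ideal (𝓞 M))} {d : 𝓞 M}
      (hJ : (J : Ideal (𝓞 M)) ^ 2 = Ideal.span {d}) (hJ₁ : mk0 J ≠ 1) {i : ℕ}
      (hi : IsUnitSq (algebraMap (𝓞 M) M d * x ^ i)) : Odd i := by
    by_contra hodd
    refine hJ₁ ((mk0_eq_one_iff_isUnitSq hJ).2 (.of_sqRel ?_ hi))
    simpa using (SqRel.refl _).mul (SqRel.pow_even hx (Nat.not_odd_iff_even.1 hodd)).symm
  obtain ⟨i, hi⟩ := H _ hb
  obtain ⟨i', hi'⟩ := H _ hb'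
  have heven : Even (i + i') := (odd_exponent hI hc₁ hi).add_odd (odd_exponent hI' hc'₁ hi')
  have hmul : mk0 (I * I') = 1 := by
    refine (mk0_eq_one_iff_isUnitSq (b := b * b') ?_).2 (.of_sqRel ?_ (hi.mul hi'))
    · rw [Submonoid.coe_mul, mul_pow, hI, hI', Ideal.span_singleton_mul_span_singleton]
    · rw [map_mul, mul_mul_mul_comm, ← pow_add]
      simpa using (SqRel.refl _).mul (SqRel.pow_even hx heven).symm
  rw [map_mul, mul_eq_one_iff_eq_inv] at hmul
  rw [hmul, inv_eq_iff_mul_eq_one, ← sq, hc']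

end TwoTorsion

section Norm

open ClassGroup

variable {M L : Type*} [Field M] [NumberField M] [Field L] [NumberField L] [Algebra M L]

variable (M L) in
/-- The relative norm as a homomorphism of monoids of nonzero ideals. -/
def relNormHom : nonZeroDivisors (Ideal (𝓞 L)) →* nonZeroDivisors (Ideal (𝓞 M)) where
  toFun I := ⟨Ideal.relNorm (𝓞 M) (I : Ideal (𝓞 L)), mem_nonZeroDivisors_of_ne_zero fun h =>
    nonZeroDivisors.ne_zero I.2 (Ideal.relNorm_eq_bot_iff.1 h)⟩
  map_one' := by ext1; simp
  map_mul' I J := by ext1; simp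

theorem coe_relNormHom (I : nonZeroDivisors (Ideal (𝓞 L))) :
    (relNormHom M L I : Ideal (𝓞 M)) = Ideal.relNorm (𝓞 M) (I : Ideal (𝓞 L)) := rfl

theorem mk0_relNormHom_congr {I J : nonZeroDivisors (Ideal (𝓞 L))} (h : mk0 I = mk0 J) :
    mk0 (relNormHom M L I) = mk0 (relNormHom M L J) := by
  obtain ⟨x, y, hx, hy, e⟩ := mk0_eq_mk0_iff.1 h
  refine mk0_eq_mk0_iff.2 ⟨Algebra.intNorm (𝓞 M) (𝓞 L) x, Algebra.intNorm (𝓞 M) (𝓞 L) y,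
    Algebra.intNorm_ne_zero.2 hx, Algebra.intNorm_ne_zero.2 hy, ?_⟩
  rw [coe_relNormHom, coe_relNormHom, ← Ideal.relNorm_singleton, ← Ideal.relNorm_singleton,
    ← map_mul, ← map_mul, e]

variable (M L) in
/-- The norm map on ideal class groups. -/
def classGroupNorm : ClassGroup (𝓞 L) →* ClassGroup (𝓞 M) :=
  MonoidHom.mk' (fun c => mk0 (relNormHom M L (mk0_surjective c).choose)) fun a b => by
    rw [← map_mul, ← map_mul]
    apply mk0_relNormHom_congr
    rw [map_mul, (mk0_surjective a).choose_spec, (mk0_surjective b).choose_spec,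
      (mk0_surjective (a * b)).choose_spec]

theorem classGroupNorm_mk0 (I : nonZeroDivisors (Ideal (𝓞 L))) :
    classGroupNorm M L (mk0 I) = mk0 (relNormHom M L I) :=
  mk0_relNormHom_congr (mk0_surjective (mk0 I)).choose_spec

theorem finrank_ringOfIntegers : Module.finrank (𝓞 M) (𝓞 L) = Module.finrank M L :=
  (IsFractionRing.finrank_eq (𝓞 M) M (𝓞 L) L).symm

theorem classGroupNorm_extendedHom (c : ClassGroup (𝓞 M)) :
    classGroupNorm M L (extendedHom (𝓞 M) (𝓞 L) c) = c ^ Module.finrank M L := by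
  obtain ⟨I, rfl⟩ := mk0_surjective c
  rw [extendedHom_mk0, classGroupNorm_mk0, ← map_pow]
  congr 1
  ext1
  rw [coe_relNormHom, SubmonoidClass.coe_pow, ← finrank_ringOfIntegers]
  exact Ideal.relNorm_algebraMap ..

variable {θ : L} {d : M}

theorem map_relNorm_le_mul_map_conj (h : IsQuadExt θ d) (I : Ideal (𝓞 L)) :
    (Ideal.relNorm (𝓞 M) I).map (algebraMap (𝓞 M) (𝓞 L)) ≤
      I * I.map (RingOfIntegers.mapAlgEquiv h.conj) := by
  rw [Ideal.relNorm_apply, Ideal.map_span, Ideal.span_le]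
  rintro _ ⟨_, ⟨x, hx, rfl⟩, rfl⟩
  have hnorm : algebraMap (𝓞 M) (𝓞 L) (Algebra.intNorm (𝓞 M) (𝓞 L) x) =
      x * RingOfIntegers.mapAlgEquiv h.conj x := by
    apply RingOfIntegers.coe_injective
    rw [map_mul, ← IsScalarTower.algebraMap_apply (𝓞 M) (𝓞 L) L,
      IsScalarTower.algebraMap_apply (𝓞 M) M L, Algebra.algebraMap_intNorm (L := L),
      h.norm_eq_mul_conj]
    rfl
  rw [hnorm]
  exact Ideal.mul_mem_mul hx (Ideal.mem_map_of_mem _ hx)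

-- The inclusion of the previous lemma is an equality because both sides have the same absolute
-- norm.
theorem map_relNorm_eq_mul_map_conj (h : IsQuadExt θ d) (I : Ideal (𝓞 L)) :
    (Ideal.relNorm (𝓞 M) I).map (algebraMap (𝓞 M) (𝓞 L)) =
      I * I.map (RingOfIntegers.mapAlgEquiv h.conj) := by
  by_cases hI : I = ⊥
  · simp [hI]
  obtain ⟨J, hJ⟩ := Ideal.dvd_iff_le.2 (map_relNorm_le_mul_map_conj h I)
  have hconj : Ideal.absNorm (I.map (RingOfIntegers.mapAlgEquiv h.conj)) = Ideal.absNorm I := by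
    rw [← Ideal.absNorm_relNorm (𝓞 M), Ideal.relNorm_map_algEquiv, Ideal.absNorm_relNorm]
  have hnorm := congrArg Ideal.absNorm hJ
  rw [Ideal.absNorm_algebraMap, Ideal.absNorm_relNorm, finrank_ringOfIntegers, h.finrank_eq_two,
    map_mul, map_mul, hconj, ← pow_two] at hnorm
  have hI0 : Ideal.absNorm I ^ 2 ≠ 0 := pow_ne_zero 2 fun h0 => hI (Ideal.absNorm_eq_zero_iff.1 h0)
  rw [hJ, Ideal.absNorm_eq_one_iff.1 (mul_eq_left₀ hI0 |>.1 hnorm.symm), Ideal.mul_top]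

end Norm
section Different

theorem adjoin_eq_top_of_finrank_eq_two {M L : Type*} [Field M] [Field L] [Algebra M L]
    (hfin : Module.finrank M L = 2) {x : L} (hx : x ∉ (algebraMap M L).range) :
    Algebra.adjoin M {x} = ⊤ := by
  have := Subalgebra.isSimpleOrder_of_finrank_prime M L (hfin ▸ Nat.prime_two)
  refine (eq_bot_or_eq_top _).resolve_left fun h => hx ?_
  have hmem : x ∈ Algebra.adjoin M {x} := Algebra.self_mem_adjoin_singleton M x
  rwa [h, Algebra.mem_bot] at hmem

variable {M L : Type*} [Field M] [NumberField M] [Field L] [Algebra M L]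

theorem minpoly_ringOfIntegers_eq_of_quadratic {x : 𝓞 L} {t n : 𝓞 M}
    (hx : x ^ 2 - algebraMap (𝓞 M) (𝓞 L) t * x + algebraMap (𝓞 M) (𝓞 L) n = 0)
    (hnot : algebraMap (𝓞 L) L x ∉ (algebraMap M L).range) :
    minpoly (𝓞 M) x = .X ^ 2 + .C (-t) * .X + .C n := by
  have h_int : IsIntegral (𝓞 M) x := (RingOfIntegers.isIntegral x).tower_top
  set P : Polynomial (𝓞 M) := .X ^ 2 + .C (-t) * .X + .C n with hP
  have hPm : P.Monic := by
    rw [hP, add_assoc]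
    exact Polynomial.monic_X_pow_add (Polynomial.degree_linear_le.trans_lt (by norm_num))
  have hPd : P.natDegree ≤ 2 := by
    simpa [hP] using Polynomial.natDegree_quadratic_le (a := (1 : 𝓞 M)) (b := -t) (c := n)
  refine (Polynomial.eq_of_monic_of_dvd_of_natDegree_le (minpoly.monic h_int) hPm
    (minpoly.isIntegrallyClosed_dvd h_int ?_) (hPd.trans ?_)).symm
  · rw [← hx, hP]
    simp [sub_eq_add_neg]
  · refine (minpoly.two_le_natDegree_iff h_int).2 ?_
    rintro ⟨y, rfl⟩
    exact hnot ⟨algebraMap (𝓞 M) M y, by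
      rw [← IsScalarTower.algebraMap_apply, ← IsScalarTower.algebraMap_apply]⟩

theorem mem_differentIdeal_of_quadratic [NumberField L] (hfin : Module.finrank M L = 2)
    {x : 𝓞 L} {t n : 𝓞 M}
    (hx : x ^ 2 - algebraMap (𝓞 M) (𝓞 L) t * x + algebraMap (𝓞 M) (𝓞 L) n = 0)
    (hnot : algebraMap (𝓞 L) L x ∉ (algebraMap M L).range) :
    2 * x - algebraMap (𝓞 M) (𝓞 L) t ∈ differentIdeal (𝓞 M) (𝓞 L) := by
  have hmem := aeval_derivative_mem_differentIdeal (𝓞 M) M L x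
    (adjoin_eq_top_of_finrank_eq_two hfin hnot)
  rw [minpoly_ringOfIntegers_eq_of_quadratic hx hnot] at hmem
  simpa [sub_eq_add_neg, ← one_add_one_eq_two] using hmem

end Different

namespace IsQuadExt

variable {M L : Type*} [Field M] [NumberField M] [Field L] [NumberField L] [Algebra M L] {θ : L}

theorem exists_sqRel_of_mem_differentIdeal {d : M} (h : IsQuadExt θ d) {π₁ π₂ : 𝓞 M}
    (h₁ : Prime π₁) (h₂ : Prime π₂) {δ : 𝓞 L} (hδ : δ ∈ differentIdeal (𝓞 M) (𝓞 L))
    (hdvd : ∃ n : ℕ, δ ∣ algebraMap (𝓞 M) (𝓞 L) (π₁ * π₂) ^ n) {a : L}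
    (ha : IsIdealSquare a) (hN : SqRel (Algebra.norm M a) 1) :
    ∃ (g : M) (i₁ i₂ : ℕ), IsIdealSquare g ∧ SqRel a (algebraMap M L
      (g * algebraMap (𝓞 M) M π₁ ^ i₁ * algebraMap (𝓞 M) M π₂ ^ i₂)) := by
  obtain ⟨f, -, hf⟩ := hN
  rw [one_mul] at hf
  obtain ⟨g, k, -, hk, rfl⟩ := h.exists_mul_sq_of_norm_eq_sq ha.1 hf
  obtain ⟨i₁, i₂, hi⟩ := IsIdealSquare.descend h₁ h₂ hδ hdvd ((IsIdealSquare.mul_sq_iff hk).1 ha)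
  refine ⟨_, i₁, i₂, hi, ?_⟩
  have h0 : algebraMap (𝓞 M) M π₁ ^ i₁ * algebraMap (𝓞 M) M π₂ ^ i₂ ≠ 0 :=
    mul_ne_zero (pow_ne_zero _ (by simpa using h₁.ne_zero))
      (pow_ne_zero _ (by simpa using h₂.ne_zero))
  have e : SqRel (g * algebraMap (𝓞 M) M π₁ ^ i₁ * algebraMap (𝓞 M) M π₂ ^ i₂ *
      algebraMap (𝓞 M) M π₁ ^ i₁ * algebraMap (𝓞 M) M π₂ ^ i₂) g := ⟨_, h0, by ring⟩
  exact SqRel.trans ⟨k, hk, rfl⟩ (e.map (algebraMap M L)).symm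

theorem exists_sqRel_of_sqRel_norm_one {d : 𝓞 M} (h : IsQuadExt θ (algebraMap (𝓞 M) M d))
    {π₁ π₂ : 𝓞 M} (h₁ : Prime π₁) (h₂ : Prime π₂) (hdvd : ∃ n : ℕ, 2 * d ∣ (π₁ * π₂) ^ n)
    {a : L} (ha : IsIdealSquare a) (hN : SqRel (Algebra.norm M a) 1) :
    ∃ (g : M) (i₁ i₂ : ℕ), IsIdealSquare g ∧ SqRel a (algebraMap M L
      (g * algebraMap (𝓞 M) M π₁ ^ i₁ * algebraMap (𝓞 M) M π₂ ^ i₂)) := by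
  obtain ⟨s, hs, hs2⟩ := exists_ringOfIntegers_sq_eq (b := algebraMap (𝓞 M) (𝓞 L) d) (by
    rw [h.sq, ← IsScalarTower.algebraMap_apply, ← IsScalarTower.algebraMap_apply])
  have hδ := mem_differentIdeal_of_quadratic h.finrank_eq_two (x := s) (t := 0) (n := -d)
    (by simp [hs2]) (fun ⟨y, hy⟩ => h.notMem y (hy.trans hs))
  refine h.exists_sqRel_of_mem_differentIdeal h₁ h₂ hδ ?_ ha hN
  obtain ⟨n, e, he⟩ := hdvd
  refine ⟨n, s * algebraMap (𝓞 M) (𝓞 L) e, ?_⟩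
  rw [← map_pow, he]
  simp only [map_mul, ← hs2, map_ofNat, map_zero]
  ring

end IsQuadExt

theorem coe_unit_ringOfIntegers_rat (u : (𝓞 ℚ)ˣ) :
    algebraMap (𝓞 ℚ) ℚ u = 1 ∨ algebraMap (𝓞 ℚ) ℚ u = -1 := by
  rw [← Rat.ringOfIntegersEquiv_apply_coe]
  exact (Int.isUnit_iff.1 (u.isUnit.map Rat.ringOfIntegersEquiv)).imp
    (fun h => by simp [h]) (fun h => by simp [h])

theorem IsIdealSquare.exists_sqRel_neg_one_pow {a : ℚ} (ha : IsIdealSquare a) :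
    ∃ i : ℕ, SqRel a ((-1) ^ i) := by
  obtain ⟨h0, c, b, J, hc, hb, hJ⟩ := ha
  have := IsPrincipalIdealRing.of_surjective Rat.ringOfIntegersEquiv.symm
    Rat.ringOfIntegersEquiv.symm.surjective
  obtain ⟨j, rfl⟩ := (Submodule.isPrincipal_iff _).1 (IsPrincipalIdealRing.principal J)
  rw [Ideal.submodule_span_eq, Ideal.span_singleton_pow,
    Ideal.span_singleton_eq_span_singleton] at hJ
  obtain ⟨u, hu⟩ := hJ.symm
  have hj0 : algebraMap (𝓞 ℚ) ℚ j ≠ 0 := by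
    intro h
    rw [← hu, map_mul, map_pow, h] at hb
    simp [h0, hc] at hb
  have hs : SqRel a (algebraMap (𝓞 ℚ) ℚ u) :=
    SqRel.trans (SqRel.symm ⟨c, hc, rfl⟩) ⟨_, hj0, by rw [hb, ← hu, map_mul, map_pow, mul_comm]⟩
  rcases coe_unit_ringOfIntegers_rat u with h | h
  · exact ⟨0, by rwa [pow_zero, ← h]⟩
  · exact ⟨1, by rwa [pow_one, ← h]⟩
/-- `a` is positive under every real embedding. -/
def TotallyPositive {M : Type*} [Field M] (a : M) : Prop := ∀ φ : M →+* ℝ, 0 < φ a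

theorem TotallyPositive.of_sqRel {M : Type*} [Field M] {a b : M} (h : SqRel a b)
    (ha : TotallyPositive a) : TotallyPositive b :=
  fun φ => (h.map φ).pos_iff.1 (ha φ)

namespace IsQuadExt

variable {M L : Type*} [Field M] [Field L] [Algebra M L] {θ : L} {d : M}

theorem exists_real_lift (h : IsQuadExt θ d) {φ : M →+* ℝ} (hd : 0 ≤ φ d) :
    ∃ ψ : L →+* ℝ, ∀ x, ψ (algebraMap M L x) = φ x := by
  obtain ⟨ψ, hψ, -⟩ := h.exists_lift φ (√(φ d)) (Real.sq_sqrt hd)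
  exact ⟨ψ, hψ⟩

theorem totallyPositive_of_map (h : IsQuadExt θ d) (hd : ∀ φ : M →+* ℝ, 0 ≤ φ d) {a : M}
    (ha : TotallyPositive (algebraMap M L a)) : TotallyPositive a := by
  intro φ
  obtain ⟨ψ, hψ⟩ := h.exists_real_lift (hd φ)
  exact hψ a ▸ ha ψ

theorem totallyPositive_norm (h : IsQuadExt θ d) (hd : ∀ φ : M →+* ℝ, 0 ≤ φ d) {a : L}
    (ha : TotallyPositive a) : TotallyPositive (Algebra.norm M a) := by
  refine h.totallyPositive_of_map hd fun ψ => ?_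
  rw [h.norm_eq_mul_conj, map_mul]
  exact mul_pos (ha ψ) (ha (ψ.comp (h.conj : L →+* L)))

theorem totallyPositive_norm_of_neg (h : IsQuadExt θ d) (hd : ∀ φ : M →+* ℝ, φ d < 0) {a : L}
    (ha : a ≠ 0) : TotallyPositive (Algebra.norm M a) := by
  intro φ
  have : FiniteDimensional M L := .of_finrank_eq_succ h.finrank_eq_two
  have h0 : φ (Algebra.norm M a) ≠ 0 := (map_ne_zero φ).2 (Algebra.norm_ne_zero_iff.2 ha)
  refine lt_of_le_of_ne ?_ h0.symm
  obtain ⟨x, y, hxy⟩ := h.exists_norm_eq a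
  rw [hxy, map_sub, map_mul, map_pow, map_pow]
  nlinarith [sq_nonneg (φ x), mul_nonneg (neg_nonneg.2 (hd φ).le) (sq_nonneg (φ y))]

end IsQuadExt

section SplittingOfPrimes

variable {B : Type*} [Field B] [NumberField B] {r : ℕ} [Fact r.Prime]

theorem nonempty_ringHom_zmod_of_absNorm_eq {P : Ideal (𝓞 B)} (hP : Ideal.absNorm P = r) :
    Nonempty (𝓞 B →+* ZMod r) := by
  have hr : r.Prime := Fact.out
  have hcard : Nat.card (𝓞 B ⧸ P) = r := hP
  have : Finite (𝓞 B ⧸ P) := Nat.finite_of_card_ne_zero (hcard ▸ hr.ne_zero)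
  have := Fintype.ofFinite (𝓞 B ⧸ P)
  exact ⟨((ZMod.ringEquivOfPrime (𝓞 B ⧸ P) hr
    (Nat.card_eq_fintype_card.symm.trans hcard)).symm : _ →+* ZMod r).comp (Ideal.Quotient.mk P)⟩

theorem prime_natCast_of_isEmpty_ringHom_zmod (hfin : Module.finrank ℚ B = 2)
    (h : IsEmpty (𝓞 B →+* ZMod r)) : Prime (r : 𝓞 B) := by
  have hr : r.Prime := Fact.out
  have hr0 : (r : 𝓞 B) ≠ 0 := Nat.cast_ne_zero.2 hr.ne_zero
  have hN : Ideal.absNorm (Ideal.span {(r : 𝓞 B)}) = r ^ 2 := by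
    rw [Ideal.absNorm_span_natCast, RingOfIntegers.rank, hfin]
  have hne : Ideal.span {(r : 𝓞 B)} ≠ ⊤ := fun htop => by
    rw [Ideal.absNorm_eq_one_iff.2 htop] at hN
    exact (Nat.one_lt_pow two_ne_zero hr.one_lt).ne hN
  obtain ⟨P, hP, hle⟩ := Ideal.exists_le_maximal _ hne
  obtain ⟨k, hk, hPk⟩ := (Nat.dvd_prime_pow hr).1 (hN ▸ Ideal.absNorm_dvd_absNorm_of_le hle)
  obtain ⟨J, hJ⟩ := Ideal.dvd_iff_le.2 hle
  interval_cases k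
  · exact absurd (Ideal.absNorm_eq_one_iff.1 hPk) hP.ne_top
  · exact (h.false (nonempty_ringHom_zmod_of_absNorm_eq (hPk.trans (pow_one r))).some).elim
  · have hJ1 : J = 1 := by
      rw [Ideal.one_eq_top, ← Ideal.absNorm_eq_one_iff]
      rw [hJ, map_mul, hPk] at hN
      exact mul_left_cancel₀ (pow_ne_zero 2 hr.ne_zero) (hN.trans (mul_one _).symm)
    rw [← Ideal.span_singleton_prime hr0, hJ, hJ1, mul_one]
    exact hP.isPrime

end SplittingOfPrimes

theorem exists_ringOfIntegers_two_mul_eq_one_add {M : Type*} [Field M] [CharZero M] {s : M}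
    {c : ℕ} (h : s ^ 2 = 4 * c + 1) :
    ∃ y : 𝓞 M, 2 * algebraMap (𝓞 M) M y = 1 + s ∧ y ^ 2 = y + c := by
  have hy2 : ((1 + s) / 2) ^ 2 = (1 + s) / 2 + c := by
    field_simp
    linear_combination h
  have h_int : IsIntegral ℤ ((1 + s) / 2) :=
    ⟨.X ^ 2 + (.C (-1) * .X + .C (-(c : ℤ))),
      Polynomial.monic_X_pow_add (Polynomial.degree_linear_le.trans_lt (by norm_num)), by
      simp [hy2, ← sub_eq_add_neg]⟩
  obtain ⟨y, hy⟩ : ∃ y : 𝓞 M, algebraMap (𝓞 M) M y = (1 + s) / 2 := ⟨⟨_, h_int⟩, rfl⟩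
  refine ⟨y, by rw [hy, mul_div_cancel₀ _ two_ne_zero], RingOfIntegers.coe_injective ?_⟩
  rw [map_pow, map_add, map_natCast, hy, hy2]

theorem prime_natCast_ringOfIntegers_rat {p : ℕ} (hp : p.Prime) : Prime (p : 𝓞 ℚ) := by
  simpa using (MulEquiv.prime_iff (p := (p : ℤ)) Rat.ringOfIntegersEquiv.symm).2
    (Nat.prime_iff_prime_int.1 hp)

namespace IsQuadExt

section

variable {M L : Type*} [Field M] [Field L] [Algebra M L] {θ : L}

theorem exists_ringOfIntegers_sq_eq_and_norm_eq {d : 𝓞 M}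
    (h : IsQuadExt θ (algebraMap (𝓞 M) M d)) :
    ∃ s : 𝓞 L, s ^ 2 = algebraMap (𝓞 M) (𝓞 L) d ∧ ∀ a b : 𝓞 M, Algebra.norm M (algebraMap (𝓞 L) L
      (algebraMap (𝓞 M) (𝓞 L) a + algebraMap (𝓞 M) (𝓞 L) b * s)) =
        algebraMap (𝓞 M) M (a ^ 2 - d * b ^ 2) := by
  obtain ⟨s, hs, hs2⟩ := exists_ringOfIntegers_sq_eq (b := algebraMap (𝓞 M) (𝓞 L) d) (by
    rw [h.sq, ← IsScalarTower.algebraMap_apply, ← IsScalarTower.algebraMap_apply])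
  refine ⟨s, hs2, fun a b => ?_⟩
  rw [map_add, map_mul, hs, ← IsScalarTower.algebraMap_apply, ← IsScalarTower.algebraMap_apply,
    IsScalarTower.algebraMap_apply (𝓞 M) M L, IsScalarTower.algebraMap_apply (𝓞 M) M L,
    h.norm_coord, map_sub, map_mul, map_pow, map_pow]

theorem exists_unit_norm_eq_neg_one {d : 𝓞 M} (h : IsQuadExt θ (algebraMap (𝓞 M) M d))
    {a b : 𝓞 M} (hab : a ^ 2 - d * b ^ 2 = -1) :
    ∃ ε : (𝓞 L)ˣ, Algebra.norm M (algebraMap (𝓞 L) L ε) = -1 := by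
  obtain ⟨s, hs, hnorm⟩ := h.exists_ringOfIntegers_sq_eq_and_norm_eq
  set f := algebraMap (𝓞 M) (𝓞 L)
  have hmul : (f a + f b * s) * -(f a - f b * s) = 1 := by
    have := congrArg f hab
    simp only [map_sub, map_mul, map_pow, map_neg, map_one] at this
    linear_combination f b ^ 2 * hs - this
  refine ⟨.mkOfMulEqOne _ _ hmul, ?_⟩
  rw [Units.val_mkOfMulEqOne, hnorm, hab, map_neg, map_one]

end

variable {B : Type*} [Field B] [NumberField B] {p : ℕ} {s : B}

theorem prime_natCast_of_legendreSym_eq_neg_one (hB : IsQuadExt s (p : ℚ)) {r : ℕ}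
    [Fact r.Prime] (hr : legendreSym r p = -1) : Prime (r : 𝓞 B) := by
  refine prime_natCast_of_isEmpty_ringHom_zmod hB.finrank_eq_two ⟨fun f => ?_⟩
  obtain ⟨t, -, ht⟩ := exists_ringOfIntegers_sq_eq (c := s) (b := (p : 𝓞 B)) (by simp [hB.sq])
  refine (legendreSym.eq_neg_one_iff r).1 hr ⟨f t, ?_⟩
  rw [← pow_two, ← map_pow, ht, map_natCast, Int.cast_natCast]

theorem sq_eq_four_mul_add_one (hB : IsQuadExt s (p : ℚ)) (hp : p % 4 = 1) :
    s ^ 2 = 4 * (p / 4 : ℕ) + 1 := by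
  have h4 : p = 4 * (p / 4) + 1 := by omega
  rw [hB.sq, map_natCast]
  exact_mod_cast h4

theorem prime_two (hB : IsQuadExt s (p : ℚ)) (hp : p % 8 = 5) : Prime (2 : 𝓞 B) := by
  have hno : ∀ x : ZMod 2, x ^ 2 ≠ x + 1 := by decide
  have : Fact (Nat.Prime 2) := ⟨Nat.prime_two⟩
  refine prime_natCast_of_isEmpty_ringHom_zmod (r := 2) hB.finrank_eq_two ⟨fun f => ?_⟩
  obtain ⟨y, -, hy⟩ := exists_ringOfIntegers_two_mul_eq_one_add
    (hB.sq_eq_four_mul_add_one (by omega))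
  have hodd : ((p / 4 : ℕ) : ZMod 2) = 1 :=
    ZMod.natCast_eq_one_iff_odd.2 (Nat.odd_iff.2 (by omega))
  have hroot := congrArg f hy
  rw [map_pow, map_add, map_natCast, hodd] at hroot
  exact hno _ hroot

/-- The generator `√p` lies in the different because `(1 + √p) / 2` is integral. -/
theorem exists_sqrt_mem_differentIdeal (hB : IsQuadExt s (p : ℚ)) (hp : p % 4 = 1) :
    ∃ δ ∈ differentIdeal (𝓞 ℚ) (𝓞 B), δ ^ 2 = p := by
  have hs := hB.sq_eq_four_mul_add_one hp
  obtain ⟨y, hys, hy⟩ := exists_ringOfIntegers_two_mul_eq_one_add hs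
  refine ⟨_, mem_differentIdeal_of_quadratic (t := 1) (n := -((p / 4 : ℕ) : 𝓞 ℚ))
    hB.finrank_eq_two (x := y) ?_ ?_, ?_⟩
  · simp [hy]
  · rintro ⟨z, hz⟩
    refine hB.notMem (2 * z - 1) ?_
    rw [map_sub, map_mul, map_ofNat, hz, hys, map_one, add_sub_cancel_left]
  · refine RingOfIntegers.coe_injective ?_
    rw [map_pow, map_sub, map_mul, map_ofNat, hys, map_one, map_one, add_sub_cancel_left, hB.sq,
      map_natCast, map_natCast]

theorem exists_sqRel_neg_one_pow_of_norm (hB : IsQuadExt s (p : ℚ)) (hp : p.Prime)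
    (hp4 : p % 4 = 1) {a : B} (ha : IsIdealSquare a) (hN : SqRel (Algebra.norm ℚ a) 1) :
    ∃ i : ℕ, SqRel a ((-1) ^ i) := by
  have hprime := prime_natCast_ringOfIntegers_rat hp
  obtain ⟨δ, hδ, hδ2⟩ := hB.exists_sqrt_mem_differentIdeal hp4
  obtain ⟨g, i₁, i₂, hg, hr⟩ := hB.exists_sqRel_of_mem_differentIdeal hprime hprime hδ
    ⟨1, δ * p, by
      rw [pow_one, map_mul, map_natCast, ← mul_assoc, ← hδ2, pow_two]⟩ ha hN
  obtain ⟨i, hi⟩ := hg.exists_sqRel_neg_one_pow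
  have hps : SqRel (p : B) 1 := by
    rw [← map_natCast (algebraMap ℚ B), ← hB.sq]
    exact SqRel.sq hB.ne_zero
  refine ⟨i, hr.trans ?_⟩
  simpa using ((hi.map (algebraMap ℚ B)).mul (hps.pow i₁)).mul (hps.pow i₂)

variable {ε : (𝓞 B)ˣ}

theorem exists_sqRel_neg_one_pow_mul_unit_pow (hB : IsQuadExt s (p : ℚ)) (hp : p.Prime)
    (hp4 : p % 4 = 1) (hε : Algebra.norm ℚ (algebraMap (𝓞 B) B ε) = -1) {a : B}
    (ha : IsIdealSquare a) : ∃ i j : ℕ, SqRel a ((-1) ^ i * algebraMap (𝓞 B) B ε ^ j) := by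
  obtain ⟨i, hi⟩ := (ha.norm (M := ℚ)).exists_sqRel_neg_one_pow
  rcases Nat.even_or_odd i with he | ho
  · obtain ⟨j, hj⟩ := hB.exists_sqRel_neg_one_pow_of_norm hp hp4 ha
      (by rwa [he.neg_one_pow] at hi)
    exact ⟨j, 0, by simpa using hj⟩
  · obtain ⟨j, hj⟩ := hB.exists_sqRel_neg_one_pow_of_norm hp hp4
      (ha.mul (IsIdealSquare.unit ε)) (by
        rw [map_mul, hε]
        rw [ho.neg_one_pow] at hi
        simpa using hi.mul (SqRel.refl (-1)))
    exact ⟨j, 1, by simpa using hj.of_mul_right (by simp)⟩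

theorem norm_neg_one_pow_mul_unit_pow (hB : IsQuadExt s (p : ℚ))
    (hε : Algebra.norm ℚ (algebraMap (𝓞 B) B ε) = -1) (i j : ℕ) :
    Algebra.norm ℚ ((-1) ^ i * algebraMap (𝓞 B) B ε ^ j) = (-1) ^ j := by
  have h1 : Algebra.norm ℚ (-1 : B) = 1 := by
    simpa [hB.finrank_eq_two] using Algebra.norm_algebraMap (S := B) (-1 : ℚ)
  rw [map_mul, map_pow, map_pow, h1, hε, one_pow, one_mul]

theorem even_of_totallyPositive_unit (hB : IsQuadExt s (p : ℚ))
    (hε : Algebra.norm ℚ (algebraMap (𝓞 B) B ε) = -1) {i j : ℕ}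
    (h : TotallyPositive ((-1) ^ i * algebraMap (𝓞 B) B ε ^ j)) : Even i ∧ Even j := by
  have hp (φ : ℚ →+* ℝ) : 0 ≤ φ p := by simp
  have hj : Even j := by
    have hN := hB.totallyPositive_norm hp h (algebraMap ℚ ℝ)
    rw [hB.norm_neg_one_pow_mul_unit_pow hε] at hN
    by_contra hj
    rw [(Nat.not_even_iff_odd.1 hj).neg_one_pow] at hN
    norm_num at hN
  refine ⟨?_, hj⟩
  obtain ⟨ψ, -⟩ := hB.exists_real_lift (hp (algebraMap ℚ ℝ))
  have hψ := h ψ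
  by_contra hi
  rw [(Nat.not_even_iff_odd.1 hi).neg_one_pow, map_mul, map_neg, map_one, map_pow] at hψ
  linarith [hj.pow_nonneg (ψ (algebraMap (𝓞 B) B ε))]

theorem exists_unit_norm_rat_eq_neg_one (hB : IsQuadExt s (p : ℚ)) (hp : p.Prime)
    (hp4 : p % 4 = 1) : ∃ ε : (𝓞 B)ˣ, Algebra.norm ℚ (algebraMap (𝓞 B) B ε) = -1 := by
  obtain ⟨x, y, hxy⟩ := exists_sq_sub_mul_sq_eq_neg_one hp hp4
  rw [← map_natCast (algebraMap (𝓞 ℚ) ℚ)] at hB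
  exact hB.exists_unit_norm_eq_neg_one (a := x) (b := y)
    (mod_cast congrArg (Int.cast : ℤ → 𝓞 ℚ) hxy)

theorem isUnitSq_of_isIdealSquare (hB : IsQuadExt s (p : ℚ)) (hp : p.Prime) (hp4 : p % 4 = 1)
    {a : B} (ha : IsIdealSquare a) : IsUnitSq a := by
  obtain ⟨ε, hε⟩ := hB.exists_unit_norm_rat_eq_neg_one hp hp4
  obtain ⟨i, j, hr⟩ := hB.exists_sqRel_neg_one_pow_mul_unit_pow hp hp4 hε ha
  exact .of_sqRel hr ((IsUnitSq.neg_one.pow i).mul ((IsUnitSq.unit ε).pow j))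

theorem sqRel_one_of_totallyPositive (hB : IsQuadExt s (p : ℚ)) (hp : p.Prime)
    (hp4 : p % 4 = 1) {a : B} (ha : IsIdealSquare a) (hpos : TotallyPositive a) : SqRel a 1 := by
  obtain ⟨ε, hε⟩ := hB.exists_unit_norm_rat_eq_neg_one hp hp4
  obtain ⟨i, j, hr⟩ := hB.exists_sqRel_neg_one_pow_mul_unit_pow hp hp4 hε ha
  obtain ⟨hi, hj⟩ := hB.even_of_totallyPositive_unit hε (hpos.of_sqRel hr)
  rw [hi.neg_one_pow, one_mul] at hr
  exact hr.trans (SqRel.pow_even (by simp) hj)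

end IsQuadExt

theorem sq_sub_mul_sq_ne_of_legendreSym_eq_neg_one {q : ℕ} [Fact q.Prime] {r t : ℤ}
    (hr : legendreSym q r = -1) (ht : ¬(q : ℤ) ∣ t) {x y z : ℚ} (hz : z ≠ 0) :
    x ^ 2 - r * z ^ 2 ≠ q * t * y ^ 2 := by
  intro h
  set u := x / z
  set v := y / z * u.den
  have hden : (u.den : ℚ) ≠ 0 := mod_cast u.den_ne_zero
  have huv : ((u.num ^ 2 - r * u.den ^ 2 : ℤ) : ℚ) = q * t * v ^ 2 := by
    have hnum : (u.num : ℚ) = x / z * u.den := (Rat.mul_den_eq_num u).symm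
    push_cast
    rw [hnum, show v = y / z * u.den from rfl]
    field_simp
    linear_combination h
  have hndvd : ¬(q : ℤ) ∣ u.num ^ 2 - r * u.den ^ 2 := fun hdvd => by
    obtain ⟨hnum, hden⟩ := legendreSym.prime_dvd_of_eq_neg_one hr hdvd
    have hgcd : q ∣ u.num.natAbs.gcd u.den :=
      Nat.dvd_gcd (Int.natCast_dvd.1 hnum) (Int.natCast_dvd_natCast.1 hden)
    exact (Fact.out : q.Prime).one_lt.ne' (Nat.dvd_one.1 (u.reduced ▸ hgcd))
  have hv : v ≠ 0 := fun hv => hndvd <| by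
    rw [hv, zero_pow two_ne_zero, mul_zero, Int.cast_eq_zero] at huv
    exact huv ▸ dvd_zero _
  have hq : (q : ℚ) ≠ 0 := Nat.cast_ne_zero.2 (Fact.out : q.Prime).ne_zero
  have ht0 : (t : ℚ) ≠ 0 := Int.cast_ne_zero.2 fun h0 => ht (h0 ▸ dvd_zero _)
  -- The `q`-adic valuation of the left-hand side vanishes; that of the right-hand side is odd.
  have hval := congrArg (padicValRat q) huv
  rw [padicValRat.of_int, padicValInt.eq_zero_of_not_dvd hndvd,
    padicValRat.mul (mul_ne_zero hq ht0) (pow_ne_zero 2 hv), padicValRat.mul hq ht0,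
    padicValRat.self (Fact.out : q.Prime).one_lt, padicValRat.of_int,
    padicValInt.eq_zero_of_not_dvd ht, padicValRat.pow] at hval
  push_cast at hval
  lia

theorem exists_unit_mul_eq_two_mul {M : Type*} [Field M] [CharZero M] {x y : 𝓞 M} {u v : (𝓞 M)ˣ}
    (hx : x ^ 2 = 2 * u) (hy : y ^ 2 = 2 * v) : ∃ w : (𝓞 M)ˣ, x * y = 2 * w := by
  have hxy : (algebraMap (𝓞 M) M (x * y) / 2) ^ 2 = algebraMap (𝓞 M) M ↑(u * v) := by
    rw [div_pow, ← map_pow, mul_pow, hx, hy]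
    simp only [map_mul, map_ofNat, Units.val_mul]
    ring
  obtain ⟨w, hw, hw2⟩ := exists_ringOfIntegers_sq_eq hxy
  have hunit : IsUnit w := (isUnit_pow_iff two_ne_zero).1 (hw2 ▸ (u * v).isUnit)
  refine ⟨hunit.unit, RingOfIntegers.coe_injective ?_⟩
  rw [IsUnit.unit_spec, map_mul (algebraMap (𝓞 M) M) 2, hw, map_ofNat,
    mul_div_cancel₀ _ two_ne_zero]

theorem sqRel_two_of_sq_eq_two_mul {M : Type*} [Field M] [CharZero M] {x : 𝓞 M} {u : (𝓞 M)ˣ}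
    (hx : x ^ 2 = 2 * u) : SqRel (2 : M) (algebraMap (𝓞 M) M u) := by
  have hu : algebraMap (𝓞 M) M u ≠ 0 := by simp
  have hx' : algebraMap (𝓞 M) M x ^ 2 = 2 * algebraMap (𝓞 M) M u := by
    rw [← map_pow, hx, map_mul, map_ofNat]
  have hx0 : algebraMap (𝓞 M) M x ≠ 0 := fun h0 => by simp [h0] at hx'
  refine ⟨2 / algebraMap (𝓞 M) M x, div_ne_zero two_ne_zero hx0, ?_⟩
  rw [div_pow, hx']
  field_simp

namespace IsQuadExt

variable {M L : Type*} [Field M] [Field L] [Algebra M L] {θ : L}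

theorem exists_sq_eq_two_mul_unit {d : 𝓞 M} (h : IsQuadExt θ (algebraMap (𝓞 M) M d))
    {a b : 𝓞 M} {e : (𝓞 M)ˣ} (hab : a ^ 2 - d * b ^ 2 = 2 * e) :
    ∃ (x : 𝓞 L) (u : (𝓞 L)ˣ), x ^ 2 = 2 * u ∧
      Algebra.norm M (algebraMap (𝓞 L) L x) = 2 * algebraMap (𝓞 M) M e := by
  obtain ⟨s, hs, hnorm⟩ := h.exists_ringOfIntegers_sq_eq_and_norm_eq
  have habf := congrArg (algebraMap (𝓞 M) (𝓞 L)) hab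
  have hef := congrArg (algebraMap (𝓞 M) (𝓞 L)) e.inv_mul
  set f := algebraMap (𝓞 M) (𝓞 L)
  simp only [map_sub, map_mul, map_pow, map_ofNat, map_one] at habf hef
  have hmul : (f e + f d * f b ^ 2 + f a * f b * s) *
      (f ↑e⁻¹ ^ 2 * (f e + f d * f b ^ 2 - f a * f b * s)) = 1 := by
    linear_combination (f ↑e⁻¹ * f e + 1) * hef - (f ↑e⁻¹ * f a * f b) ^ 2 * hs -
      f ↑e⁻¹ ^ 2 * f d * f b ^ 2 * habf
  refine ⟨f a + f b * s, .mkOfMulEqOne _ _ hmul, ?_, ?_⟩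
  · rw [Units.val_mkOfMulEqOne]
    linear_combination f b ^ 2 * hs + habf
  · rw [hnorm, hab, map_mul, map_ofNat]

end IsQuadExt

namespace Cond1

variable {p q : ℕ} {B F : Type*} [Field B] [Field F] [Algebra B F] {sp : B} {sq : F}

theorem exists_norm_eq_two (H : Cond1 p q) (hF : IsQuadExt sq (q : B)) :
    ∃ (x : 𝓞 F) (u : (𝓞 F)ˣ), x ^ 2 = 2 * u ∧ Algebra.norm B (algebraMap (𝓞 F) F x) = 2 := by
  obtain ⟨a, b, hab⟩ := exists_sq_sub_mul_sq_eq_two H.2.1 H.q_mod_eight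
  rw [← map_natCast (algebraMap (𝓞 B) B)] at hF
  obtain ⟨x, u, hx, hN⟩ := hF.exists_sq_eq_two_mul_unit (a := a) (b := b) (e := 1) (by
    rw [Units.val_one, mul_one]
    exact_mod_cast congrArg (Int.cast : ℤ → 𝓞 B) hab)
  exact ⟨x, u, hx, by rw [hN, Units.val_one, map_one, mul_one]⟩

theorem exists_norm_eq_neg_two [CharZero B] (H : Cond1 p q) (hB : IsQuadExt sp (p : ℚ))
    (hF : IsQuadExt sq (q : B)) :
    ∃ (x : 𝓞 F) (u : (𝓞 F)ˣ), x ^ 2 = 2 * u ∧ Algebra.norm B (algebraMap (𝓞 F) F x) = -2 := by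
  obtain ⟨z, y, hzy⟩ := H.exists_mul_sq_sub_mul_sq_eq_neg_two
  obtain ⟨P, -, hP⟩ := exists_ringOfIntegers_sq_eq (c := sp) (b := (p : 𝓞 B)) (by simp [hB.sq])
  rw [← map_natCast (algebraMap (𝓞 B) B)] at hF
  obtain ⟨x, u, hx, hN⟩ := hF.exists_sq_eq_two_mul_unit (a := z * P) (b := y) (e := -1) (by
    rw [mul_pow, hP, mul_comm, Units.val_neg, Units.val_one, mul_neg, mul_one]
    exact_mod_cast congrArg (Int.cast : ℤ → 𝓞 B) hzy)
  exact ⟨x, u, hx, by rw [hN, Units.val_neg, Units.val_one, map_neg, map_one, mul_neg, mul_one]⟩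

theorem exists_unit_norm_eq_neg_one [CharZero B] [CharZero F] (H : Cond1 p q)
    (hB : IsQuadExt sp (p : ℚ)) (hF : IsQuadExt sq (q : B)) :
    ∃ μ : (𝓞 F)ˣ, Algebra.norm B (algebraMap (𝓞 F) F μ) = -1 := by
  obtain ⟨x, u, hx, hNx⟩ := H.exists_norm_eq_two hF
  obtain ⟨y, v, hy, hNy⟩ := H.exists_norm_eq_neg_two hB hF
  obtain ⟨μ, hμ⟩ := exists_unit_mul_eq_two_mul hx hy
  have hN2 : Algebra.norm B (2 : F) = 2 ^ 2 := by
    rw [← map_ofNat (algebraMap B F), Algebra.norm_algebraMap, hF.finrank_eq_two]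
  refine ⟨μ, mul_left_cancel₀ (pow_ne_zero 2 (two_ne_zero (α := B))) ?_⟩
  calc (2 : B) ^ 2 * Algebra.norm B (algebraMap (𝓞 F) F μ)
      = Algebra.norm B (algebraMap (𝓞 F) F (x * y)) := by rw [hμ, map_mul, map_mul, map_ofNat, hN2]
    _ = 2 * -2 := by rw [map_mul, map_mul, hNx, hNy]
    _ = 2 ^ 2 * -1 := by norm_num

/-- Taking norms down to `ℚ` gives `N(k)² + (…)² q = (…)²` for odd `j`, which `q ≡ 3 mod 4`
excludes. -/
theorem even_of_sqRel_norm [Fact q.Prime] [NumberField B] (H : Cond1 p q)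
    (hB : IsQuadExt sp (p : ℚ)) (hF : IsQuadExt sq (q : B)) {ε : (𝓞 B)ˣ}
    (hε : Algebra.norm ℚ (algebraMap (𝓞 B) B ε) = -1) {a : F} {i j : ℕ}
    (h : SqRel (Algebra.norm B a) ((-1) ^ i * algebraMap (𝓞 B) B ε ^ j)) : Even j := by
  by_contra hj
  obtain ⟨k, hk, hNa⟩ := h
  obtain ⟨X, Y, hXY⟩ := hF.exists_norm_eq a
  obtain ⟨x, x', rfl⟩ := hB.span X
  obtain ⟨y, y', rfl⟩ := hB.span Y
  have hN : Algebra.norm ℚ (Algebra.norm B a) = -Algebra.norm ℚ k ^ 2 := by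
    rw [hNa, map_mul, map_pow, hB.norm_neg_one_pow_mul_unit_pow hε,
      (Nat.not_even_iff_odd.1 hj).neg_one_pow, neg_one_mul]
  have hcoord : Algebra.norm B a =
      algebraMap ℚ B (x ^ 2 + p * x' ^ 2 - q * (y ^ 2 + p * y' ^ 2)) +
      algebraMap ℚ B (2 * x * x' - q * (2 * y * y')) * sp := by
    have hsp : sp ^ 2 = algebraMap ℚ B p := hB.sq
    rw [hXY]
    simp only [map_add, map_sub, map_mul, map_pow, map_natCast, map_ofNat] at hsp ⊢
    linear_combination (algebraMap ℚ B x' ^ 2 - q * algebraMap ℚ B y' ^ 2) * hsp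
  rw [hcoord, hB.norm_coord] at hN
  have hq1 : ¬(q : ℤ) ∣ 1 := (Nat.prime_iff_prime_int.1 H.2.1).not_dvd_one
  refine sq_sub_mul_sq_ne_of_legendreSym_eq_neg_one H.legendreSym_q_neg_one hq1
    (x := x ^ 2 - p * x' ^ 2 + q * (y ^ 2 - p * y' ^ 2)) (y := 2 * (x * y - p * (x' * y')))
    (Algebra.norm_ne_zero_iff.2 hk) ?_
  push_cast
  linear_combination hN

end Cond1

section IrreducibleNorm

variable {M L : Type*} [Field M] [Field L] [NumberField M] [NumberField L] [Algebra M L]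

theorem eq_top_of_relNorm_eq_top {I : Ideal (𝓞 L)} (hI : Ideal.relNorm (𝓞 M) I = ⊤) : I = ⊤ := by
  have hle := Ideal.relNorm_le_comap (𝓞 M) I
  rwa [hI, top_le_iff, Ideal.comap_eq_top_iff] at hle

theorem irreducible_of_irreducible_relNorm {I : Ideal (𝓞 L)}
    (hI : Irreducible (Ideal.relNorm (𝓞 M) I)) : Irreducible I := by
  have : IsLocalHom (Ideal.relNorm (𝓞 M) (S := 𝓞 L)) :=
    ⟨fun J hJ => Ideal.isUnit_iff.2 (eq_top_of_relNorm_eq_top (Ideal.isUnit_iff.1 hJ))⟩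
  exact hI.of_map

theorem prime_of_prime_norm {x : 𝓞 L} {π : 𝓞 M} (hπ : Prime π)
    (h : Algebra.norm M (algebraMap (𝓞 L) L x) = algebraMap (𝓞 M) M π) : Prime x := by
  have hnorm : Ideal.relNorm (𝓞 M) (Ideal.span {x}) = Ideal.span {π} := by
    rw [Ideal.relNorm_singleton]
    congr 2
    exact RingOfIntegers.coe_injective ((Algebra.algebraMap_intNorm (L := L) x).trans h)
  have hirr : Irreducible (Ideal.span {x}) :=
    irreducible_of_irreducible_relNorm (hnorm ▸ irreducible_span_singleton_of_prime hπ)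
  rw [← Ideal.span_singleton_prime fun hx => hirr.ne_zero (Ideal.span_singleton_eq_bot.2 hx)]
  exact Ideal.isPrime_of_prime hirr.prime

end IrreducibleNorm

section

variable {a : ℚ}

theorem IsIdealSquare.isUnitSq_rat (ha : IsIdealSquare a) : IsUnitSq a := by
  obtain ⟨i, hi⟩ := ha.exists_sqRel_neg_one_pow
  exact .of_sqRel hi (IsUnitSq.neg_one.pow i)

theorem IsIdealSquare.sqRel_one_rat (ha : IsIdealSquare a) (hpos : TotallyPositive a) :
    SqRel a 1 := by
  obtain ⟨i, hi⟩ := ha.exists_sqRel_neg_one_pow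
  rcases Nat.even_or_odd i with heven | hodd
  · rwa [heven.neg_one_pow] at hi
  · have := hpos.of_sqRel hi (Rat.castHom ℝ)
    norm_num [hodd.neg_one_pow] at this

end

namespace IsQuadExt

section TotallyImaginary

variable {M L : Type*} [Field M] [Field L] [NumberField M] [NumberField L] [Algebra M L] {θ : L}

theorem exists_isUnitSq_and_sqRel (hM : ∀ g : M, IsIdealSquare g → IsUnitSq g)
    (hMpos : ∀ g : M, IsIdealSquare g → TotallyPositive g → SqRel g 1) {d : 𝓞 M}
    (h : IsQuadExt θ (algebraMap (𝓞 M) M d)) (hd : ∀ φ : M →+* ℝ, φ (algebraMap (𝓞 M) M d) < 0)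
    {π₁ π₂ : 𝓞 M} (h₁ : Prime π₁) (h₂ : Prime π₂) (hdvd : ∃ n : ℕ, 2 * d ∣ (π₁ * π₂) ^ n)
    {a : L} (ha : IsIdealSquare a) :
    ∃ (b : L) (i₁ i₂ : ℕ), IsUnitSq b ∧ SqRel a
      (b * algebraMap M L (algebraMap (𝓞 M) M π₁) ^ i₁ *
        algebraMap M L (algebraMap (𝓞 M) M π₂) ^ i₂) := by
  have hN := hMpos _ ha.norm (h.totallyPositive_norm_of_neg hd ha.1)
  obtain ⟨g, i₁, i₂, hg, hr⟩ := h.exists_sqRel_of_sqRel_norm_one h₁ h₂ hdvd ha hN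
  exact ⟨algebraMap M L g, i₁, i₂, (hM g hg).map, by simpa only [map_mul, map_pow] using hr⟩

theorem isUnitSq_of_neg_two (hM : ∀ g : M, IsIdealSquare g → IsUnitSq g)
    (hMpos : ∀ g : M, IsIdealSquare g → TotallyPositive g → SqRel g 1)
    (h : IsQuadExt θ (-2 : M)) (h2 : Prime (2 : 𝓞 M)) {a : L} (ha : IsIdealSquare a) :
    IsUnitSq a := by
  have h' : IsQuadExt θ (algebraMap (𝓞 M) M (-2)) := by rwa [map_neg, map_ofNat]
  obtain ⟨b, i₁, i₂, hb, hr⟩ := h'.exists_isUnitSq_and_sqRel hM hMpos (by simp [map_ofNat]) h2 h2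
    ⟨1, by norm_num⟩ ha
  have hθ : IsUnitSq (2 : L) := .of_sqRel ⟨θ, h.ne_zero, by simp [h.sq, map_ofNat]⟩ .neg_one
  rw [map_ofNat, map_ofNat] at hr
  exact .of_sqRel hr ((hb.mul (hθ.pow i₁)).mul (hθ.pow i₂))

theorem exists_isUnitSq_mul_two_pow (hM : ∀ g : M, IsIdealSquare g → IsUnitSq g)
    (hMpos : ∀ g : M, IsIdealSquare g → TotallyPositive g → SqRel g 1) {q : ℕ}
    (h : IsQuadExt θ (-(2 * q) : M)) (h2 : Prime (2 : 𝓞 M)) (hq : Prime (q : 𝓞 M)) {a : L}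
    (ha : IsIdealSquare a) : ∃ i : ℕ, IsUnitSq (a * 2 ^ i) := by
  have h' : IsQuadExt θ (algebraMap (𝓞 M) M (-(2 * q))) := by
    rwa [map_neg, map_mul, map_ofNat, map_natCast]
  have hq0 : 0 < q := Nat.pos_of_ne_zero fun h0 => hq.ne_zero (by rw [h0, Nat.cast_zero])
  obtain ⟨b, i₁, i₂, hb, hr⟩ := h'.exists_isUnitSq_and_sqRel hM hMpos
    (by simp [map_ofNat, hq0]) h2 hq
    ⟨2, -q, by ring⟩ ha
  rw [map_ofNat, map_ofNat, map_natCast, map_natCast] at hr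
  have hq2 : SqRel (q : L) (-1 * 2) :=
    .of_mul_right two_ne_zero ⟨θ, h.ne_zero, by simp [h.sq, map_ofNat, mul_comm]⟩
  have hr' := hr.trans ((SqRel.refl _).mul (hq2.pow i₂))
  rw [mul_pow] at hr'
  refine ⟨i₁ + i₂, IsUnitSq.mul_pow_of_sqRel (b := b * (-1) ^ i₂) ?_ two_ne_zero
    (hb.mul (IsUnitSq.neg_one.pow i₂))⟩
  convert hr' using 1
  ring

theorem exists_unit_norm_eq_of_sq_eq (h : IsQuadExt θ (-2 : M)) {α : 𝓞 M} {u : (𝓞 M)ˣ}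
    (hα : α ^ 2 = 2 * u) :
    ∃ v : (𝓞 L)ˣ, Algebra.norm M (algebraMap (𝓞 L) L v) = algebraMap (𝓞 M) M u := by
  have hα' : algebraMap (𝓞 M) M α ^ 2 = 2 * algebraMap (𝓞 M) M u := by
    rw [← map_pow, hα, map_mul, map_ofNat]
  have hθ : θ ^ 2 = -2 := by rw [h.sq, map_neg, map_ofNat]
  have hsq : (algebraMap M L (algebraMap (𝓞 M) M α) / θ) ^ 2 =
      algebraMap (𝓞 L) L (algebraMap (𝓞 M) (𝓞 L) ↑(-u)) := by
    rw [div_pow, ← map_pow, hα', hθ, ← IsScalarTower.algebraMap_apply,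
      IsScalarTower.algebraMap_apply (𝓞 M) M L, Units.val_neg, map_neg, map_neg, map_mul,
      map_ofNat]
    ring
  obtain ⟨v, hv, hv2⟩ := exists_ringOfIntegers_sq_eq hsq
  have hunit : IsUnit v :=
    (isUnit_pow_iff two_ne_zero).1 (hv2 ▸ (-u).isUnit.map (algebraMap (𝓞 M) (𝓞 L)))
  refine ⟨hunit.unit, ?_⟩
  have hcoord : algebraMap (𝓞 L) L v =
      algebraMap M L 0 + algebraMap M L (-algebraMap (𝓞 M) M α / 2) * θ := by
    rw [hv, div_eq_iff h.ne_zero]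
    simp only [map_zero, map_div₀, map_neg, map_ofNat]
    linear_combination algebraMap M L (algebraMap (𝓞 M) M α) / 2 * hθ
  rw [IsUnit.unit_spec, hcoord, h.norm_coord]
  linear_combination hα' / 2

end TotallyImaginary

end IsQuadExt

namespace IsQuadExt

variable {M L : Type*} [Field M] [Field L] [Algebra M L] {θ : L} {d : M}

theorem even_of_totallyPositive_map_mul_pow (h : IsQuadExt θ d) (hd : ∀ φ : M →+* ℝ, 0 ≤ φ d)
    (φ : M →+* ℝ) {x : L} (hx : Algebra.norm M x = -1) {b : M} {k : ℕ}
    (hpos : TotallyPositive (algebraMap M L b * x ^ k)) : Even k := by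
  by_contra hk
  have hN := h.totallyPositive_norm hd hpos φ
  rw [map_mul, map_pow, hx, (Nat.not_even_iff_odd.1 hk).neg_one_pow, Algebra.norm_algebraMap,
    h.finrank_eq_two, mul_neg_one, map_neg, map_pow] at hN
  nlinarith [sq_nonneg (φ b)]

end IsQuadExt

namespace Cond1

variable {p q : ℕ} {B F : Type*} [Field B] [NumberField B] [Field F] [NumberField F] [Algebra B F]
  {sp : B} {sq : F}

theorem isUnitSq_of_isIdealSquare (H : Cond1 p q) (hB : IsQuadExt sp (p : ℚ)) (a : B)
    (ha : IsIdealSquare a) : IsUnitSq a :=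
  hB.isUnitSq_of_isIdealSquare H.1 H.2.2.1 ha

theorem sqRel_one_of_totallyPositive (H : Cond1 p q) (hB : IsQuadExt sp (p : ℚ)) (a : B)
    (ha : IsIdealSquare a) (hpos : TotallyPositive a) : SqRel a 1 :=
  hB.sqRel_one_of_totallyPositive H.1 H.2.2.1 ha hpos

theorem prime_natCast (H : Cond1 p q) [Fact q.Prime] (hB : IsQuadExt sp (p : ℚ)) :
    Prime (q : 𝓞 B) :=
  hB.prime_natCast_of_legendreSym_eq_neg_one H.legendreSym_q_p

variable {ε : (𝓞 B)ˣ} {μ : (𝓞 F)ˣ}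

theorem exists_sqRel_of_isIdealSquare (H : Cond1 p q) [Fact q.Prime] (hB : IsQuadExt sp (p : ℚ))
    (hF : IsQuadExt sq (q : B)) (hε : Algebra.norm ℚ (algebraMap (𝓞 B) B ε) = -1)
    (hμ : Algebra.norm B (algebraMap (𝓞 F) F μ) = -1) {a : F} (ha : IsIdealSquare a) :
    ∃ i j k l : ℕ, SqRel a (algebraMap B F ((-1) ^ i * algebraMap (𝓞 B) B ε ^ j * 2 ^ l) *
      algebraMap (𝓞 F) F μ ^ k) := by
  obtain ⟨i, j, hN⟩ := hB.exists_sqRel_neg_one_pow_mul_unit_pow H.1 H.2.2.1 hε ha.norm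
  have hj := H.even_of_sqRel_norm hB hF hε hN
  have hεj : SqRel (algebraMap (𝓞 B) B ε ^ j) 1 := SqRel.pow_even (by simp) hj
  have hN' : SqRel (Algebra.norm B (a * algebraMap (𝓞 F) F ↑(μ ^ i))) 1 := by
    rw [Units.val_pow_eq_pow_val, map_pow, map_mul, map_pow, hμ]
    have := (hN.trans ((SqRel.refl _).mul hεj)).mul (SqRel.refl ((-1 : B) ^ i))
    rw [mul_one] at this
    exact this.trans (SqRel.mul_self (by simp))
  have hF' : IsQuadExt sq (algebraMap (𝓞 B) B (q : 𝓞 B)) := by rwa [map_natCast]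
  obtain ⟨g, i₁, i₂, hg, hr⟩ := hF'.exists_sqRel_of_sqRel_norm_one
    (hB.prime_two H.p_mod_eight) (H.prime_natCast hB) ⟨1, by rw [pow_one]⟩
    (ha.mul (IsIdealSquare.unit (μ ^ i))) hN'
  obtain ⟨i', j', hij⟩ := hB.exists_sqRel_neg_one_pow_mul_unit_pow H.1 H.2.2.1 hε hg
  refine ⟨i', j', i, i₁, ?_⟩
  have hq : SqRel (q : F) 1 := ⟨sq, hF.ne_zero, by rw [hF.sq, map_natCast, one_mul]⟩
  have hr' := hr.trans (((hij.mul (SqRel.refl _)).mul (SqRel.refl _)).map (algebraMap B F))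
  simp only [map_mul, map_pow, map_ofNat, map_natCast, Units.val_pow_eq_pow_val] at hr' ⊢
  have hq' := SqRel.of_mul_right (by simp) (hr'.trans ((SqRel.refl _).mul (hq.pow i₂)))
  rwa [one_pow, mul_one] at hq'

theorem isUnitSq_of_isIdealSquare_real (H : Cond1 p q) (hB : IsQuadExt sp (p : ℚ))
    (hF : IsQuadExt sq (q : B)) {a : F} (ha : IsIdealSquare a) : IsUnitSq a := by
  have : Fact q.Prime := ⟨H.2.1⟩
  obtain ⟨ε, hε⟩ := hB.exists_unit_norm_rat_eq_neg_one H.1 H.2.2.1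
  obtain ⟨μ, hμ⟩ := H.exists_unit_norm_eq_neg_one hB hF
  obtain ⟨α, u, hα, -⟩ := H.exists_norm_eq_two hF
  obtain ⟨i, j, k, l, hr⟩ := H.exists_sqRel_of_isIdealSquare hB hF hε hμ ha
  refine .of_sqRel hr ?_
  simp only [map_mul, map_pow, map_neg, map_one, map_ofNat]
  exact (((IsUnitSq.neg_one.pow i).mul ((IsUnitSq.unit ε).map.pow j)).mul
    (IsUnitSq.pow l ⟨u, sqRel_two_of_sq_eq_two_mul hα⟩)).mul ((IsUnitSq.unit μ).pow k)

theorem exists_sqRel_two_pow_of_totallyPositive (H : Cond1 p q) (hB : IsQuadExt sp (p : ℚ))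
    (hF : IsQuadExt sq (q : B)) {a : F} (ha : IsIdealSquare a) (hpos : TotallyPositive a) :
    ∃ l : ℕ, SqRel a (2 ^ l) := by
  have : Fact q.Prime := ⟨H.2.1⟩
  obtain ⟨ε, hε⟩ := hB.exists_unit_norm_rat_eq_neg_one H.1 H.2.2.1
  obtain ⟨μ, hμ⟩ := H.exists_unit_norm_eq_neg_one hB hF
  obtain ⟨i, j, k, l, hr⟩ := H.exists_sqRel_of_isIdealSquare hB hF hε hμ ha
  obtain ⟨φ, -⟩ := hB.exists_real_lift (φ := Rat.castHom ℝ) (by simp)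
  have hq (φ : B →+* ℝ) : 0 ≤ φ q := by simp
  have hk := hF.even_of_totallyPositive_map_mul_pow hq φ hμ (hpos.of_sqRel hr)
  have hr' := hr.trans ((SqRel.refl _).mul (SqRel.pow_even (by simp) hk))
  rw [mul_one] at hr'
  have hposB := hF.totallyPositive_of_map hq (hpos.of_sqRel hr')
  obtain ⟨hi, hj⟩ := hB.even_of_totallyPositive_unit hε (i := i) (j := j) fun φ => by
    have := hposB φ
    rw [map_mul, map_pow φ 2, map_ofNat] at this
    exact pos_of_mul_pos_left this (by positivity)
  have hεj : SqRel (algebraMap (𝓞 B) B ε ^ j) 1 := SqRel.pow_even (by simp) hj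
  have hmap := ((hεj.mul (SqRel.refl (2 ^ l))).map (algebraMap B F))
  rw [hi.neg_one_pow, one_mul] at hr'
  rw [one_mul, map_pow _ 2, map_ofNat] at hmap
  exact ⟨l, hr'.trans hmap⟩

theorem exists_isUnitSq_mul_pow {K : Type*} [Field K] [NumberField K] [Algebra F K]
    (H : Cond1 p q) (hB : IsQuadExt sp (p : ℚ)) (hF : IsQuadExt sq (q : B)) {w : K}
    (hK : IsQuadExt w (-2 : F)) {x : 𝓞 F} {V : (𝓞 F)ˣ} (hxV : x ^ 2 = 2 * V)
    (hx : Algebra.norm B (algebraMap (𝓞 F) F x) = -2) {a : K} (ha : IsIdealSquare a) :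
    ∃ i : ℕ, IsUnitSq (a * algebraMap F K (algebraMap (𝓞 F) F x) ^ i) := by
  obtain ⟨α, u, hα, -⟩ := H.exists_norm_eq_two hF
  obtain ⟨v, hv⟩ := hK.exists_unit_norm_eq_of_sq_eq hα
  obtain ⟨l, hl⟩ := H.exists_sqRel_two_pow_of_totallyPositive hB hF (ha.norm (M := F))
    (hK.totallyPositive_norm_of_neg (by simp [map_ofNat]) ha.1)
  have hN : SqRel (Algebra.norm F (a * algebraMap (𝓞 K) K ↑(v ^ l))) 1 := by
    rw [Units.val_pow_eq_pow_val, map_pow, map_mul, map_pow, hv]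
    exact (hl.mul ((sqRel_two_of_sq_eq_two_mul hα).symm.pow l)).trans (SqRel.mul_self (by simp))
  have hxprime : Prime x := prime_of_prime_norm (π := -2) (hB.prime_two H.p_mod_eight).neg
    (by rw [hx, map_neg, map_ofNat])
  have hK' : IsQuadExt w (algebraMap (𝓞 F) F (-2)) := by rwa [map_neg, map_ofNat]
  obtain ⟨g, i₁, i₂, hg, hr⟩ := hK'.exists_sqRel_of_sqRel_norm_one hxprime hxprime
    ⟨2, -(V : 𝓞 F) ^ 2, by linear_combination (x ^ 2 + 2 * V) * hxV⟩
    (ha.mul (IsIdealSquare.unit (v ^ l))) hN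
  have hr' := SqRel.of_mul_right (by simp) hr
  have hgv := ((H.isUnitSq_of_isIdealSquare_real hB hF hg).map (L := K)).mul
    (IsUnitSq.unit (v ^ l))
  refine ⟨i₁ + i₂, IsUnitSq.mul_pow_of_sqRel ?_ (by simpa using hxprime.ne_zero) hgv⟩
  convert hr' using 1
  simp only [map_mul, map_pow]
  ring

end Cond1

section RamificationAtTwo

theorem span_pair_sq_eq_span_two {R : Type*} [CommRing R] {s c : R} (hs : s ^ 2 = 2 * (1 + 2 * c)) :
    Ideal.span {2, s} ^ 2 = Ideal.span {2} := by
  have h2 : (2 : R) ∈ Ideal.span {2, s} := Ideal.subset_span (by simp)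
  have h3 : s ∈ Ideal.span {2, s} := Ideal.subset_span (by simp)
  rw [pow_two]
  refine le_antisymm ?_ ((Ideal.span_singleton_le_iff_mem _).2 ?_)
  · rw [Ideal.span_pair_mul_span_pair, Ideal.span_le]
    rintro y (rfl | rfl | rfl | rfl)
    · exact Ideal.mem_span_singleton.2 ⟨2, rfl⟩
    · exact Ideal.mem_span_singleton.2 ⟨s, rfl⟩
    · exact Ideal.mem_span_singleton.2 ⟨s, mul_comm _ _⟩
    · exact Ideal.mem_span_singleton.2 ⟨1 + 2 * c, by rw [← pow_two, hs]⟩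
  · convert sub_mem (Ideal.mul_mem_mul h3 h3)
      (Ideal.mul_mem_left _ c (Ideal.mul_mem_mul h2 h2)) using 1
    linear_combination -hs

namespace IsQuadExt

theorem exists_sq_eq_span_two {k₀ : Type*} [Field k₀] [NumberField k₀] {q : ℕ} {s₀ : k₀}
    (h : IsQuadExt s₀ (-(2 * q) : ℚ)) (hq : Odd q) :
    ∃ T : nonZeroDivisors (Ideal (𝓞 k₀)), (T : Ideal (𝓞 k₀)) ^ 2 = Ideal.span {2} := by
  obtain ⟨c, rfl⟩ := hq
  obtain ⟨s, -, hs⟩ := exists_ringOfIntegers_sq_eq (b := 2 * (1 + 2 * (-(c + 1) : 𝓞 k₀)))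
    (c := s₀) (by
      rw [h.sq]
      simp only [map_neg, map_mul, map_ofNat, map_natCast, map_add, map_one]
      push_cast
      ring)
  have hT := span_pair_sq_eq_span_two hs
  refine ⟨⟨_, mem_nonZeroDivisors_of_ne_zero fun h0 => ?_⟩, hT⟩
  rw [show Ideal.span {2, s} = 0 from h0, zero_pow two_ne_zero, eq_comm, Ideal.zero_eq_bot,
    Ideal.span_singleton_eq_bot] at hT
  exact two_ne_zero hT

theorem eq_zero_of_map_sq_lt_one {B : Type*} [Field B] [NumberField B] {θ : B} {d : ℚ}
    (h : IsQuadExt θ d) (hd : 0 ≤ d) {x : 𝓞 B}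
    (hx : ∀ φ : B →+* ℝ, φ (algebraMap (𝓞 B) B x) ^ 2 < 1) : x = 0 := by
  obtain ⟨φ, hφ⟩ := h.exists_real_lift (φ := Rat.castHom ℝ) (by simpa using hd)
  set y := algebraMap (𝓞 B) B x
  have hN : ((Algebra.norm ℤ x : ℤ) : ℝ) = φ y * φ (h.conj y) := by
    rw [← map_mul, ← h.norm_eq_mul_conj, hφ, ← Algebra.coe_norm_int]
    simp
  have hlt : ((Algebra.norm ℤ x : ℤ) : ℝ) ^ 2 < 1 := by
    rw [hN, mul_pow]
    exact mul_lt_one_of_nonneg_of_lt_one_left (sq_nonneg _) (hx φ)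
      (hx (φ.comp (h.conj : B →+* B))).le
  have hsq : Algebra.norm ℤ x ^ 2 < 1 := mod_cast hlt
  exact Algebra.norm_eq_zero_iff.1 (Int.abs_lt_one_iff.1 ((sq_lt_one_iff_abs_lt_one _).1 hsq))

theorem exists_ringOfIntegers_eq_two_mul {M L : Type*} [Field M] [Field L] [Algebra M L] {θ : L}
    {d : M} (h : IsQuadExt θ d) {w : 𝓞 L} {a b : M}
    (hw : algebraMap (𝓞 L) L w = algebraMap M L a + algebraMap M L b * θ) :
    ∃ r : 𝓞 M, algebraMap (𝓞 M) M r = 2 * a := by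
  have hint : IsIntegral ℤ (algebraMap (𝓞 L) L w) := RingOfIntegers.isIntegral_coe w
  have htr := hint.add (hint.map h.conj)
  rw [hw, h.conj_coord, add_add_sub_cancel, ← two_mul, ← map_ofNat (algebraMap M L), ← map_mul,
    isIntegral_algebraMap_iff (algebraMap M L).injective] at htr
  exact ⟨⟨_, htr⟩, rfl⟩

theorem exists_unit_norm_eq_two_mul {M L : Type*} [Field M] [NumberField M] [Field L]
    [NumberField L] [Algebra M L] {θ : L} {d : M} (h : IsQuadExt θ d) {u : (𝓞 L)ˣ} {z : L}
    (hz : 2 = algebraMap (𝓞 L) L u * z ^ 2) :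
    ∃ n : (𝓞 M)ˣ, Algebra.norm M z = 2 * algebraMap (𝓞 M) M n := by
  have hN := congrArg (Algebra.norm M) hz
  rw [← map_ofNat (algebraMap M L) 2, Algebra.norm_algebraMap, h.finrank_eq_two, map_mul,
    map_pow] at hN
  let v : (𝓞 M)ˣ := Units.map (Algebra.intNorm (𝓞 M) (𝓞 L)) u
  have hv : algebraMap (𝓞 M) M v = Algebra.norm M (algebraMap (𝓞 L) L u) :=
    Algebra.algebraMap_intNorm _
  have hvv : algebraMap (𝓞 M) M ↑v⁻¹ * algebraMap (𝓞 M) M v = 1 := by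
    rw [← map_mul, Units.inv_mul, map_one]
  obtain ⟨n, hn, hn2⟩ := exists_ringOfIntegers_sq_eq (c := Algebra.norm M z / 2) (b := ↑v⁻¹) (by
    rw [← hv] at hN
    linear_combination -algebraMap (𝓞 M) M ↑v⁻¹ / 4 * hN - Algebra.norm M z ^ 2 / 4 * hvv)
  have hunit : IsUnit n := (isUnit_pow_iff two_ne_zero).1 (hn2 ▸ v⁻¹.isUnit)
  exact ⟨hunit.unit, by rw [IsUnit.unit_spec, hn, mul_div_cancel₀ _ two_ne_zero]⟩

end IsQuadExt

namespace Cond1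

variable {p q : ℕ} [Fact q.Prime] {B k : Type*} [Field B] [NumberField B] [Field k] [NumberField k]
  [Algebra B k] {sp : B} {s : k}

theorem eq_zero_of_sq_add_eq_two (H : Cond1 p q) (hB : IsQuadExt sp (p : ℚ)) {X Y : B}
    (hXY : X ^ 2 + 2 * q * Y ^ 2 = 2) {D : 𝓞 B}
    (hD : algebraMap (𝓞 B) B D = X ^ 2 - 2 * q * Y ^ 2) : Y = 0 := by
  have hq0 : (q : B) ≠ 0 := mod_cast H.2.1.ne_zero
  obtain ⟨y, hy, hy2⟩ := exists_ringOfIntegers_sq_eq (c := q * (2 * Y)) (b := q * (2 - D)) (by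
    rw [map_mul, map_sub, hD, map_natCast, map_ofNat]
    linear_combination q * hXY)
  obtain ⟨S, rfl⟩ := (H.prime_natCast hB).dvd_of_dvd_pow ⟨_, hy2⟩
  have hS : algebraMap (𝓞 B) B S = 2 * Y :=
    mul_left_cancel₀ hq0 (by rw [← hy, map_mul, map_natCast])
  have hS0 : S = 0 := by
    refine hB.eq_zero_of_map_sq_lt_one (Nat.cast_nonneg p) fun φ => ?_
    have hφ := congrArg φ hXY
    simp only [map_add, map_mul, map_pow, map_ofNat, map_natCast] at hφ
    have hq7 : (7 : ℝ) ≤ q := by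
      have := H.q_mod_eight
      exact_mod_cast (show 7 ≤ q by lia)
    rw [hS, map_mul, map_ofNat]
    nlinarith [sq_nonneg (φ X), sq_nonneg (φ Y)]
  simpa [hS0] using hS.symm

theorem norm_ne_two_of_sq_eq_two_mul (H : Cond1 p q) (hB : IsQuadExt sp (p : ℚ))
    (hk : IsQuadExt s (-(2 * q) : B)) {t : k} {w : 𝓞 k} (ht : t ^ 2 = 2 * algebraMap (𝓞 k) k w) :
    Algebra.norm B t ≠ 2 := by
  intro hN
  obtain ⟨X, Y, rfl⟩ := hk.span t
  rw [hk.norm_coord] at hN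
  have hXY : X ^ 2 + 2 * q * Y ^ 2 = 2 := by linear_combination hN
  have hs : s ^ 2 = -(2 * q) := by
    rw [hk.sq, map_neg, map_mul, map_ofNat, map_natCast]
  obtain ⟨D, hD⟩ := hk.exists_ringOfIntegers_eq_two_mul (w := w)
    (a := (X ^ 2 - 2 * q * Y ^ 2) / 2) (b := X * Y) (by
      simp only [map_div₀, map_sub, map_mul, map_pow, map_ofNat, map_natCast]
      linear_combination -ht / 2 + algebraMap B k Y ^ 2 / 2 * hs)
  rw [mul_div_cancel₀ _ two_ne_zero] at hD
  obtain rfl := H.eq_zero_of_sq_add_eq_two hB hXY hD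
  obtain ⟨r, -, hr⟩ := exists_ringOfIntegers_sq_eq (c := X) (b := 2) (by
    rw [map_ofNat]
    linear_combination hXY)
  exact (hB.prime_two H.p_mod_eight).irreducible.not_isSquare ⟨r, by rw [← hr, pow_two]⟩

theorem not_isUnitSq_two (H : Cond1 p q) (hB : IsQuadExt sp (p : ℚ))
    (hk : IsQuadExt s (-(2 * q) : B)) : ¬IsUnitSq (2 : k) := by
  rintro ⟨u, z, hz, h2⟩
  obtain ⟨n, hn⟩ := hk.exists_unit_norm_eq_two_mul h2
  have hpos : TotallyPositive (algebraMap (𝓞 B) B n) := fun φ => by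
    have hNpos := hk.totallyPositive_norm_of_neg (fun φ => by
      simpa [map_ofNat] using H.2.1.pos) hz φ
    rw [hn, map_mul, map_ofNat] at hNpos
    linarith
  obtain ⟨e, he, hne⟩ := H.sqRel_one_of_totallyPositive hB _ (.unit n) hpos
  rw [one_mul] at hne
  have he' : algebraMap B k e ≠ 0 := (map_ne_zero _).2 he
  refine H.norm_ne_two_of_sq_eq_two_mul hB hk (t := z / algebraMap B k e)
    (w := ↑u⁻¹ * algebraMap (𝓞 B) (𝓞 k) ↑n⁻¹) ?_ ?_
  · have hu : algebraMap (𝓞 k) k ↑u⁻¹ * algebraMap (𝓞 k) k u = 1 := by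
      rw [← map_mul, Units.inv_mul, map_one]
    have hn' : algebraMap (𝓞 k) k (algebraMap (𝓞 B) (𝓞 k) ↑n⁻¹) * algebraMap B k e ^ 2 = 1 := by
      rw [← map_pow, ← hne, ← IsScalarTower.algebraMap_apply,
        IsScalarTower.algebraMap_apply (𝓞 B) B k, ← map_mul, ← map_mul, Units.inv_mul, map_one,
        map_one]
    rw [div_pow, div_eq_iff (pow_ne_zero 2 he'), map_mul]
    linear_combination -algebraMap (𝓞 k) k ↑u⁻¹ * h2 - z ^ 2 * hu -
      2 * algebraMap (𝓞 k) k ↑u⁻¹ * hn'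
  · rw [div_eq_mul_inv, ← map_inv₀, map_mul, Algebra.norm_algebraMap, hk.finrank_eq_two, hn, hne]
    field_simp

end Cond1

end RamificationAtTwo

section GenusCharacter

open ClassGroup

variable {k₀ M : Type*} [Field k₀] [NumberField k₀] [Field M] [NumberField M] [Algebra k₀ M]
  {θ : k₀}

namespace IsQuadExt

theorem absNorm_span_singleton_eq_norm {d : ℚ} (h : IsQuadExt θ d) (hd : d ≤ 0) (z : 𝓞 M) :
    (Ideal.absNorm (Ideal.span {z}) : ℚ) =
      Algebra.norm ℚ (Algebra.norm k₀ (algebraMap (𝓞 M) M z)) := by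
  have hnonneg : 0 ≤ Algebra.norm ℚ (Algebra.norm k₀ (algebraMap (𝓞 M) M z)) := by
    obtain ⟨x, y, hxy⟩ := h.exists_norm_eq (Algebra.norm k₀ (algebraMap (𝓞 M) M z))
    rw [hxy]
    nlinarith [sq_nonneg x, mul_nonneg (neg_nonneg.2 hd) (sq_nonneg y)]
  have hz : Algebra.norm ℚ (algebraMap (𝓞 M) M z) = (Algebra.norm ℤ z : ℤ) :=
    (Algebra.coe_norm_int z).symm
  rw [Algebra.norm_norm, hz] at hnonneg ⊢
  rw [Ideal.absNorm_span_singleton, ← Int.cast_natCast,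
    Int.natAbs_of_nonneg (Int.cast_nonneg_iff.1 hnonneg)]

theorem exists_norm_eq_absNorm_of_isSquare {d : ℚ} (h : IsQuadExt θ d) (hd : d ≤ 0)
    {I : nonZeroDivisors (Ideal (𝓞 M))} (hI : IsSquare (mk0 I)) :
    ∃ a : k₀, Algebra.norm ℚ a = Ideal.absNorm (I : Ideal (𝓞 M)) := by
  obtain ⟨c, hc⟩ := hI
  obtain ⟨J, rfl⟩ := mk0_surjective c
  rw [← map_mul, mk0_eq_mk0_iff] at hc
  obtain ⟨x, y, hx, -, hxy⟩ := hc
  have hn := congrArg (fun K : Ideal (𝓞 M) => (Ideal.absNorm K : ℚ)) hxy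
  simp only [Submonoid.coe_mul, map_mul, Nat.cast_mul,
    h.absNorm_span_singleton_eq_norm (M := M) hd] at hn
  set a := Algebra.norm k₀ (algebraMap (𝓞 M) M x)
  set b := Algebra.norm k₀ (algebraMap (𝓞 M) M y)
  have ha : Algebra.norm ℚ a ≠ 0 := by
    rwa [Algebra.norm_ne_zero_iff, Algebra.norm_ne_zero_iff, RingOfIntegers.coe_ne_zero_iff]
  refine ⟨b * a⁻¹ * algebraMap ℚ k₀ (Ideal.absNorm (J : Ideal (𝓞 M))), ?_⟩
  have hinv : Algebra.norm ℚ a⁻¹ * Algebra.norm ℚ a = 1 := by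
    rw [← map_mul, inv_mul_cancel₀ (Algebra.norm_ne_zero_iff.1 ha), map_one]
  rw [map_mul, map_mul, Algebra.norm_algebraMap, h.finrank_eq_two]
  linear_combination -Algebra.norm ℚ a⁻¹ * hn +
    (Ideal.absNorm (I : Ideal (𝓞 M)) : ℚ) * hinv

theorem not_isSquare_mk0_of_legendreSym {q : ℕ} [Fact q.Prime] (hq : q ≠ 2)
    (h : IsQuadExt θ (-(2 * q) : ℚ)) {I : nonZeroDivisors (Ideal (𝓞 M))}
    (hI : legendreSym q (Ideal.absNorm (I : Ideal (𝓞 M))) = -1) : ¬IsSquare (mk0 I) := by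
  intro hsq
  obtain ⟨a, ha⟩ := h.exists_norm_eq_absNorm_of_isSquare (by simp) hsq
  obtain ⟨x, y, hxy⟩ := h.exists_norm_eq a
  have hq2 : ¬(q : ℤ) ∣ -2 := fun hdvd => hq <|
    (Nat.prime_dvd_prime_iff_eq Fact.out Nat.prime_two).1 (by exact_mod_cast (dvd_neg.1 hdvd))
  refine sq_sub_mul_sq_ne_of_legendreSym_eq_neg_one hI hq2 (x := x) (y := y) one_ne_zero ?_
  push_cast
  linear_combination ha - hxy

end IsQuadExt

end GenusCharacter

section CompletelySplitPrimes

theorem exists_padic_sq_eq_of_legendreSym {l : ℕ} [Fact l.Prime] (hl : l ≠ 2) {a : ℤ}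
    (ha : legendreSym l a = 1) : ∃ c : ℚ_[l], c ^ 2 = a := by
  have ha0 : (a : ZMod l) ≠ 0 := fun h0 => by
    simp [(legendreSym.eq_zero_iff l a).2 h0] at ha
  obtain ⟨r, hr⟩ := (legendreSym.eq_one_iff l ha0).1 ha
  obtain ⟨n, rfl⟩ := ZMod.intCast_surjective r
  have hn : ((2 * n : ℤ) : ZMod l) ≠ 0 := by
    rw [Int.cast_mul, Int.cast_two]
    exact mul_ne_zero (Ring.two_ne_zero (by rwa [ZMod.ringChar_zmod_n]))
      fun h0 => ha0 (by rw [hr, h0, mul_zero])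
  obtain ⟨z, hz, -⟩ := HenselianRing.is_henselian (I := IsLocalRing.maximalIdeal ℤ_[l])
    (.X ^ 2 - .C (a : ℤ_[l])) (Polynomial.monic_X_pow_sub_C _ two_ne_zero) (n : ℤ_[l]) (by
      rw [← PadicInt.ker_toZMod, RingHom.mem_ker]
      simp [hr, pow_two]) (by
      refine IsUnit.map _ (IsLocalRing.notMem_maximalIdeal.1 fun h => hn ?_)
      rw [← PadicInt.ker_toZMod, RingHom.mem_ker] at h
      simpa [one_add_one_eq_two, map_ofNat] using h)
  exact ⟨z, mod_cast congrArg (Subtype.val : ℤ_[l] → ℚ_[l])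
    (show z ^ 2 = (a : ℤ_[l]) by simpa [sub_eq_zero] using hz)⟩

theorem IsQuadExt.nonempty_ringHom_padic {M L : Type*} [Field M] [Field L] [Algebra M L] {θ : L}
    {n : ℤ} (h : IsQuadExt θ (n : M)) {l : ℕ} [Fact l.Prime] (hl : l ≠ 2)
    (hn : legendreSym l n = 1) (φ : M →+* ℚ_[l]) : Nonempty (L →+* ℚ_[l]) := by
  obtain ⟨c, hc⟩ := exists_padic_sq_eq_of_legendreSym hl hn
  obtain ⟨ψ, -⟩ := h.exists_lift φ c (by rw [hc, map_intCast])
  exact ⟨ψ⟩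

variable {M : Type*} [Field M]

theorem nonempty_ringHom_zmod_of_ringHom_padic {l : ℕ} [Fact l.Prime] (φ : M →+* ℚ_[l]) :
    Nonempty (𝓞 M →+* ZMod l) := by
  have hint (x : 𝓞 M) : φ (algebraMap (𝓞 M) M x) ∈ PadicInt.subring l := by
    have hx : IsIntegral ℤ (φ (algebraMap (𝓞 M) M x)) :=
      (RingOfIntegers.isIntegral_coe x).map φ.toIntAlgHom
    obtain ⟨y, hy⟩ := IsIntegrallyClosed.isIntegral_iff.1 (hx.tower_top (A := ℤ_[l]))
    exact hy ▸ y.2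
  exact ⟨(PadicInt.toZMod (p := l)).comp
    ((φ.comp (algebraMap (𝓞 M) M)).codRestrict (PadicInt.subring l) hint)⟩

variable [NumberField M]

theorem absNorm_ker_ringHom_zmod {n : ℕ} (f : 𝓞 M →+* ZMod n) :
    Ideal.absNorm (RingHom.ker f) = n := by
  rw [Ideal.absNorm_apply, Submodule.cardQuot_apply,
    Nat.card_congr (RingHom.quotientKerEquivOfSurjective (ZMod.ringHom_surjective f)).toEquiv,
    Nat.card_zmod]

theorem eq_span_absNorm_ringOfIntegers_rat (A : Ideal (𝓞 ℚ)) :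
    A = Ideal.span {(Ideal.absNorm A : 𝓞 ℚ)} := by
  obtain ⟨J, hJ⟩ := Ideal.dvd_iff_le.2
    ((Ideal.span_singleton_le_iff_mem _).2 (Ideal.absNorm_mem A))
  rcases eq_or_ne A ⊥ with rfl | hA
  · simp
  have hN := congrArg Ideal.absNorm hJ
  rw [map_mul, Ideal.absNorm_span_natCast, RingOfIntegers.rank, Module.finrank_self, pow_one] at hN
  have hJ1 : Ideal.absNorm J = 1 :=
    (Nat.eq_of_mul_eq_mul_left (Nat.pos_of_ne_zero (Ideal.absNorm_eq_zero_iff.not.2 hA))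
      ((mul_one _).trans hN)).symm
  rw [hJ, Ideal.absNorm_eq_one_iff.1 hJ1, Ideal.mul_top]

namespace IsQuadExt

theorem mul_map_conj_eq_span_absNorm {θ : M} {d : ℚ} (h : IsQuadExt θ d) (I : Ideal (𝓞 M)) :
    I * I.map (RingOfIntegers.mapAlgEquiv h.conj) = Ideal.span {(Ideal.absNorm I : 𝓞 M)} := by
  have hrat : Ideal.relNorm (𝓞 ℚ) I = Ideal.span {(Ideal.absNorm I : 𝓞 ℚ)} := by
    rw [← Ideal.absNorm_relNorm (𝓞 ℚ) (𝓞 M) I]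
    exact eq_span_absNorm_ringOfIntegers_rat _
  rw [← map_relNorm_eq_mul_map_conj, hrat, Ideal.map_span, Set.image_singleton, map_natCast]

theorem ker_sup_map_conj_ker_eq_top {s : M} {n : ℤ} (h : IsQuadExt s (n : ℚ)) {p : ℕ}
    [Fact p.Prime] (hp : p ≠ 2) (hn : (n : ZMod p) ≠ 0) (f : 𝓞 M →+* ZMod p) :
    RingHom.ker f ⊔ (RingHom.ker f).map (RingOfIntegers.mapAlgEquiv h.conj) = ⊤ := by
  obtain ⟨t, rfl, ht⟩ := exists_ringOfIntegers_sq_eq (c := s) (b := n) (by rw [h.sq]; simp)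
  obtain ⟨r, hr⟩ := ZMod.intCast_surjective (f t)
  have htr : t - r ∈ RingHom.ker f := by simp [hr]
  have hconj : RingOfIntegers.mapAlgEquiv h.conj (t - r) = -t - r :=
    RingOfIntegers.coe_injective (by
      change h.conj (algebraMap (𝓞 M) M (t - r)) = algebraMap (𝓞 M) M (-t - r)
      simp only [map_sub, map_neg, map_intCast, h.conj_gen])
  have hmem : 2 * t ∈
      RingHom.ker f ⊔ (RingHom.ker f).map (RingOfIntegers.mapAlgEquiv h.conj) := by
    convert sub_mem (Ideal.mem_sup_left htr)
      (Ideal.mem_sup_right (hconj ▸ Ideal.mem_map_of_mem _ htr)) using 1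
    ring
  have hmax := RingHom.ker_isMaximal_of_surjective f (ZMod.ringHom_surjective f)
  by_contra hne
  have h2t : f (2 * t) = 0 := (hmax.eq_of_le hne le_sup_left).ge hmem
  rw [map_mul, map_ofNat, mul_eq_zero,
    or_iff_right (Ring.two_ne_zero (by rwa [ZMod.ringChar_zmod_n]))] at h2t
  exact hn (by rw [← map_intCast f, ← ht, map_pow, h2t, zero_pow two_ne_zero])

theorem exists_absNorm_eq_of_legendreSym {s : M} {n : ℤ} (h : IsQuadExt s (n : ℚ)) {p : ℕ}
    [Fact p.Prime] (hp : p ≠ 2) (hn : legendreSym p n = 1) :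
    ∃ I : Ideal (𝓞 M), I ^ 2 ⊔ Ideal.span {(p : 𝓞 M)} = I ∧ Ideal.absNorm I = p := by
  obtain ⟨φ⟩ := h.nonempty_ringHom_padic hp hn (Rat.castHom _)
  obtain ⟨f⟩ := nonempty_ringHom_zmod_of_ringHom_padic φ
  have hn0 : (n : ZMod p) ≠ 0 := fun h0 => by
    simp [(legendreSym.eq_zero_iff p n).2 h0] at hn
  refine ⟨RingHom.ker f, ?_, absNorm_ker_ringHom_zmod f⟩
  have hmul := h.mul_map_conj_eq_span_absNorm (RingHom.ker f)
  rw [absNorm_ker_ringHom_zmod] at hmul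
  rw [← hmul, pow_two, ← Ideal.mul_sup, h.ker_sup_map_conj_ker_eq_top hp hn0, Ideal.mul_top]

theorem exists_sq_eq_map {k₀ k : Type*} [Field k₀] [Field k] [Algebra k₀ k] {p : ℕ} {s : k}
    (h : IsQuadExt s (p : k₀)) {I : Ideal (𝓞 k₀)}
    (hI : I ^ 2 ⊔ Ideal.span {(p : 𝓞 k₀)} = I) :
    ∃ J : Ideal (𝓞 k), J ^ 2 = I.map (algebraMap (𝓞 k₀) (𝓞 k)) := by
  obtain ⟨t, -, ht⟩ := exists_ringOfIntegers_sq_eq (c := s) (b := p) (by rw [h.sq]; simp)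
  have hmap := congrArg (Ideal.map (algebraMap (𝓞 k₀) (𝓞 k))) hI
  rw [Ideal.map_sup, Ideal.map_pow, Ideal.map_span, Set.image_singleton, map_natCast] at hmap
  set J := I.map (algebraMap (𝓞 k₀) (𝓞 k))
  refine ⟨J ⊔ Ideal.span {t}, ?_⟩
  rw [pow_two, Ideal.sup_mul, Ideal.mul_sup, Ideal.mul_sup, Ideal.span_singleton_mul_span_singleton,
    ← pow_two, ← pow_two, ht]
  refine le_antisymm (sup_le (sup_le ?_ Ideal.mul_le_left) (sup_le Ideal.mul_le_right ?_)) ?_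
  · exact Ideal.pow_le_self two_ne_zero
  · exact le_sup_right.trans hmap.le
  · conv_lhs => rw [← hmap]
    exact sup_le_sup le_sup_left le_sup_right

theorem absNorm_eq_of_sq_eq_map {M L : Type*} [Field M] [NumberField M] [Field L] [NumberField L]
    [Algebra M L] {θ : L} {d : M} (h : IsQuadExt θ d) {I : Ideal (𝓞 M)} {J : Ideal (𝓞 L)}
    (hJ : J ^ 2 = I.map (algebraMap (𝓞 M) (𝓞 L))) : Ideal.absNorm J = Ideal.absNorm I := by
  have hN := congrArg Ideal.absNorm hJ
  rw [map_pow, Ideal.absNorm_algebraMap, finrank_ringOfIntegers, h.finrank_eq_two] at hN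
  exact Nat.pow_left_injective two_ne_zero hN

end IsQuadExt

end CompletelySplitPrimes

section AuxiliaryPrime

theorem exists_prime_forall_modEq {ι : Type*} [Finite ι] {a n : ι → ℕ} (hn : ∀ i, n i ≠ 0)
    (hco : Pairwise fun i j => (n i).Coprime (n j)) (ha : ∀ i, (a i).Coprime (n i)) :
    ∃ l, l.Prime ∧ ∀ i, l ≡ a i [MOD n i] := by
  cases nonempty_fintype ι
  obtain ⟨b, hb⟩ := Nat.chineseRemainderOfFinset a n .univ (fun i _ => hn i)
    (fun i _ j _ hij => hco hij)
  have hcop : b.Coprime (∏ i, n i) := Nat.Coprime.prod_right fun i hi => by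
    rw [Nat.coprime_iff_gcd_eq_one, (hb i hi).gcd_eq]
    exact ha i
  obtain ⟨l, -, hl, hlb⟩ :=
    Nat.forall_exists_prime_gt_and_modEq 0 (Finset.prod_ne_zero_iff.2 fun i _ => hn i) hcop
  exact ⟨l, hl, fun i => (hlb.of_dvd (Finset.dvd_prod_of_mem n (Finset.mem_univ i))).trans
    (hb i (Finset.mem_univ i))⟩

theorem legendreSym_neg_two_eq_one_of_mod_eight {l : ℕ} [Fact l.Prime] (hl : l % 8 = 3) :
    legendreSym l (-2) = 1 := by
  have hl2 : l ≠ 2 := by omega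
  have h0 : ((-2 : ℤ) : ZMod l) ≠ 0 := by
    simpa using Ring.two_ne_zero (R := ZMod l) (by rwa [ZMod.ringChar_zmod_n])
  rw [legendreSym.eq_one_iff l h0]
  simpa using (ZMod.exists_sq_eq_neg_two_iff hl2).2 (.inr hl)

variable {p q : ℕ}

theorem Cond1.exists_prime_modEq (H : Cond1 p q) :
    ∃ l, l.Prime ∧ l % 8 = 3 ∧ l ≡ 1 [MOD p] ∧ l ≡ q - 1 [MOD q] := by
  have coprime_eight {r : ℕ} (hr : r.Prime) (h2 : r ≠ 2) : Nat.Coprime 8 r :=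
    ((Nat.coprime_primes Nat.prime_two hr).2 h2.symm).pow_left 3
  have h8p := coprime_eight H.1 H.p_ne_two
  have h8q := coprime_eight H.2.1 H.q_ne_two
  have hpq := (Nat.coprime_primes H.1 H.2.1).2 H.p_ne_q
  have hq : (q - 1).Coprime q := by
    simpa [Nat.sub_add_cancel H.2.1.one_le] using Nat.coprime_self_add_right (m := q - 1) (n := 1)
  obtain ⟨l, hl, hmod⟩ := exists_prime_forall_modEq (a := ![3, 1, q - 1]) (n := ![8, p, q])
    (by simp [Fin.forall_fin_succ, H.1.ne_zero, H.2.1.ne_zero])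
    (by simpa [Pairwise, Fin.forall_fin_succ] using
      ⟨⟨h8p, h8q⟩, ⟨h8p.symm, hpq⟩, h8q.symm, hpq.symm⟩)
    (by simpa [Fin.forall_fin_succ] using ⟨by norm_num, hq⟩)
  exact ⟨l, hl, hmod 0, hmod 1, hmod 2⟩

theorem Cond1.exists_prime_legendreSym (H : Cond1 p q) [Fact q.Prime] :
    ∃ (l : ℕ) (_ : Fact l.Prime), l ≠ 2 ∧ legendreSym l p = 1 ∧ legendreSym l q = 1 ∧
      legendreSym l (-2) = 1 ∧ legendreSym q l = -1 := by
  have : Fact p.Prime := ⟨H.1⟩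
  obtain ⟨l, hl, hl8, hlp, hlq⟩ := H.exists_prime_modEq
  have : Fact l.Prime := ⟨hl⟩
  have hl2 : l ≠ 2 := by omega
  have hpl : legendreSym p l = 1 := by
    rw [legendreSym, Int.cast_natCast, (ZMod.natCast_eq_natCast_iff l 1 p).2 hlp]
    simp
  have hql : legendreSym q l = -1 := by
    have hcast : (l : ZMod q) = -1 := by
      simpa [Nat.cast_sub H.2.1.one_le] using (ZMod.natCast_eq_natCast_iff l (q - 1) q).2 hlq
    rw [← H.legendreSym_q_neg_one, legendreSym, legendreSym, Int.cast_natCast, hcast]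
    simp
  refine ⟨l, this, hl2, ?_, ?_, legendreSym_neg_two_eq_one_of_mod_eight hl8, hql⟩
  · rw [legendreSym.quadratic_reciprocity_one_mod_four H.2.2.1 hl2, hpl]
  · rw [legendreSym.quadratic_reciprocity_three_mod_four H.2.2.2.1 (by omega), hql, neg_neg]

end AuxiliaryPrime

section Conjugates

open ClassGroup

variable {M M₁ M₂ L : Type*} [Field M] [Field M₁] [Field M₂] [Field L]
  [Algebra M L] [Algebra M₁ L] [Algebra M₂ L] {θ θ₁ θ₂ : L} {d : M} {d₁ : M₁} {d₂ : M₂}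

/-- The ideal obtained by applying the conjugation of a quadratic extension. -/
def IsQuadExt.conjIdeal (h : IsQuadExt θ d) (I : nonZeroDivisors (Ideal (𝓞 L))) :
    nonZeroDivisors (Ideal (𝓞 L)) :=
  ⟨(I : Ideal (𝓞 L)).map (RingOfIntegers.mapAlgEquiv h.conj), mem_nonZeroDivisors_of_ne_zero <|
    (Ideal.map_eq_bot_iff_of_injective (RingOfIntegers.mapAlgEquiv h.conj).injective).not.2
      (nonZeroDivisors.ne_zero I.2)⟩

theorem IsQuadExt.conjIdeal_conjIdeal (h₁ : IsQuadExt θ₁ d₁) (h₂ : IsQuadExt θ₂ d₂)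
    (h : IsQuadExt θ d) (hc : ∀ z, h.conj z = h₁.conj (h₂.conj z))
    (I : nonZeroDivisors (Ideal (𝓞 L))) :
    h₁.conjIdeal (h₂.conjIdeal I) = h.conjIdeal I := by
  ext1
  let σ₁ := ((RingOfIntegers.mapAlgEquiv h₁.conj : 𝓞 L ≃ₐ[𝓞 M₁] 𝓞 L) : 𝓞 L →+* 𝓞 L)
  let σ₂ := ((RingOfIntegers.mapAlgEquiv h₂.conj : 𝓞 L ≃ₐ[𝓞 M₂] 𝓞 L) : 𝓞 L →+* 𝓞 L)
  let σ := ((RingOfIntegers.mapAlgEquiv h.conj : 𝓞 L ≃ₐ[𝓞 M] 𝓞 L) : 𝓞 L →+* 𝓞 L)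
  have hσ : σ₁.comp σ₂ = σ := by
    ext z
    exact (hc (algebraMap (𝓞 L) L z)).symm
  change Ideal.map σ₁ (Ideal.map σ₂ (I : Ideal (𝓞 L))) = Ideal.map σ (I : Ideal (𝓞 L))
  rw [Ideal.map_map, hσ]

variable [NumberField M] [NumberField M₁] [NumberField M₂] [NumberField L]

theorem extendedHom_classGroupNorm (h : IsQuadExt θ d) (I : nonZeroDivisors (Ideal (𝓞 L))) :
    extendedHom (𝓞 M) (𝓞 L) (classGroupNorm M L (mk0 I)) = mk0 I * mk0 (h.conjIdeal I) := by
  rw [classGroupNorm_mk0, extendedHom_mk0, ← map_mul]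
  congr 1
  ext1
  exact map_relNorm_eq_mul_map_conj h I

theorem mk0_conjIdeal_eq_inv (h : IsQuadExt θ d) {n : ℕ}
    (H : ∀ c : ClassGroup (𝓞 M), c ^ 2 ^ n = 1 → c = 1) {I : nonZeroDivisors (Ideal (𝓞 L))}
    (hI : mk0 I ^ 2 ^ n = 1) : mk0 (h.conjIdeal I) = (mk0 I)⁻¹ := by
  refine eq_inv_of_mul_eq_one_right ?_
  rw [← extendedHom_classGroupNorm,
    H (classGroupNorm M L (mk0 I)) (by rw [← map_pow, hI, map_one]), map_one]

theorem sq_eq_extendedHom_classGroupNorm (h₁ : IsQuadExt θ₁ d₁) (h₂ : IsQuadExt θ₂ d₂)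
    (h : IsQuadExt θ d) (hc : ∀ z, h.conj z = h₁.conj (h₂.conj z)) {n : ℕ}
    (H₁ : ∀ c : ClassGroup (𝓞 M₁), c ^ 2 ^ n = 1 → c = 1)
    (H₂ : ∀ c : ClassGroup (𝓞 M₂), c ^ 2 ^ n = 1 → c = 1)
    {x : ClassGroup (𝓞 L)} (hx : x ^ 2 ^ n = 1) :
    x ^ 2 = extendedHom (𝓞 M) (𝓞 L) (classGroupNorm M L x) := by
  obtain ⟨I, rfl⟩ := mk0_surjective x
  have h₂I := mk0_conjIdeal_eq_inv h₂ H₂ hx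
  rw [extendedHom_classGroupNorm h, ← h₁.conjIdeal_conjIdeal h₂ h hc,
    mk0_conjIdeal_eq_inv h₁ H₁ (by rw [h₂I, inv_pow, hx, inv_one]), h₂I, inv_inv, pow_two]

end Conjugates

section ClassGroupsOfTheTower

open ClassGroup

section

variable {M L : Type*} [Field M] [Field L] [Algebra M L]

theorem coe_extendedIdeal_sq_eq_span_two {T : nonZeroDivisors (Ideal (𝓞 M))}
    (hT : (T : Ideal (𝓞 M)) ^ 2 = Ideal.span {2}) :
    (extendedIdeal (𝓞 M) (𝓞 L) T : Ideal (𝓞 L)) ^ 2 = Ideal.span {2} := by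
  change (Ideal.map (algebraMap (𝓞 M) (𝓞 L)) (T : Ideal (𝓞 M))) ^ 2 = _
  rw [← Ideal.map_pow, hT, Ideal.map_span, Set.image_singleton, map_ofNat]

variable [NumberField M]

theorem mem_nonZeroDivisors_of_absNorm_ne_zero {I : Ideal (𝓞 M)} (hI : Ideal.absNorm I ≠ 0) :
    I ∈ nonZeroDivisors (Ideal (𝓞 M)) :=
  mem_nonZeroDivisors_of_ne_zero fun h => hI (Ideal.absNorm_eq_zero_iff.2 h)

theorem orderOf_mk0_eq_two {T : nonZeroDivisors (Ideal (𝓞 M))}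
    (hT : (T : Ideal (𝓞 M)) ^ 2 = Ideal.span {2}) (h2 : ¬IsUnitSq (2 : M)) :
    orderOf (mk0 T) = 2 := by
  refine orderOf_eq_prime ?_ fun h => h2 ?_
  · rw [← map_pow, mk0_eq_one_iff (T ^ 2).2]
    exact ⟨2, hT⟩
  · simpa only [map_ofNat] using (mk0_eq_one_iff_isUnitSq hT).1 h

theorem mk0_eq_one_of_sq_eq_neg_two {T : nonZeroDivisors (Ideal (𝓞 M))}
    (hT : (T : Ideal (𝓞 M)) ^ 2 = Ideal.span {2}) {w : M} (hw : w ^ 2 = -2) : mk0 T = 1 := by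
  rw [mk0_eq_one_iff_isUnitSq hT, map_ofNat]
  have hw0 : w ≠ 0 := fun h0 => by simp [h0] at hw
  exact .of_sqRel ⟨w, hw0, by linear_combination hw⟩ .neg_one

variable [NumberField L] {θ : L}

theorem absNorm_relNormHom (I : nonZeroDivisors (Ideal (𝓞 L))) :
    Ideal.absNorm (relNormHom M L I : Ideal (𝓞 M)) = Ideal.absNorm (I : Ideal (𝓞 L)) :=
  Ideal.absNorm_relNorm (𝓞 M) (𝓞 L) _

theorem IsQuadExt.subsingleton_orderOf_eq_two (hM : ∀ g : M, IsIdealSquare g → IsUnitSq g)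
    (hMpos : ∀ g : M, IsIdealSquare g → TotallyPositive g → SqRel g 1) {q : ℕ}
    (h : IsQuadExt θ (-(2 * q) : M)) (h2 : Prime (2 : 𝓞 M)) (hq : Prime (q : 𝓞 M)) :
    {c : ClassGroup (𝓞 L) | orderOf c = 2}.Subsingleton :=
  subsingleton_orderOf_eq_two_of_isUnitSq two_ne_zero fun _ =>
    h.exists_isUnitSq_mul_two_pow hM hMpos h2 hq

end

namespace Cond1

variable {p q : ℕ}

theorem exists_legendreSym_absNorm_eq_neg_one [Fact q.Prime] (H : Cond1 p q) {L : Type*} [Field L]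
    [NumberField L] (hL : ∀ (l : ℕ) [Fact l.Prime], l ≠ 2 → legendreSym l p = 1 →
      legendreSym l q = 1 → legendreSym l (-2) = 1 → Nonempty (L →+* ℚ_[l])) :
    ∃ I : nonZeroDivisors (Ideal (𝓞 L)),
      legendreSym q (Ideal.absNorm (I : Ideal (𝓞 L))) = -1 := by
  obtain ⟨l, hl, hl2, hlp, hlq, hlm2, hql⟩ := H.exists_prime_legendreSym
  obtain ⟨φ⟩ := hL l hl2 hlp hlq hlm2
  obtain ⟨f⟩ := nonempty_ringHom_zmod_of_ringHom_padic φ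
  have hf := absNorm_ker_ringHom_zmod f
  have hf0 : Ideal.absNorm (RingHom.ker f) ≠ 0 := by
    rw [hf]
    exact hl.out.ne_zero
  exact ⟨⟨RingHom.ker f, mem_nonZeroDivisors_of_absNorm_ne_zero hf0⟩, hf.symm ▸ hql⟩

variable {k₀ : Type*} [Field k₀] [NumberField k₀] {s₀ : k₀}

theorem subsingleton_orderOf_eq_two_quadratic (H : Cond1 p q) (hk₀ : IsQuadExt s₀ (-(2 * q) : ℚ)) :
    {c : ClassGroup (𝓞 k₀) | orderOf c = 2}.Subsingleton :=
  hk₀.subsingleton_orderOf_eq_two (fun _ => IsIdealSquare.isUnitSq_rat)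
    (fun _ => IsIdealSquare.sqRel_one_rat)
    (mod_cast prime_natCast_ringOfIntegers_rat Nat.prime_two)
    (prime_natCast_ringOfIntegers_rat H.2.1)

variable {k : Type*} [Field k] [NumberField k] [Algebra k₀ k] {t : k}

theorem exists_not_isSquare_sq_mem_range_extendedHom (H : Cond1 p q)
    (hk₀ : IsQuadExt s₀ (-(2 * q) : ℚ)) (hkk₀ : IsQuadExt t (p : k₀)) :
    ∃ c : ClassGroup (𝓞 k), ¬IsSquare c ∧ c ^ 2 ∈ (extendedHom (𝓞 k₀) (𝓞 k)).range := by
  have : Fact p.Prime := ⟨H.1⟩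
  have : Fact q.Prime := ⟨H.2.1⟩
  obtain ⟨I, hI, hIp⟩ := IsQuadExt.exists_absNorm_eq_of_legendreSym (n := -2 * q)
    (by simpa using hk₀) H.p_ne_two
    (by rw [legendreSym.mul, H.legendreSym_p_neg_two, H.legendreSym_p_q]; rfl)
  obtain ⟨J, hJ⟩ := hkk₀.exists_sq_eq_map hI
  have hJp := (hkk₀.absNorm_eq_of_sq_eq_map hJ).trans hIp
  have hI0 := mem_nonZeroDivisors_of_absNorm_ne_zero (hIp ▸ H.1.ne_zero)
  have hJ0 := mem_nonZeroDivisors_of_absNorm_ne_zero (hJp ▸ H.1.ne_zero)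
  refine ⟨mk0 ⟨J, hJ0⟩, hk₀.not_isSquare_mk0_of_legendreSym H.q_ne_two
    (hJp.symm ▸ H.legendreSym_q_p), mk0 ⟨I, hI0⟩, ?_⟩
  rw [extendedHom_mk0, ← map_pow]
  congr 1
  ext1
  exact hJ.symm

variable {B F K : Type*} [Field B] [NumberField B] [Field F] [Field K] [NumberField K] [Algebra B F]
  [Algebra F K] [Algebra k K] {sp : B} {sq : F} {wK : K}

theorem exists_not_isSquare_classGroupNorm_biquadratic (H : Cond1 p q)
    (hB : IsQuadExt sp (p : ℚ)) (hF : IsQuadExt sq (q : B)) (hK : IsQuadExt wK (-2 : F))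
    (hk₀ : IsQuadExt s₀ (-(2 * q) : ℚ)) :
    ∃ c : ClassGroup (𝓞 K), ¬IsSquare (classGroupNorm k K c) := by
  have : Fact q.Prime := ⟨H.2.1⟩
  obtain ⟨I, hI⟩ := H.exists_legendreSym_absNorm_eq_neg_one (L := K) fun l _ hl hlp hlq hlm2 => by
    obtain ⟨φ⟩ := IsQuadExt.nonempty_ringHom_padic (n := p) (by simpa using hB) hl hlp
      (Rat.castHom _)
    obtain ⟨ψ⟩ := IsQuadExt.nonempty_ringHom_padic (n := q) (by simpa using hF) hl hlq φ
    exact IsQuadExt.nonempty_ringHom_padic (n := -2) (by simpa using hK) hl hlm2 ψ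
  refine ⟨mk0 I, ?_⟩
  rw [classGroupNorm_mk0]
  exact hk₀.not_isSquare_mk0_of_legendreSym H.q_ne_two (by rwa [absNorm_relNormHom])

variable [NumberField F]

theorem subsingleton_orderOf_eq_two_triquadratic (H : Cond1 p q) (hB : IsQuadExt sp (p : ℚ))
    (hF : IsQuadExt sq (q : B)) (hK : IsQuadExt wK (-2 : F)) :
    {c : ClassGroup (𝓞 K) | orderOf c = 2}.Subsingleton := by
  obtain ⟨x, V, hxV, hx⟩ := H.exists_norm_eq_neg_two hB hF
  have hx0 : algebraMap F K (algebraMap (𝓞 F) F x) ≠ 0 := fun h0 => by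
    rw [(map_eq_zero _).1 h0, Algebra.norm_zero] at hx
    simp at hx
  exact subsingleton_orderOf_eq_two_of_isUnitSq hx0 fun _ =>
    H.exists_isUnitSq_mul_pow hB hF hK hxV hx

variable {E : Type*} [Field E] [NumberField E] [Algebra B E] [Algebra E K] {w : E} {sqK : K}

theorem sq_eq_extendedHom_classGroupNorm_biquadratic (H : Cond1 p q) (hB : IsQuadExt sp (p : ℚ))
    (hE : IsQuadExt w (-2 : B)) (hF : IsQuadExt sq (q : B)) (hKF : IsQuadExt wK (-2 : F))
    (hKE : IsQuadExt sqK (q : E)) (hKk : IsQuadExt sqK (q : k))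
    (hconj : ∀ z, hKk.conj z = hKE.conj (hKF.conj z)) (n : ℕ) (c : ClassGroup (𝓞 K))
    (hc : c ^ 2 ^ n = 1) : c ^ 2 = extendedHom (𝓞 k) (𝓞 K) (classGroupNorm k K c) :=
  sq_eq_extendedHom_classGroupNorm hKE hKF hKk hconj
    (fun _ => eq_one_of_sq_pow_eq_one_of_isUnitSq
      (fun _ => hE.isUnitSq_of_neg_two (H.isUnitSq_of_isIdealSquare hB)
        (H.sqRel_one_of_totallyPositive hB) (hB.prime_two H.p_mod_eight)) n)
    (fun _ => eq_one_of_sq_pow_eq_one_of_isUnitSq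
      (fun _ => H.isUnitSq_of_isIdealSquare_real hB hF) n) hc

variable [Algebra B k] {s : k}

theorem subsingleton_orderOf_eq_two_biquadratic (H : Cond1 p q) (hB : IsQuadExt sp (p : ℚ))
    (hk : IsQuadExt s (-(2 * q) : B)) : {c : ClassGroup (𝓞 k) | orderOf c = 2}.Subsingleton :=
  have : Fact q.Prime := ⟨H.2.1⟩
  hk.subsingleton_orderOf_eq_two (H.isUnitSq_of_isIdealSquare hB)
    (H.sqRel_one_of_totallyPositive hB) (hB.prime_two H.p_mod_eight) (H.prime_natCast hB)

theorem exists_not_isSquare_classGroupNorm_quadratic (H : Cond1 p q) (hB : IsQuadExt sp (p : ℚ))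
    (hk : IsQuadExt s (-(2 * q) : B)) (hk₀ : IsQuadExt s₀ (-(2 * q) : ℚ)) :
    ∃ c : ClassGroup (𝓞 k), ¬IsSquare (classGroupNorm k₀ k c) := by
  have : Fact q.Prime := ⟨H.2.1⟩
  have hk' : IsQuadExt s ((-2 * q : ℤ) : B) := by simpa using hk
  obtain ⟨I, hI⟩ := H.exists_legendreSym_absNorm_eq_neg_one (L := k) fun l _ hl hlp hlq hlm2 => by
    obtain ⟨φ⟩ := IsQuadExt.nonempty_ringHom_padic (n := p) (by simpa using hB) hl hlp
      (Rat.castHom _)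
    exact hk'.nonempty_ringHom_padic hl (by rw [legendreSym.mul, hlm2, hlq, one_mul]) φ
  refine ⟨mk0 I, ?_⟩
  rw [classGroupNorm_mk0]
  exact hk₀.not_isSquare_mk0_of_legendreSym H.q_ne_two (by rwa [absNorm_relNormHom])

theorem orderOf_extendedHom_mk0 (H : Cond1 p q) (hB : IsQuadExt sp (p : ℚ))
    (hk : IsQuadExt s (-(2 * q) : B)) {T : nonZeroDivisors (Ideal (𝓞 k₀))}
    (hT : (T : Ideal (𝓞 k₀)) ^ 2 = Ideal.span {2}) :
    orderOf (extendedHom (𝓞 k₀) (𝓞 k) (mk0 T)) = 2 := by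
  have : Fact q.Prime := ⟨H.2.1⟩
  rw [extendedHom_mk0]
  exact orderOf_mk0_eq_two (coe_extendedIdeal_sq_eq_span_two hT) (H.not_isUnitSq_two hB hk)

theorem eq_one_of_extendedHom_eq_one (H : Cond1 p q) (hB : IsQuadExt sp (p : ℚ))
    (hk : IsQuadExt s (-(2 * q) : B)) (hk₀ : IsQuadExt s₀ (-(2 * q) : ℚ))
    {c : ClassGroup (𝓞 k₀)} (hc : c ^ 2 = 1) (hck : extendedHom (𝓞 k₀) (𝓞 k) c = 1) : c = 1 := by
  obtain ⟨T, hT⟩ := hk₀.exists_sq_eq_span_two (H.2.1.odd_of_ne_two H.q_ne_two)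
  have hTk := H.orderOf_extendedHom_mk0 hB hk hT
  have hT2 : ¬IsUnitSq (2 : k₀) := fun h2 => by
    have hT1 : mk0 T = 1 := (mk0_eq_one_iff_isUnitSq hT).2 (by rwa [map_ofNat])
    rw [hT1, map_one, orderOf_one] at hTk
    omega
  by_contra hc1
  have hcT := H.subsingleton_orderOf_eq_two_quadratic hk₀ (orderOf_eq_prime hc hc1)
    (orderOf_mk0_eq_two hT hT2)
  rw [← hcT, hck, orderOf_one] at hTk
  omega

theorem card_sylow_two_biquadratic (H : Cond1 p q) (hB : IsQuadExt sp (p : ℚ))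
    (hk : IsQuadExt s (-(2 * q) : B)) (hk₀ : IsQuadExt s₀ (-(2 * q) : ℚ))
    (hkk₀ : IsQuadExt t (p : k₀)) (P : Sylow 2 (ClassGroup (𝓞 k)))
    (Q : Sylow 2 (ClassGroup (𝓞 k₀))) :
    Nat.card (P : Subgroup (ClassGroup (𝓞 k))) =
      2 * Nat.card (Q : Subgroup (ClassGroup (𝓞 k₀))) := by
  obtain ⟨g, hg⟩ := H.exists_not_isSquare_classGroupNorm_quadratic hB hk hk₀
  obtain ⟨x, hx, hxj⟩ := H.exists_not_isSquare_sq_mem_range_extendedHom hk₀ hkk₀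
  exact card_sylow_two_eq_two_mul (classGroupNorm k₀ k) (extendedHom (𝓞 k₀) (𝓞 k)) P Q
    (H.subsingleton_orderOf_eq_two_biquadratic hB hk)
    (fun _ => H.eq_one_of_extendedHom_eq_one hB hk hk₀)
    (fun c => by rw [classGroupNorm_extendedHom, hkk₀.finrank_eq_two]) hg hx hxj

theorem card_sylow_two_triquadratic (H : Cond1 p q) (hB : IsQuadExt sp (p : ℚ))
    (hE : IsQuadExt w (-2 : B)) (hF : IsQuadExt sq (q : B)) (hk : IsQuadExt s (-(2 * q) : B))
    (hk₀ : IsQuadExt s₀ (-(2 * q) : ℚ)) (hKF : IsQuadExt wK (-2 : F))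
    (hKE : IsQuadExt sqK (q : E)) (hKk : IsQuadExt sqK (q : k))
    (hconj : ∀ z, hKk.conj z = hKE.conj (hKF.conj z)) (P : Sylow 2 (ClassGroup (𝓞 K)))
    (Q : Sylow 2 (ClassGroup (𝓞 k))) :
    Nat.card (P : Subgroup (ClassGroup (𝓞 K))) = Nat.card (Q : Subgroup (ClassGroup (𝓞 k))) := by
  obtain ⟨g, hg⟩ := H.exists_not_isSquare_classGroupNorm_biquadratic (k := k) hB hF hKF hk₀
  obtain ⟨T, hT⟩ := hk₀.exists_sq_eq_span_two (H.2.1.odd_of_ne_two H.q_ne_two)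
  have hTK : extendedHom (𝓞 k) (𝓞 K) (extendedHom (𝓞 k₀) (𝓞 k) (mk0 T)) = 1 := by
    rw [extendedHom_mk0, extendedHom_mk0]
    exact mk0_eq_one_of_sq_eq_neg_two
      (coe_extendedIdeal_sq_eq_span_two (coe_extendedIdeal_sq_eq_span_two hT))
      (by rw [hKF.sq, map_neg, map_ofNat])
  exact card_sylow_two_eq (classGroupNorm k K) (extendedHom (𝓞 k) (𝓞 K)) P Q
    (H.subsingleton_orderOf_eq_two_triquadratic hB hF hKF)
    (H.subsingleton_orderOf_eq_two_biquadratic hB hk) hg (H.orderOf_extendedHom_mk0 hB hk hT) hTK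
    (H.sq_eq_extendedHom_classGroupNorm_biquadratic hB hE hF hKF hKE hKk hconj)

end Cond1

end ClassGroupsOfTheTower

section MultiquadraticSubfields

section

variable {M Ω : Type*} [Field M] [Field Ω] [Algebra M Ω]

theorem exists_eq_add_mul_of_mem_adjoin {θ : Ω} {d : M} (hθ : θ ^ 2 = algebraMap M Ω d) {z : Ω}
    (hz : z ∈ adjoin M {θ}) : ∃ x y : M, z = algebraMap M Ω x + algebraMap M Ω y * θ := by
  have hint : IsIntegral M θ := .of_pow two_pos (hθ ▸ isIntegral_algebraMap)
  rw [← mem_toSubalgebra, adjoin_simple_toSubalgebra_of_isAlgebraic hint.isAlgebraic] at hz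
  induction hz using Algebra.adjoin_induction with
  | mem z hz => exact ⟨0, 1, by simpa using hz⟩
  | algebraMap x => exact ⟨x, 0, by simp⟩
  | add z z' _ _ ihz ihz' =>
    obtain ⟨x, y, rfl⟩ := ihz
    obtain ⟨x', y', rfl⟩ := ihz'
    exact ⟨x + x', y + y', by simp only [map_add]; ring⟩
  | mul z z' _ _ ihz ihz' =>
    obtain ⟨x, y, rfl⟩ := ihz
    obtain ⟨x', y', rfl⟩ := ihz'
    refine ⟨x * x' + y * y' * d, x * y' + y * x', ?_⟩
    simp only [map_add, map_mul, ← hθ]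
    ring

variable {F : Type*} [Field F] [Algebra F M] [Algebra F Ω] [IsScalarTower F M Ω]

theorem isQuadExt_of_eq_adjoin {S : Set Ω} {L : IntermediateField F Ω} (hL : L = adjoin F S)
    [Algebra M L] (hML : ∀ x : M, (algebraMap M L x : Ω) = algebraMap M Ω x) {θ : L} {d : M}
    (hd : (θ : Ω) ^ 2 = algebraMap M Ω d) (hθ : ∀ x : M, algebraMap M Ω x ≠ θ)
    (hS : S ⊆ adjoin M {(θ : Ω)}) : IsQuadExt θ d where
  sq := Subtype.ext (by rw [hML, ← hd]; rfl)
  notMem x hx := hθ x (by rw [← hML, hx])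
  span z := by
    have hle : L ≤ (adjoin M {(θ : Ω)}).restrictScalars F :=
      hL.trans_le (adjoin_le_iff.2 hS)
    obtain ⟨x, y, hxy⟩ := exists_eq_add_mul_of_mem_adjoin hd (hle z.2)
    exact ⟨x, y, Subtype.ext (by rw [hxy, ← hML, ← hML]; rfl)⟩

theorem sq_ne_of_prime {π : 𝓞 M} (hπ : Prime π) (x : M) : x ^ 2 ≠ algebraMap (𝓞 M) M π := by
  intro hx
  obtain ⟨s, -, hs⟩ := exists_ringOfIntegers_sq_eq hx
  exact hπ.irreducible.not_isSquare ⟨s, by rw [← hs, pow_two]⟩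

theorem algebraMap_ne_of_sq_eq_prime {n : ℕ} (hn : Prime (n : 𝓞 M)) {θ : Ω} (hθ : θ ^ 2 = n)
    (x : M) : algebraMap M Ω x ≠ θ := by
  rintro rfl
  refine sq_ne_of_prime hn x ((algebraMap M Ω).injective ?_)
  rw [map_pow, hθ, map_natCast, map_natCast]

end

theorem numberField_adjoin {Ω : Type*} [Field Ω] [CharZero Ω] {S : Set Ω} [Finite S]
    (hS : ∀ z ∈ S, IsIntegral ℚ z) : NumberField (adjoin ℚ S) where
  to_finiteDimensional := finiteDimensional_adjoin hS

theorem im_eq_zero_of_mem_adjoin {S : Set ℂ} (hS : ∀ z ∈ S, z.im = 0) {z : ℂ}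
    (hz : z ∈ adjoin ℚ S) : z.im = 0 := by
  have h : adjoin ℚ S ≤ (Complex.ofRealAm.restrictScalars ℚ).fieldRange := by
    rw [adjoin_le_iff]
    exact fun z hz => ⟨z.re, Complex.ext rfl (by simp [hS z hz])⟩
  obtain ⟨x, rfl⟩ := h hz
  simp

theorem IsQuadExt.algebraMap_ne_of_im_eq_zero {M L : Type*} [Field M] [Field L] [Algebra M L]
    [Algebra L ℂ] {θ : L} {d : M} (h : IsQuadExt θ d)
    (hM : ∀ x : M, (algebraMap L ℂ (algebraMap M L x)).im = 0) (hθ : (algebraMap L ℂ θ).im ≠ 0)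
    {z : ℂ} (hz : z.im = 0) (hzM : ∀ x : M, algebraMap L ℂ (algebraMap M L x) ≠ z) (x : L) :
    algebraMap L ℂ x ≠ z := by
  rintro rfl
  obtain ⟨a, b, rfl⟩ := h.span x
  have hb : (algebraMap L ℂ (algebraMap M L b)).re = 0 := by
    simpa [hM, hθ] using hz
  have hb0 : algebraMap L ℂ (algebraMap M L b) = 0 := Complex.ext hb (hM b)
  exact hzM a (by rw [map_add, map_mul, hb0, zero_mul, add_zero])

theorem ofReal_sqrt_sq {x : ℝ} (hx : 0 ≤ x) : ((√x : ℝ) : ℂ) ^ 2 = x := by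
  rw [← Complex.ofReal_pow, Real.sq_sqrt hx]

theorem I_mul_ofReal_sqrt_sq {x : ℝ} (hx : 0 ≤ x) : (Complex.I * ((√x : ℝ) : ℂ)) ^ 2 = -x := by
  rw [mul_pow, Complex.I_sq, ofReal_sqrt_sq hx, neg_one_mul]

end MultiquadraticSubfields

section FieldTower

/-- The field `ℚ(√p)`, as a subfield of `ℂ`. -/
def realQuadratic (p : ℕ) : IntermediateField ℚ ℂ :=
  adjoin ℚ {((√p : ℝ) : ℂ)}

/-- The field `ℚ(√p, √(-2))`, as a subfield of `ℂ`. -/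
def cmBiquadratic (p : ℕ) : IntermediateField ℚ ℂ :=
  adjoin ℚ {((√p : ℝ) : ℂ), Complex.I * ((√2 : ℝ) : ℂ)}

/-- The field `ℚ(√p, √q)`, as a subfield of `ℂ`. -/
def realBiquadratic (p q : ℕ) : IntermediateField ℚ ℂ :=
  adjoin ℚ {((√p : ℝ) : ℂ), ((√q : ℝ) : ℂ)}

/-- The field `ℚ(√p, √(-2q))`, as a subfield of `ℂ`. -/
def mixedBiquadratic (p q : ℕ) : IntermediateField ℚ ℂ :=
  adjoin ℚ {((√p : ℝ) : ℂ), Complex.I * ((√(2 * q) : ℝ) : ℂ)}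

variable {p q : ℕ}

theorem sqrt_mem_realQuadratic : ((√p : ℝ) : ℂ) ∈ realQuadratic p :=
  subset_adjoin _ _ (by simp)

theorem sqrt_mem_cmBiquadratic : ((√p : ℝ) : ℂ) ∈ cmBiquadratic p :=
  subset_adjoin _ _ (by simp)

theorem I_mul_sqrt_two_mem_cmBiquadratic : Complex.I * ((√2 : ℝ) : ℂ) ∈ cmBiquadratic p :=
  subset_adjoin _ _ (by simp)

theorem sqrt_left_mem_realBiquadratic : ((√p : ℝ) : ℂ) ∈ realBiquadratic p q :=
  subset_adjoin _ _ (by simp)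

theorem sqrt_right_mem_realBiquadratic : ((√q : ℝ) : ℂ) ∈ realBiquadratic p q :=
  subset_adjoin _ _ (by simp)

theorem sqrt_mem_mixedBiquadratic : ((√p : ℝ) : ℂ) ∈ mixedBiquadratic p q :=
  subset_adjoin _ _ (by simp)

theorem I_mul_sqrt_two_mul_mem_mixedBiquadratic :
    Complex.I * ((√(2 * q) : ℝ) : ℂ) ∈ mixedBiquadratic p q :=
  subset_adjoin _ _ (by simp)

theorem I_mul_sqrt_two_mul_mem_k0 : Complex.I * ((√(2 * q) : ℝ) : ℂ) ∈ k0 q :=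
  subset_adjoin _ _ (by simp)

theorem sqrt_left_mem_Kf : ((√p : ℝ) : ℂ) ∈ Kf p q :=
  subset_adjoin _ _ (by simp)

theorem sqrt_right_mem_Kf : ((√q : ℝ) : ℂ) ∈ Kf p q :=
  subset_adjoin _ _ (by simp)

theorem I_mul_sqrt_two_mem_Kf : Complex.I * ((√2 : ℝ) : ℂ) ∈ Kf p q :=
  subset_adjoin _ _ (by simp)

theorem I_mul_sqrt_two_mul (q : ℕ) :
    Complex.I * ((√(2 * q) : ℝ) : ℂ) = Complex.I * ((√2 : ℝ) : ℂ) * ((√q : ℝ) : ℂ) := by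
  rw [Real.sqrt_mul zero_le_two, Complex.ofReal_mul, mul_assoc]

theorem realQuadratic_le_cmBiquadratic : realQuadratic p ≤ cmBiquadratic p :=
  adjoin_simple_le_iff.2 sqrt_mem_cmBiquadratic

theorem realQuadratic_le_realBiquadratic : realQuadratic p ≤ realBiquadratic p q :=
  adjoin_simple_le_iff.2 sqrt_left_mem_realBiquadratic

theorem realQuadratic_le_mixedBiquadratic : realQuadratic p ≤ mixedBiquadratic p q :=
  adjoin_simple_le_iff.2 sqrt_mem_mixedBiquadratic

theorem k0_le_mixedBiquadratic : k0 q ≤ mixedBiquadratic p q :=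
  adjoin_simple_le_iff.2 I_mul_sqrt_two_mul_mem_mixedBiquadratic

theorem cmBiquadratic_le_Kf : cmBiquadratic p ≤ Kf p q :=
  adjoin.mono _ _ _ (by simp [Set.insert_subset_iff])

theorem realBiquadratic_le_Kf : realBiquadratic p q ≤ Kf p q :=
  adjoin.mono _ _ _ (by simp [Set.insert_subset_iff])

theorem mixedBiquadratic_le_Kf : mixedBiquadratic p q ≤ Kf p q := by
  rw [mixedBiquadratic, adjoin_le_iff, Set.insert_subset_iff, Set.singleton_subset_iff,
    I_mul_sqrt_two_mul]
  exact ⟨sqrt_left_mem_Kf, mul_mem I_mul_sqrt_two_mem_Kf sqrt_right_mem_Kf⟩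

instance algebraRealQuadraticCmBiquadratic : Algebra (realQuadratic p) (cmBiquadratic p) :=
  (inclusion realQuadratic_le_cmBiquadratic).toRingHom.toAlgebra

instance algebraRealQuadraticRealBiquadratic :
    Algebra (realQuadratic p) (realBiquadratic p q) :=
  (inclusion realQuadratic_le_realBiquadratic).toRingHom.toAlgebra

instance algebraRealQuadraticMixedBiquadratic :
    Algebra (realQuadratic p) (mixedBiquadratic p q) :=
  (inclusion realQuadratic_le_mixedBiquadratic).toRingHom.toAlgebra

instance algebraK0MixedBiquadratic : Algebra (k0 q) (mixedBiquadratic p q) :=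
  (inclusion k0_le_mixedBiquadratic).toRingHom.toAlgebra

instance algebraCmBiquadraticKf : Algebra (cmBiquadratic p) (Kf p q) :=
  (inclusion cmBiquadratic_le_Kf).toRingHom.toAlgebra

instance algebraRealBiquadraticKf : Algebra (realBiquadratic p q) (Kf p q) :=
  (inclusion realBiquadratic_le_Kf).toRingHom.toAlgebra

instance algebraMixedBiquadraticKf : Algebra (mixedBiquadratic p q) (Kf p q) :=
  (inclusion mixedBiquadratic_le_Kf).toRingHom.toAlgebra

theorem isIntegral_ofReal_sqrt (n : ℕ) : IsIntegral ℚ ((√n : ℝ) : ℂ) := by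
  refine .of_pow two_pos ?_
  rw [ofReal_sqrt_sq n.cast_nonneg, Complex.ofReal_natCast, ← map_natCast (algebraMap ℚ ℂ)]
  exact isIntegral_algebraMap

instance numberField_realQuadratic : NumberField (realQuadratic p) :=
  numberField_adjoin (by simpa using isIntegral_ofReal_sqrt p)

instance numberField_realBiquadratic : NumberField (realBiquadratic p q) :=
  numberField_adjoin (by simpa using ⟨isIntegral_ofReal_sqrt p, isIntegral_ofReal_sqrt q⟩)

instance numberField_cmBiquadratic : NumberField (cmBiquadratic p) :=
  numberField_adjoin (by
    simpa using ⟨isIntegral_ofReal_sqrt p,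
      Complex.isIntegral_rat_I.mul (mod_cast isIntegral_ofReal_sqrt 2)⟩)

instance numberField_mixedBiquadratic : NumberField (mixedBiquadratic p q) :=
  numberField_adjoin (by
    simpa using ⟨isIntegral_ofReal_sqrt p,
      Complex.isIntegral_rat_I.mul (by simpa using isIntegral_ofReal_sqrt (2 * q))⟩)

instance numberField_k0 : NumberField (k0 q) :=
  numberField_adjoin (by
    simpa using Complex.isIntegral_rat_I.mul (by simpa using isIntegral_ofReal_sqrt (2 * q)))

end FieldTower

section QuadraticSteps

variable {p q : ℕ}

theorem mem_adjoin_of_mem {F Ω : Type*} [Field F] [Field Ω] [Algebra F Ω]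
    {M : IntermediateField F Ω} {z : Ω} (hz : z ∈ M) (S : Set Ω) : z ∈ adjoin M S :=
  IntermediateField.algebraMap_mem _ (⟨z, hz⟩ : M)

theorem im_realQuadratic (z : realQuadratic p) : (z : ℂ).im = 0 :=
  im_eq_zero_of_mem_adjoin (by simp) z.2

theorem im_realBiquadratic (z : realBiquadratic p q) : (z : ℂ).im = 0 :=
  im_eq_zero_of_mem_adjoin (by simp) z.2

theorem ofReal_sqrt_natCast_sq (n : ℕ) : ((√n : ℝ) : ℂ) ^ 2 = n := by
  rw [ofReal_sqrt_sq n.cast_nonneg, Complex.ofReal_natCast]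

theorem I_mul_ofReal_sqrt_two_sq : (Complex.I * ((√2 : ℝ) : ℂ)) ^ 2 = -2 := by
  rw [I_mul_ofReal_sqrt_sq zero_le_two, Complex.ofReal_ofNat]

theorem I_mul_ofReal_sqrt_two_mul_sq (q : ℕ) :
    (Complex.I * ((√(2 * q) : ℝ) : ℂ)) ^ 2 = -(2 * q) := by
  rw [I_mul_ofReal_sqrt_sq (by positivity), Complex.ofReal_mul, Complex.ofReal_ofNat,
    Complex.ofReal_natCast]

theorem im_I_mul_ofReal_sqrt_ne_zero {r : ℝ} (hr : 0 < r) :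
    (Complex.I * ((√r : ℝ) : ℂ)).im ≠ 0 := by
  simpa using (Real.sqrt_pos.2 hr).ne'

theorem algebraMap_ne_I_mul_ofReal_sqrt {M : Type*} [Field M] [Algebra M ℂ]
    (hM : ∀ x : M, (algebraMap M ℂ x).im = 0) {r : ℝ} (hr : 0 < r) (x : M) :
    algebraMap M ℂ x ≠ Complex.I * ((√r : ℝ) : ℂ) :=
  fun hx => im_I_mul_ofReal_sqrt_ne_zero hr (hx ▸ hM x)

theorem isQuadExt_realQuadratic (hp : p.Prime) :
    IsQuadExt (⟨_, sqrt_mem_realQuadratic⟩ : realQuadratic p) (p : ℚ) :=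
  isQuadExt_of_eq_adjoin rfl (fun _ => rfl) (by simpa using ofReal_sqrt_natCast_sq p)
    (algebraMap_ne_of_sq_eq_prime (prime_natCast_ringOfIntegers_rat hp) (ofReal_sqrt_natCast_sq p))
    (subset_adjoin _ _)

theorem isQuadExt_k0 (hq : 0 < q) :
    IsQuadExt (⟨_, I_mul_sqrt_two_mul_mem_k0⟩ : k0 q) (-(2 * q) : ℚ) :=
  isQuadExt_of_eq_adjoin rfl (fun _ => rfl) (by simpa using I_mul_ofReal_sqrt_two_mul_sq q)
    (algebraMap_ne_I_mul_ofReal_sqrt (by simp) (by positivity)) (subset_adjoin _ _)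

theorem isQuadExt_cmBiquadratic :
    IsQuadExt (⟨_, I_mul_sqrt_two_mem_cmBiquadratic⟩ : cmBiquadratic p) (-2 : realQuadratic p) :=
  isQuadExt_of_eq_adjoin (L := cmBiquadratic p) rfl (fun _ => rfl) I_mul_ofReal_sqrt_two_sq
    (algebraMap_ne_I_mul_ofReal_sqrt im_realQuadratic zero_lt_two)
    (Set.insert_subset (mem_adjoin_of_mem sqrt_mem_realQuadratic _) (subset_adjoin _ _))

theorem isQuadExt_mixedBiquadratic (hq : 0 < q) :
    IsQuadExt (⟨_, I_mul_sqrt_two_mul_mem_mixedBiquadratic⟩ : mixedBiquadratic p q)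
      (-(2 * q) : realQuadratic p) :=
  isQuadExt_of_eq_adjoin (L := mixedBiquadratic p q) rfl (fun _ => rfl)
    (I_mul_ofReal_sqrt_two_mul_sq q)
    (algebraMap_ne_I_mul_ofReal_sqrt im_realQuadratic (by positivity))
    (Set.insert_subset (mem_adjoin_of_mem sqrt_mem_realQuadratic _) (subset_adjoin _ _))

theorem isQuadExt_Kf_realBiquadratic :
    IsQuadExt (⟨_, I_mul_sqrt_two_mem_Kf⟩ : Kf p q) (-2 : realBiquadratic p q) :=
  isQuadExt_of_eq_adjoin (L := Kf p q) rfl (fun _ => rfl) I_mul_ofReal_sqrt_two_sq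
    (algebraMap_ne_I_mul_ofReal_sqrt im_realBiquadratic zero_lt_two)
    (Set.insert_subset (mem_adjoin_of_mem sqrt_left_mem_realBiquadratic _)
      (Set.insert_subset (mem_adjoin_of_mem sqrt_right_mem_realBiquadratic _) (subset_adjoin _ _)))

theorem algebraMap_realQuadratic_ne_sqrt (H : Cond1 p q) (x : realQuadratic p) :
    algebraMap (realQuadratic p) ℂ x ≠ ((√q : ℝ) : ℂ) :=
  have : Fact q.Prime := ⟨H.2.1⟩
  algebraMap_ne_of_sq_eq_prime (H.prime_natCast (isQuadExt_realQuadratic H.1))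
    (ofReal_sqrt_natCast_sq q) x

theorem isQuadExt_realBiquadratic (H : Cond1 p q) :
    IsQuadExt (⟨_, sqrt_right_mem_realBiquadratic⟩ : realBiquadratic p q)
      (q : realQuadratic p) :=
  isQuadExt_of_eq_adjoin (L := realBiquadratic p q) rfl (fun _ => rfl) (ofReal_sqrt_natCast_sq q)
    (algebraMap_realQuadratic_ne_sqrt H)
    (Set.insert_subset (mem_adjoin_of_mem sqrt_mem_realQuadratic _) (subset_adjoin _ _))

theorem isQuadExt_mixedBiquadratic_k0 (H : Cond1 p q) :
    IsQuadExt (⟨_, sqrt_mem_mixedBiquadratic⟩ : mixedBiquadratic p q) (p : k0 q) :=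
  isQuadExt_of_eq_adjoin (L := mixedBiquadratic p q) rfl (fun _ => rfl)
    (ofReal_sqrt_natCast_sq p)
    ((isQuadExt_k0 H.2.1.pos).algebraMap_ne_of_im_eq_zero (by simp)
      (im_I_mul_ofReal_sqrt_ne_zero (mul_pos two_pos (mod_cast H.2.1.pos))) (Complex.ofReal_im _)
      fun x => by
        simpa using algebraMap_ne_of_sq_eq_prime (prime_natCast_ringOfIntegers_rat H.1)
          (ofReal_sqrt_natCast_sq p) x)
    (Set.insert_subset (mem_adjoin_simple_self _ _)
      (Set.singleton_subset_iff.2 (mem_adjoin_of_mem I_mul_sqrt_two_mul_mem_k0 _)))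

theorem algebraMap_cmBiquadratic_ne_sqrt (H : Cond1 p q) (x : cmBiquadratic p) :
    algebraMap (cmBiquadratic p) ℂ x ≠ ((√q : ℝ) : ℂ) :=
  (isQuadExt_cmBiquadratic (p := p)).algebraMap_ne_of_im_eq_zero (fun y => im_realQuadratic y)
    (im_I_mul_ofReal_sqrt_ne_zero two_pos) (Complex.ofReal_im _)
    (fun y => algebraMap_realQuadratic_ne_sqrt H y) x

theorem algebraMap_mixedBiquadratic_ne_sqrt (H : Cond1 p q) (x : mixedBiquadratic p q) :
    algebraMap (mixedBiquadratic p q) ℂ x ≠ ((√q : ℝ) : ℂ) :=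
  (isQuadExt_mixedBiquadratic (p := p) H.2.1.pos).algebraMap_ne_of_im_eq_zero
    (fun y => im_realQuadratic y)
    (im_I_mul_ofReal_sqrt_ne_zero (mul_pos two_pos (mod_cast H.2.1.pos))) (Complex.ofReal_im _)
    (fun y => algebraMap_realQuadratic_ne_sqrt H y) x

theorem isQuadExt_Kf_cmBiquadratic (H : Cond1 p q) :
    IsQuadExt (⟨_, sqrt_right_mem_Kf⟩ : Kf p q) (q : cmBiquadratic p) :=
  isQuadExt_of_eq_adjoin (L := Kf p q) rfl (fun _ => rfl) (ofReal_sqrt_natCast_sq q)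
    (algebraMap_cmBiquadratic_ne_sqrt H)
    (Set.insert_subset (mem_adjoin_of_mem sqrt_mem_cmBiquadratic _)
      (Set.insert_subset (mem_adjoin_simple_self _ _)
        (Set.singleton_subset_iff.2 (mem_adjoin_of_mem I_mul_sqrt_two_mem_cmBiquadratic _))))

theorem I_mul_sqrt_two_mem_adjoin_sqrt (hq : q ≠ 0) :
    Complex.I * ((√2 : ℝ) : ℂ) ∈ adjoin (mixedBiquadratic p q) {((√q : ℝ) : ℂ)} := by
  have hq0 : ((√q : ℝ) : ℂ) ≠ 0 := by simpa using hq
  rw [eq_div_of_mul_eq hq0 (I_mul_sqrt_two_mul q).symm]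
  exact div_mem (mem_adjoin_of_mem I_mul_sqrt_two_mul_mem_mixedBiquadratic _)
    (mem_adjoin_simple_self _ _)

theorem isQuadExt_Kf_mixedBiquadratic (H : Cond1 p q) :
    IsQuadExt (⟨_, sqrt_right_mem_Kf⟩ : Kf p q) (q : mixedBiquadratic p q) :=
  isQuadExt_of_eq_adjoin (L := Kf p q) rfl (fun _ => rfl) (ofReal_sqrt_natCast_sq q)
    (algebraMap_mixedBiquadratic_ne_sqrt H)
    (Set.insert_subset (mem_adjoin_of_mem sqrt_mem_mixedBiquadratic _)
      (Set.insert_subset (mem_adjoin_simple_self _ _)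
        (Set.singleton_subset_iff.2 (I_mul_sqrt_two_mem_adjoin_sqrt H.2.1.ne_zero))))

theorem conj_mixedBiquadratic_I_mul_sqrt_two (H : Cond1 p q) :
    (isQuadExt_Kf_mixedBiquadratic H).conj ⟨_, I_mul_sqrt_two_mem_Kf⟩ =
      -⟨_, I_mul_sqrt_two_mem_Kf⟩ := by
  set h := isQuadExt_Kf_mixedBiquadratic H
  have hfix := h.conj.commutes ⟨_, I_mul_sqrt_two_mul_mem_mixedBiquadratic⟩
  have hs : algebraMap (mixedBiquadratic p q) (Kf p q)
      ⟨_, I_mul_sqrt_two_mul_mem_mixedBiquadratic⟩ =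
      ⟨_, I_mul_sqrt_two_mem_Kf⟩ * ⟨_, sqrt_right_mem_Kf⟩ := Subtype.ext (I_mul_sqrt_two_mul q)
  rw [hs, map_mul, h.conj_gen] at hfix
  exact mul_right_cancel₀ h.ne_zero (by linear_combination -hfix)

theorem conj_Kf (H : Cond1 p q) (z : Kf p q) : (isQuadExt_Kf_mixedBiquadratic H).conj z =
    (isQuadExt_Kf_cmBiquadratic H).conj (isQuadExt_Kf_realBiquadratic.conj z) := by
  set h := isQuadExt_Kf_mixedBiquadratic H
  set h₁ := isQuadExt_Kf_cmBiquadratic H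
  set h₂ := isQuadExt_Kf_realBiquadratic (p := p) (q := q)
  have hP : h.conj ⟨_, sqrt_left_mem_Kf⟩ = h₁.conj (h₂.conj ⟨_, sqrt_left_mem_Kf⟩) :=
    (h.conj.commutes ⟨_, sqrt_mem_mixedBiquadratic⟩).trans
      ((h₁.conj.commutes ⟨_, sqrt_mem_cmBiquadratic⟩).symm.trans
        (congrArg h₁.conj (h₂.conj.commutes ⟨_, sqrt_left_mem_realBiquadratic⟩).symm))
  have hQ : h.conj ⟨_, sqrt_right_mem_Kf⟩ = h₁.conj (h₂.conj ⟨_, sqrt_right_mem_Kf⟩) :=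
    (h.conj_gen.trans h₁.conj_gen.symm).trans
      (congrArg h₁.conj (h₂.conj.commutes ⟨_, sqrt_right_mem_realBiquadratic⟩).symm)
  have hW : h.conj ⟨_, I_mul_sqrt_two_mem_Kf⟩ = h₁.conj (h₂.conj ⟨_, I_mul_sqrt_two_mem_Kf⟩) := by
    rw [h₂.conj_gen, map_neg, conj_mixedBiquadratic_I_mul_sqrt_two H]
    exact congrArg Neg.neg (h₁.conj.commutes ⟨_, I_mul_sqrt_two_mem_cmBiquadratic⟩).symm
  have hext := algHom_ext_of_eq_adjoin (F := ℚ) (S := Kf p q) rfl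
    (φ₁ := (h.conj : Kf p q →+* Kf p q).toRatAlgHom)
    (φ₂ := ((h₁.conj : Kf p q →+* Kf p q).comp (h₂.conj : Kf p q →+* Kf p q)).toRatAlgHom) (by
      rintro _ (rfl | rfl | rfl)
      exacts [hP, hQ, hW])
  exact DFunLike.congr_fun hext z

end QuadraticSteps

theorem statement9 (p q : ℕ) (h : Cond1 p q) (m : ℕ)
    (hm : ∀ Q : Sylow 2 (ClassGroup (𝓞 ↥(k0 q))),
      Nat.card ↥(Q : Subgroup (ClassGroup (𝓞 ↥(k0 q)))) = 2 ^ m)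
    [NumberField ↥(Kf p q)]
    (P : Sylow 2 (ClassGroup (𝓞 ↥(Kf p q)))) :
    Nonempty (↥(P : Subgroup (ClassGroup (𝓞 ↥(Kf p q)))) ≃*
      Multiplicative (ZMod (2 ^ (m + 1)))) := by
  have hq := h.2.1.pos
  have hB := isQuadExt_realQuadratic h.1
  have hF := isQuadExt_realBiquadratic h
  have hk : IsQuadExt _ (-(2 * q) : realQuadratic p) := isQuadExt_mixedBiquadratic hq
  let R : Sylow 2 (ClassGroup (𝓞 (mixedBiquadratic p q))) := default
  have hP : Nat.card P = 2 ^ (m + 1) := calc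
    Nat.card P = Nat.card R :=
      h.card_sylow_two_triquadratic hB isQuadExt_cmBiquadratic hF hk (isQuadExt_k0 hq)
        isQuadExt_Kf_realBiquadratic (isQuadExt_Kf_cmBiquadratic h)
        (isQuadExt_Kf_mixedBiquadratic h) (conj_Kf h) P R
    _ = 2 * 2 ^ m :=
      (h.card_sylow_two_biquadratic hB hk (isQuadExt_k0 hq) (isQuadExt_mixedBiquadratic_k0 h) R
        default).trans (congrArg (2 * ·) (hm _))
    _ = 2 ^ (m + 1) := (pow_succ' 2 m).symm
  have : IsCyclic P := isCyclic_sylow_two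
    (h.subsingleton_orderOf_eq_two_triquadratic hB hF isQuadExt_Kf_realBiquadratic) P
  exact ⟨mulEquivOfCyclicCardEq (by simp [hP])⟩
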